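/- arXiv:2205.04776 — 3 statements merged into one kernel-verified Lean document; each statement's English description precedes it below -/
import Mathlib

section
/- For every integer d ≥ 1 there exists an integer n and a graph G on vertex set [n] such that for every integer d' with 1 ≤ d' ≤ d, the simplicial complex associated to G is not weakly d'-Tverberg (hence in particular not d'-Tverberg). -/
/-!
The graph is bipartite. One side is `X = Fin k × Fin (d+1)`, that is, `d+1` copies of each
element of a `k`-set, and the other side is the family of all subsets `S` of the `k`-set; every copy
of `i` is joined to `S` when `i ∈ S`. For `d' ≤ d`, no disjoint subsets of points on the moment
curve in `ℝ^d'` induce this graph once `k` is large.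

*Geometry.* Two disjoint sets of points on the moment curve have intersecting hulls iff they
alternate along the curve at least `d'+2` times (`crosses_of_inter`, `inter_of_crosses`): a
hyperplane is a polynomial of degree at most `d'` in the parameter, so it can follow at most `d'`
changes of side, and conversely any pattern with at most `d'` changes is realised by a product of
linear factors.

*Combinatorics.* The sets of `X` have pairwise disjoint hulls, so any two of
them alternate boundedly often.
Hence the curve is cut into at most `M = |X|² (d'+1) + 1` intervals ("cells", the level sets
of `cellIdx`), each meeting at most one set of `X` (`cellIdx_ne`). Let `T_S` be the set of
cells met by the set of `S`.

* If `S ≠ S'`, then `|T_S ∩ T_S'| ≤ d'`, since otherwise the sets of `S` and `S'` cross (`cross_of_common`).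
* If `T_S = T_S'` has at most `d'` elements, then each `i` has a copy that meets none of these
  cells. That copy sees the sets of `S` and `S'` at the same places relative to itself, so it crosses
  both or neither (`altBelow_replace`). Hence `S = S'`.

So `S` is determined by at most `d'+1` elements of `T_S`, which gives `2^k ≤ M^(d'+1)`. As `M` is
polynomial in `k`, this fails for large `k`.
-/

open Finset

/-- Points of `ℝ^d`. -/
abbrev Pt (d : ℕ) := Fin d → ℝ

/-- `W` is a `d`-colorful word on alphabet `σ`: it has length `(d+1)(|σ|-1)+1`
(length `0` if `σ = ∅`), and each of the `d+1` blocks of consecutive positions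
`i(|σ|-1), …, i(|σ|-1)+|σ|-1` (0-indexed, `0 ≤ i ≤ d`) contains every letter of `σ`
exactly once. -/
def IsColorfulWord {α : Type*} [DecidableEq α] (d : ℕ) (σ : Finset α) (W : List α) : Prop :=
  W.length = (d + 1) * (σ.card - 1) + min σ.card 1 ∧
    ∀ i ≤ d, ∀ a ∈ σ, ((W.drop (i * (σ.card - 1))).take σ.card).count a = 1

/-- `W` contains a `d`-colorful subword on alphabet `σ`. -/
def ContainsColorful {α : Type*} [DecidableEq α] (d : ℕ) (σ : Finset α) (W : List α) : Prop :=
  ∃ W' : List α, W'.Sublist W ∧ IsColorfulWord d σ W'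

/-- A complex `Δ` on vertex set `V` is `d`-colorfully representable. -/
def ColorfullyRep {V : Type*} [DecidableEq V] (d : ℕ) (Δ : Set (Finset V)) : Prop :=
  ∃ W : List V, ∀ σ : Finset V, σ ∈ Δ ↔ ContainsColorful d σ W

/-- A finite point set in `ℝ^d` is in general position: every subset of at most `d+1`
points is affinely independent. -/
def GenPos {d : ℕ} (P : Finset (Pt d)) : Prop :=
  ∀ S : Finset (Pt d), S ⊆ P → S.card ≤ d + 1 →
    AffineIndependent ℝ (fun x : (S : Set (Pt d)) => (x : Pt d))

/-- Pairwise disjoint finite sets `Q 1, …, Q n` induce the complex `Δ`: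
for every `σ ⊆ [n]`, the convex hulls of the `Q i`, `i ∈ σ`, have a common point
iff `σ ∈ Δ`. -/
def Induces {d n : ℕ} (Δ : Set (Finset (Fin n))) (Q : Fin n → Finset (Pt d)) : Prop :=
  (∀ i j : Fin n, i ≠ j → Disjoint (Q i) (Q j)) ∧
    ∀ σ : Finset (Fin n), (⋂ i ∈ σ, convexHull ℝ ((Q i : Set (Pt d)))).Nonempty ↔ σ ∈ Δ

/-- `Δ` is weakly `d`-Tverberg. -/
def WeaklyTverberg (d : ℕ) {n : ℕ} (Δ : Set (Finset (Fin n))) : Prop :=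
  ∃ C : ℕ, ∀ P : Finset (Pt d), GenPos P → C ≤ P.card →
    ∃ Q : Fin n → Finset (Pt d), (∀ i, Q i ⊆ P) ∧ Induces Δ Q

/-- `Δ` is `d`-Tverberg: the inducing sets can be chosen to partition all of `P`. -/
def IsTverberg (d : ℕ) {n : ℕ} (Δ : Set (Finset (Fin n))) : Prop :=
  ∃ C : ℕ, ∀ P : Finset (Pt d), GenPos P → C ≤ P.card →
    ∃ Q : Fin n → Finset (Pt d), (∀ i, Q i ⊆ P) ∧ (∀ x ∈ P, ∃ i, x ∈ Q i) ∧ Induces Δ Q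

/-- Strong general position. -/
def StrongGenPos {d : ℕ} (P : Finset (Pt d)) : Prop :=
  ∀ r : ℕ, 2 ≤ r → ∀ Q : Fin r → Finset (Pt d),
    (∀ i, Q i ⊆ P) → (∀ i, (Q i).Nonempty) →
    (∀ i j, i ≠ j → Disjoint (Q i) (Q j)) →
    (⨅ i, affineSpan ℝ ((Q i : Set (Pt d)))) = ⊥ ∨
      (Module.finrank ℝ (⨅ i, affineSpan ℝ ((Q i : Set (Pt d)))).direction : ℤ) =
        (∑ i, (Module.finrank ℝ (affineSpan ℝ ((Q i : Set (Pt d)))).direction : ℤ)) -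
          (d : ℤ) * ((r : ℤ) - 1)

/-- `σ` is a facet (maximal face) of `Δ`. -/
def IsFacet {n : ℕ} (Δ : Set (Finset (Fin n))) (σ : Finset (Fin n)) : Prop :=
  σ ∈ Δ ∧ ∀ τ ∈ Δ, σ ⊆ τ → σ = τ

/-- The simplicial complex associated to a graph: the empty set, the vertex singletons,
and the edges. -/
def graphComplex {V : Type*} (G : SimpleGraph V) : Set (Finset V) :=
  {σ : Finset V | σ.card ≤ 2 ∧ ∀ a ∈ σ, ∀ b ∈ σ, a ≠ b → G.Adj a b}

/-- The disjoint subsequences of `p` indexed by `T` form a Tverberg partition. -/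
def TvPt {d m r : ℕ} (p : Fin m → Pt d) (T : Fin r → Finset (Fin m)) : Prop :=
  (⋂ i : Fin r, convexHull ℝ (p '' (T i : Set (Fin m)))).Nonempty

/-- A minimal Tverberg partition: deleting any single point destroys the common point. -/
def MinTv {d m r : ℕ} (p : Fin m → Pt d) (T : Fin r → Finset (Fin m)) : Prop :=
  TvPt p T ∧ ∀ i : Fin r, ∀ x ∈ T i, ¬ TvPt p (fun j => (T j).erase x)

/-- The word on alphabet `{1,…,r}` associated to disjoint subsequences `T` of a sequence
of length `m`: each index belonging to `T i` is replaced by the letter `i`, read in order. -/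
noncomputable def assocWord {m r : ℕ} (T : Fin r → Finset (Fin m)) : List (Fin r) :=
  (List.finRange m).filterMap (fun k =>
    if h : ∃ i, k ∈ T i then some h.choose else none)

/-! ### Alternation -/

/-- There are elements `b > a₁ > a₂ > ⋯ > aₙ` lying alternately in `A, B, A, …`; the largest one
lies in `A`. -/
def AltBelow : ℕ → Set ℕ → Set ℕ → ℕ → Prop
  | 0, _, _, _ => True
  | n + 1, A, B, b => ∃ a ∈ A, a < b ∧ AltBelow n B A a

/-- `A` and `B` alternate at least `D+2` times below `m`, beginning with either of them. -/
def Crosses (D m : ℕ) (A B : Set ℕ) : Prop :=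
  AltBelow (D + 2) A B m ∨ AltBelow (D + 2) B A m

lemma AltBelow.mono {n : ℕ} {A B : Set ℕ} {b c : ℕ} (h : AltBelow n A B b) (hbc : b ≤ c) :
    AltBelow n A B c := by
  cases n with
  | zero => trivial
  | succ n =>
    obtain ⟨a, ha, hab, h⟩ := h
    exact ⟨a, ha, lt_of_lt_of_le hab hbc, h⟩

/-- Two alternations of length `n+1` with opposite beginnings combine into one of length `n+2`: put
the larger of the two top elements in front of the other sequence. -/
lemma altBelow_combine {n : ℕ} {A B : Set ℕ} {b : ℕ} (hAB : Disjoint A B)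
    (h1 : AltBelow (n + 1) A B b) (h2 : AltBelow (n + 1) B A b) :
    AltBelow (n + 2) A B b ∨ AltBelow (n + 2) B A b := by
  obtain ⟨p, hp, hpb, h1⟩ := h1
  obtain ⟨q, hq, hqb, h2⟩ := h2
  have hne : p ≠ q := fun h => Set.disjoint_left.1 hAB hp (h ▸ hq)
  rcases lt_or_gt_of_ne hne with h | h
  · exact Or.inr ⟨q, hq, hqb, p, hp, h, h1⟩
  · exact Or.inl ⟨p, hp, hpb, q, hq, h, h2⟩

/-! ### The moment curve -/

/-- The point `(t, t², …, t^d)` of the moment curve. -/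
def mom (d t : ℕ) : Pt d := fun i => (t : ℝ) ^ (i.val + 1)

lemma mom_injective {d : ℕ} (hd : 1 ≤ d) : Function.Injective (mom d) := by
  intro s t h
  have := congrFun h ⟨0, hd⟩
  simpa [mom] using this

/-- A polynomial of degree at most `d` is the restriction of an affine function to the moment
curve. -/
lemma exists_affine_of_poly {d : ℕ} (q : Polynomial ℝ) (hq : q.natDegree ≤ d) :
    ∃ (f : Pt d →ₗ[ℝ] ℝ) (c : ℝ), ∀ t : ℕ, q.eval (t : ℝ) = f (mom d t) + c := by
  refine ⟨∑ i : Fin d, q.coeff (i.val + 1) • LinearMap.proj i, q.coeff 0, fun t => ?_⟩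
  rw [Polynomial.eval_eq_sum_range' (Nat.lt_succ_of_le hq), Finset.sum_range_succ',
    ← Fin.sum_univ_eq_sum_range (fun i => q.coeff (i + 1) * (t : ℝ) ^ (i + 1))]
  simp [mom]

/-- The restriction of an affine function to the moment curve is a polynomial of degree at most
`d`. -/
lemma exists_poly_of_affine {d : ℕ} (f : Pt d →ₗ[ℝ] ℝ) (c : ℝ) :
    ∃ q : Polynomial ℝ, q.natDegree ≤ d ∧ ∀ t : ℕ, q.eval (t : ℝ) = f (mom d t) + c := by
  refine ⟨∑ i : Fin d, Polynomial.C (f (Pi.single i 1)) * Polynomial.X ^ (i.val + 1)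
    + Polynomial.C c, ?_, fun t => ?_⟩
  · refine Polynomial.natDegree_add_le_of_degree_le ?_ (by simp)
    refine Polynomial.natDegree_sum_le_of_forall_le _ _ fun i _ => ?_
    exact (Polynomial.natDegree_C_mul_X_pow_le _ _).trans i.isLt
  · have h : f (mom d t) = ∑ i : Fin d, mom d t i * f (Pi.single i 1) := by
      conv_lhs => rw [LinearMap.pi_apply_eq_sum_univ f (mom d t)]
      refine Finset.sum_congr rfl fun i _ => ?_
      rw [smul_eq_mul]
      congr 2
      ext j
      simp [Pi.single_apply, eq_comm]
    rw [h, Polynomial.eval_add, Polynomial.eval_finsetSum]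
    simp only [mom, Polynomial.eval_mul, Polynomial.eval_C, Polynomial.eval_pow, Polynomial.eval_X]
    congr 1
    exact Finset.sum_congr rfl fun i _ => mul_comm _ _

/-- A pattern with few alternations is realised by the signs of a polynomial of low degree. The
last conjunct is what makes the induction work. -/
lemma exists_sign_poly (n : ℕ) : ∀ (A B : Set ℕ) (b : ℕ), Disjoint A B → ¬ AltBelow (n + 1) A B b →
    ∃ q : Polynomial ℝ, q.natDegree ≤ n ∧ (∀ t ∈ A, t < b → q.eval (t : ℝ) < 0) ∧
      (∀ t ∈ B, t < b → 0 < q.eval (t : ℝ)) ∧ ∀ t : ℕ, b ≤ t → 0 < q.eval (t : ℝ) := by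
  induction n with
  | zero =>
    intro A B b _ h
    refine ⟨1, by simp, fun t ht htb => ?_, by simp, by simp⟩
    exact (h ⟨t, ht, htb, trivial⟩).elim
  | succ n ih =>
    intro A B b hAB h
    by_cases hA : ∃ a ∈ A, a < b
    swap
    · refine ⟨1, by simp, fun t ht htb => ?_, by simp, by simp⟩
      exact (hA ⟨t, ht, htb⟩).elim
    obtain ⟨a, ⟨haA, hab⟩, hmax⟩ : ∃ a, (a ∈ A ∧ a < b) ∧ ∀ t ∈ A, t < b → t ≤ a := by
      classical
      obtain ⟨a0, ha0, hab0⟩ := hA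
      refine ⟨Nat.findGreatest (fun t => t ∈ A ∧ t < b) b,
        Nat.findGreatest_spec (P := fun t => t ∈ A ∧ t < b) hab0.le ⟨ha0, hab0⟩, ?_⟩
      exact fun t ht htb => Nat.le_findGreatest htb.le ⟨ht, htb⟩
    obtain ⟨q, hdeg, hB, hA', hbig⟩ := ih B A a hAB.symm fun hr => h ⟨a, haA, hab, hr⟩
    -- The new root separates `a` from everything above it.
    have heval : ∀ t : ℕ, (q * (Polynomial.X - Polynomial.C ((a : ℝ) + 1 / 2))).eval (t : ℝ)
        = q.eval (t : ℝ) * ((t : ℝ) - (a + 1 / 2)) := by intro t; simp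
    have hlow : ∀ t : ℕ, t ≤ a → (t : ℝ) - (a + 1 / 2) < 0 := by
      intro t ht
      have : (t : ℝ) ≤ a := by exact_mod_cast ht
      linarith
    have hhigh : ∀ t : ℕ, a < t → 0 < (t : ℝ) - (a + 1 / 2) := by
      intro t ht
      have : (a : ℝ) + 1 ≤ t := by exact_mod_cast ht
      linarith
    refine ⟨q * (Polynomial.X - Polynomial.C ((a : ℝ) + 1 / 2)), ?_, ?_, ?_, ?_⟩
    · refine Polynomial.natDegree_mul_le.trans ?_
      rw [Polynomial.natDegree_X_sub_C]
      omega
    · intro t ht htb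
      rw [heval]
      have hta := hmax t ht htb
      refine mul_neg_of_pos_of_neg ?_ (hlow t hta)
      rcases hta.lt_or_eq with h1 | h1
      · exact hA' t ht h1
      · exact hbig t h1.ge
    · intro t ht htb
      rw [heval]
      rcases lt_trichotomy t a with h1 | h1 | h1
      · exact mul_pos_of_neg_of_neg (hB t ht h1) (hlow t h1.le)
      · exact (Set.disjoint_left.1 hAB haA (h1 ▸ ht)).elim
      · exact mul_pos (hbig t h1.le) (hhigh t h1)
    · intro t ht
      rw [heval]
      exact mul_pos (hbig t (by omega)) (hhigh t (by omega))

lemma hull_disjoint_of_poly {d : ℕ} {A B : Set ℕ} (q : Polynomial ℝ) (hq : q.natDegree ≤ d)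
    (hA : ∀ t ∈ A, q.eval (t : ℝ) < 0) (hB : ∀ t ∈ B, 0 < q.eval (t : ℝ)) :
    ¬ (convexHull ℝ (mom d '' A) ∩ convexHull ℝ (mom d '' B)).Nonempty := by
  rintro ⟨x, hxA, hxB⟩
  obtain ⟨f, c, hf⟩ := exists_affine_of_poly q hq
  have h1 : convexHull ℝ (mom d '' A) ⊆ {w | f w < -c} := by
    refine convexHull_min ?_ (convex_halfSpace_lt f.isLinear _)
    rintro _ ⟨t, ht, rfl⟩
    have := hA t ht
    rw [hf] at this
    simp only [Set.mem_ofPred_eq]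
    linarith
  have h2 : convexHull ℝ (mom d '' B) ⊆ {w | -c < f w} := by
    refine convexHull_min ?_ (convex_halfSpace_gt f.isLinear _)
    rintro _ ⟨t, ht, rfl⟩
    have := hB t ht
    rw [hf] at this
    simp only [Set.mem_ofPred_eq]
    linarith
  have h3 : f x < -c := h1 hxA
  exact lt_asymm h3 (h2 hxB)

lemma crosses_of_inter {d m : ℕ} {A B : Set ℕ} (hAB : Disjoint A B) (hA : ∀ t ∈ A, t < m)
    (hB : ∀ t ∈ B, t < m)
    (h : (convexHull ℝ (mom d '' A) ∩ convexHull ℝ (mom d '' B)).Nonempty) :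
    Crosses d m A B := by
  by_cases h1 : AltBelow (d + 1) A B m
  · by_cases h2 : AltBelow (d + 1) B A m
    · exact altBelow_combine hAB h1 h2
    · obtain ⟨q, hq, hqB, hqA, -⟩ := exists_sign_poly d B A m hAB.symm h2
      rw [Set.inter_comm] at h
      exact (hull_disjoint_of_poly q hq (fun t ht => hqB t ht (hB t ht))
        (fun t ht => hqA t ht (hA t ht)) h).elim
  · obtain ⟨q, hq, hqA, hqB, -⟩ := exists_sign_poly d A B m hAB h1
    exact (hull_disjoint_of_poly q hq (fun t ht => hqA t ht (hA t ht))
      (fun t ht => hqB t ht (hB t ht)) h).elim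

/-- A polynomial whose signs follow an alternation of length `n+1` has `n` distinct real roots. -/
lemma exists_roots_of_alt (n : ℕ) : ∀ (A B : Set ℕ) (b : ℕ) (q : Polynomial ℝ),
    AltBelow (n + 1) A B b →
    (∀ t ∈ A, q.eval (t : ℝ) < 0) → (∀ t ∈ B, 0 < q.eval (t : ℝ)) →
    ∃ a ∈ A, a < b ∧ ∃ R : Finset ℝ, R.card = n ∧ ∀ r ∈ R, q.eval r = 0 ∧ r < a := by
  induction n with
  | zero =>
    rintro A B b q ⟨a, ha, hab, -⟩ - -
    exact ⟨a, ha, hab, ∅, rfl, by simp⟩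
  | succ n ih =>
    rintro A B b q ⟨a, ha, hab, h⟩ hA hB
    obtain ⟨p, hpB, hpa, R, hR, hroots⟩ := ih B A a (-q) h
      (fun t ht => by simpa using hB t ht) (fun t ht => by simpa using hA t ht)
    have hpa' : (p : ℝ) < a := by exact_mod_cast hpa
    obtain ⟨r, ⟨hr1, hr2⟩, hr⟩ : (0 : ℝ) ∈ (fun x => q.eval x) '' Set.Ioo (p : ℝ) a :=
      intermediate_value_Ioo' hpa'.le q.continuous.continuousOn ⟨hA a ha, hB p hpB⟩
    refine ⟨a, ha, hab, insert r R, ?_, ?_⟩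
    · rw [Finset.card_insert_of_notMem, hR]
      intro hmem
      exact lt_asymm hr1 (hroots r hmem).2
    · intro s hs
      rcases Finset.mem_insert.1 hs with rfl | hs
      · exact ⟨hr, hr2⟩
      · have := hroots s hs
        exact ⟨by simpa using this.1, this.2.trans hpa'⟩

lemma inter_of_altBelow {d m : ℕ} {A B : Set ℕ} (hA : A.Finite) (hB : B.Finite)
    (h : AltBelow (d + 2) A B m) :
    (convexHull ℝ (mom d '' A) ∩ convexHull ℝ (mom d '' B)).Nonempty := by
  by_contra hne
  rw [Set.not_nonempty_iff_eq_empty, ← Set.disjoint_iff_inter_eq_empty] at hne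
  obtain ⟨f, u, v, h1, huv, h2⟩ := geometric_hahn_banach_compact_closed (convex_convexHull ℝ _)
    ((hA.image (mom d)).isCompact_convexHull ℝ) (convex_convexHull ℝ _)
    ((hB.image (mom d)).isClosed_convexHull ℝ) hne
  obtain ⟨q, hq, hqe⟩ := exists_poly_of_affine (f : Pt d →ₗ[ℝ] ℝ) (-u)
  have hqA : ∀ t ∈ A, q.eval (t : ℝ) < 0 := by
    intro t ht
    have := h1 _ (subset_convexHull ℝ _ ⟨t, ht, rfl⟩)
    rw [hqe]
    simpa using this
  have hqB : ∀ t ∈ B, 0 < q.eval (t : ℝ) := by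
    intro t ht
    have := h2 _ (subset_convexHull ℝ _ ⟨t, ht, rfl⟩)
    rw [hqe]
    simpa using huv.trans this
  obtain ⟨a, ha, -, R, hR, hroots⟩ := exists_roots_of_alt (d + 1) A B m q h hqA hqB
  have hq0 : q ≠ 0 := by
    rintro rfl
    simpa using hqA a ha
  have hsub : R ⊆ q.roots.toFinset := by
    intro r hr
    simpa [hq0] using (hroots r hr).1
  have := (Finset.card_le_card hsub).trans (Multiset.toFinset_card_le _)
  have := q.card_roots'
  omega

lemma inter_of_crosses {d m : ℕ} {A B : Set ℕ} (hA : A.Finite) (hB : B.Finite)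
    (h : Crosses d m A B) :
    (convexHull ℝ (mom d '' A) ∩ convexHull ℝ (mom d '' B)).Nonempty := by
  rcases h with h | h
  · exact inter_of_altBelow hA hB h
  · rw [Set.inter_comm]
    exact inter_of_altBelow hB hA h

/-- A dependence among at most `d+1` points of the moment curve is tested against the polynomial
vanishing at all of them but one. -/
lemma genPos_mom (d m : ℕ) : GenPos ((Finset.range m).image (mom d)) := by
  classical
  intro S hS hcard
  have hex : ∀ x : (S : Set (Pt d)), ∃ t : ℕ, mom d t = x := by
    rintro ⟨x, hx⟩
    obtain ⟨t, -, ht⟩ := Finset.mem_image.1 (hS hx)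
    exact ⟨t, ht⟩
  choose τ hτ using hex
  have hinj : Function.Injective τ := by
    intro x y h
    apply Subtype.ext
    rw [← hτ x, ← hτ y, h]
  rw [affineIndependent_iff]
  intro s w hw hs x hx
  set q : Polynomial ℝ := ∏ y ∈ s.erase x, (Polynomial.X - Polynomial.C (τ y : ℝ)) with hqdef
  have hdeg : q.natDegree ≤ d := by
    rw [hqdef, Polynomial.natDegree_finsetProd_X_sub_C_eq_card, Finset.card_erase_of_mem hx]
    have h1 : s.card ≤ S.card := by
      have := Finset.card_le_univ s
      simpa using this
    omega
  obtain ⟨f, c, hf⟩ := exists_affine_of_poly q hdeg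
  have hsum : ∑ y ∈ s, w y * q.eval (τ y : ℝ) = 0 := by
    have h1 : ∑ y ∈ s, w y * q.eval (τ y : ℝ) = f (∑ y ∈ s, w y • (y : Pt d)) +
        (∑ y ∈ s, w y) * c := by
      rw [map_sum, Finset.sum_mul, ← Finset.sum_add_distrib]
      refine Finset.sum_congr rfl fun y _ => ?_
      rw [hf, hτ, map_smul, smul_eq_mul]
      ring
    rw [h1, hs, hw]
    simp
  have hev : ∀ t : ℕ, q.eval (t : ℝ) = ∏ y ∈ s.erase x, ((t : ℝ) - τ y) := by
    intro t
    rw [hqdef, Polynomial.eval_prod]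
    simp
  rw [Finset.sum_eq_single_of_mem x hx] at hsum
  · rcases mul_eq_zero.1 hsum with h | h
    · exact h
    · rw [hev, Finset.prod_eq_zero_iff] at h
      obtain ⟨y, hy, h⟩ := h
      have : τ x = τ y := by
        have := sub_eq_zero.1 h
        exact_mod_cast this
      exact ((Finset.mem_erase.1 hy).1 (hinj this).symm).elim
  · intro y hy hyx
    rw [hev, Finset.prod_eq_zero (Finset.mem_erase.2 ⟨hyx, hy⟩) (sub_self _), mul_zero]

/-! ### Cells -/

open Classical in
/-- The length, truncated at `D+1`, of the longest alternation of `A` and `B` among the numbers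
`≤ p` whose largest element is in `A`. -/
noncomputable def altLen (D : ℕ) (A B : Set ℕ) (p : ℕ) : ℕ :=
  Nat.findGreatest (fun n => AltBelow n A B (p + 1)) (D + 1)

lemma altLen_mono (D : ℕ) (A B : Set ℕ) : Monotone (altLen D A B) := by
  classical
  intro p q hpq
  exact Nat.findGreatest_mono (fun n h => AltBelow.mono h (by omega)) le_rfl

lemma altLen_le (D : ℕ) (A B : Set ℕ) (p : ℕ) : altLen D A B p ≤ D + 1 := by
  classical
  exact Nat.findGreatest_le _

/-- At an element of `A`, the longest alternation ending in `B` extends to one ending in `A`. -/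
lemma altLen_lt {D m : ℕ} {A B : Set ℕ} (hAB : Disjoint A B) (h : ¬ Crosses D m A B) {p : ℕ}
    (hp : p ∈ A) (hpm : p < m) : altLen D B A p < altLen D A B p := by
  classical
  have h1 : AltBelow (altLen D B A p) B A (p + 1) :=
    Nat.findGreatest_spec (P := fun n => AltBelow n B A (p + 1)) (Nat.zero_le _) trivial
  have h2 : AltBelow (altLen D B A p + 1) A B (p + 1) := by
    refine ⟨p, hp, p.lt_succ_self, ?_⟩
    revert h1
    cases altLen D B A p with
    | zero => exact fun _ => trivial
    | succ n =>
      rintro ⟨r, hr, hrp, h1⟩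
      have : r ≠ p := fun e => Set.disjoint_left.1 hAB hp (e ▸ hr)
      exact ⟨r, hr, by omega, h1⟩
  have h3 : altLen D B A p + 1 ≤ D + 1 := by
    by_contra h4
    have h5 : altLen D B A p = D + 1 := by
      have := altLen_le D B A p
      omega
    rw [h5] at h2
    exact h (Or.inl (h2.mono hpm))
  exact Nat.le_findGreatest (P := fun n => AltBelow n A B (p + 1)) h3 h2

/-- The index of the cell containing `p`. It grows with `p`, and stays constant only as long as
no pair of sets of the family alternates once more. -/
noncomputable def cellIdx {X : Type*} [Fintype X] (D : ℕ) (A : X → Set ℕ) (p : ℕ) : ℕ :=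
  ∑ e : X × X, altLen D (A e.1) (A e.2) p

lemma cellIdx_mono {X : Type*} [Fintype X] (D : ℕ) (A : X → Set ℕ) : Monotone (cellIdx D A) :=
  fun _ _ hpq => Finset.sum_le_sum fun _ _ => altLen_mono _ _ _ hpq

lemma cellIdx_le {X : Type*} [Fintype X] (D : ℕ) (A : X → Set ℕ) (p : ℕ) :
    cellIdx D A p ≤ Fintype.card X ^ 2 * (D + 1) := by
  refine (Finset.sum_le_card_nsmul _ _ (D + 1) fun e _ => altLen_le _ _ _ _).trans ?_
  simp [sq]

/-- Elements of different non-crossing sets lie in different cells: which of the two values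
`altLen` for this pair is larger differs at `p` and `q`. -/
lemma cellIdx_ne {X : Type*} [Fintype X] {D m : ℕ} {A : X → Set ℕ} {a b : X}
    (hab : Disjoint (A a) (A b)) (h : ¬ Crosses D m (A a) (A b))
    {p q : ℕ} (hp : p ∈ A a) (hq : q ∈ A b) (hpm : p < m) (hqm : q < m) :
    cellIdx D A p ≠ cellIdx D A q := by
  intro heq
  have hall : ∀ e : X × X, altLen D (A e.1) (A e.2) p = altLen D (A e.1) (A e.2) q := by
    rcases le_total p q with hle | hle
    · intro e
      exact (Finset.sum_eq_sum_iff_of_le fun e _ => altLen_mono D (A e.1) (A e.2) hle).1 heq e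
        (Finset.mem_univ e)
    · intro e
      exact ((Finset.sum_eq_sum_iff_of_le fun e _ => altLen_mono D (A e.1) (A e.2) hle).1
        heq.symm e (Finset.mem_univ e)).symm
  have h1 := altLen_lt hab h hp hpm
  have h2 := altLen_lt hab.symm (fun h' => h h'.symm) hq hqm
  have h3 := hall (a, b)
  have h4 := hall (b, a)
  simp only at h3 h4
  omega

/-- Two disjoint sets that both meet `n+1` common cells alternate at least `n+2` times. -/
lemma cross_of_common {ρ : ℕ → ℕ} (hρ : Monotone ρ) {Y Z : Set ℕ} (hYZ : Disjoint Y Z) (n : ℕ) :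
    ∀ (U : Finset ℕ) (b : ℕ), U.card = n + 1 → (∀ j ∈ U, ∃ p ∈ Y, ρ p = j) →
      (∀ j ∈ U, ∃ p ∈ Z, ρ p = j) → (∀ p ∈ Y ∪ Z, ρ p ∈ U → p < b) →
      AltBelow (n + 2) Y Z b ∨ AltBelow (n + 2) Z Y b := by
  induction n with
  | zero =>
    intro U b hU hY hZ hb
    obtain ⟨j, rfl⟩ := Finset.card_eq_one.1 hU
    obtain ⟨p, hp, hpj⟩ := hY j (by simp)
    obtain ⟨q, hq, hqj⟩ := hZ j (by simp)
    exact altBelow_combine hYZ ⟨p, hp, hb p (Or.inl hp) (by simp [hpj]), trivial⟩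
      ⟨q, hq, hb q (Or.inr hq) (by simp [hqj]), trivial⟩
  | succ n ih =>
    intro U b hU hY hZ hb
    have hne : U.Nonempty := Finset.card_pos.1 (by omega)
    set j := U.max' hne with hj
    have hjU : j ∈ U := U.max'_mem hne
    obtain ⟨p, hp, hpj⟩ := hY j hjU
    obtain ⟨q, hq, hqj⟩ := hZ j hjU
    have hpb := hb p (Or.inl hp) (hpj ▸ hjU)
    have hqb := hb q (Or.inr hq) (hqj ▸ hjU)
    have hlt : ∀ i ∈ U.erase j, i < j := fun i hi =>
      lt_of_le_of_ne (U.le_max' i (Finset.mem_of_mem_erase hi)) (Finset.ne_of_mem_erase hi)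
    -- Either `p` or `q` can be put in front of an alternation lying in the lower cells.
    rcases ih (U.erase j) (min p q) (by rw [Finset.card_erase_of_mem hjU, hU]; omega)
      (fun i hi => hY i (Finset.mem_of_mem_erase hi))
      (fun i hi => hZ i (Finset.mem_of_mem_erase hi))
      (fun r _ hr => lt_min (hρ.reflect_lt (hpj ▸ hlt _ hr)) (hρ.reflect_lt (hqj ▸ hlt _ hr)))
      with h | h
    · exact Or.inr ⟨q, hq, hqb, h.mono (min_le_right _ _)⟩
    · exact Or.inl ⟨p, hp, hpb, h.mono (min_le_left _ _)⟩

/-- If `X` meets no cell of `Y`, then in an alternation of `X` and `Y` each element of `Y` may be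
replaced by an element of `Y'` from the same cell. -/
lemma altBelow_replace {ρ : ℕ → ℕ} (hρ : Monotone ρ) {X Y Y' : Set ℕ}
    (hYY' : ∀ p ∈ Y, ∃ p' ∈ Y', ρ p' = ρ p) (hXY : ∀ q ∈ X, ∀ p ∈ Y, ρ q ≠ ρ p) (n : ℕ) :
    (∀ b b', AltBelow n X Y b → (∀ q ∈ X, q < b → q < b') → AltBelow n X Y' b') ∧
    (∀ b b', AltBelow n Y X b → (∀ p ∈ Y, ∀ p' ∈ Y', ρ p' = ρ p → p < b → p' < b') →
      AltBelow n Y' X b') := by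
  induction n with
  | zero => exact ⟨fun _ _ _ _ => trivial, fun _ _ _ _ => trivial⟩
  | succ n ih =>
    refine ⟨?_, ?_⟩
    · rintro b b' ⟨q, hq, hqb, h⟩ hb
      refine ⟨q, hq, hb q hq hqb, ih.2 q q h fun p hp p' _ hpp' hpq => hρ.reflect_lt ?_⟩
      rw [hpp']
      exact lt_of_le_of_ne (hρ hpq.le) (hXY q hq p hp).symm
    · rintro b b' ⟨p, hp, hpb, h⟩ hb
      obtain ⟨p', hp', hpp'⟩ := hYY' p hp
      refine ⟨p', hp', hb p hp p' hp' hpp' hpb, ih.1 p p' h fun q hq hqp => hρ.reflect_lt ?_⟩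
      rw [hpp']
      exact lt_of_le_of_ne (hρ hqp.le) (hXY q hq p hp)

/-! ### The counting argument -/

/-- A nonempty finite set can be sampled by `n` values, which are distinct or exhaust the set. -/
lemma exists_sample {M n : ℕ} (hn : 1 ≤ n) (T : Finset (Fin M)) (hT : T.Nonempty) :
    ∃ f : Fin n → Fin M, (∀ i, f i ∈ T) ∧ (Function.Injective f ∨ ∀ j ∈ T, ∃ i, f i = j) := by
  obtain ⟨j0, hj0⟩ := hT
  have : Nonempty T := ⟨⟨j0, hj0⟩⟩
  have : Nonempty (Fin n) := ⟨⟨0, hn⟩⟩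
  rcases le_total n T.card with h | h
  · obtain ⟨e⟩ := Function.Embedding.nonempty_of_card_le (α := Fin n) (β := T) (by simpa using h)
    exact ⟨fun i => e i, fun i => (e i).2, Or.inl fun a b hab => e.injective (Subtype.ext hab)⟩
  · obtain ⟨e⟩ := Function.Embedding.nonempty_of_card_le (α := T) (β := Fin n) (by simpa using h)
    refine ⟨fun i => (Function.invFun (e : T → Fin n) i).val, fun i => (Function.invFun (e : T → Fin n) i).2, Or.inr fun j hj => ?_⟩
    refine ⟨e ⟨j, hj⟩, ?_⟩
    change (Function.invFun e (e ⟨j, hj⟩)).val = j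
    rw [Function.leftInverse_invFun e.injective]

lemma two_pow_le_of_pattern {d D k m : ℕ} (hD : D ≤ d)
    (A : Fin k × Fin (d + 1) → Set ℕ) (B : Finset (Fin k) → Set ℕ)
    (hAm : ∀ x, ∀ t ∈ A x, t < m) (hBm : ∀ S, ∀ t ∈ B S, t < m)
    (hBne : ∀ S, (B S).Nonempty)
    (hAA : ∀ x x', x ≠ x' → Disjoint (A x) (A x') ∧ ¬ Crosses D m (A x) (A x'))
    (hBB : ∀ S S', S ≠ S' → Disjoint (B S) (B S') ∧ ¬ Crosses D m (B S) (B S'))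
    (hABiff : ∀ i c S, Crosses D m (A (i, c)) (B S) ↔ i ∈ S) :
    2 ^ k ≤ ((k * (d + 1)) ^ 2 * (D + 1) + 1) ^ (D + 1) := by
  classical
  set ρ := cellIdx D A with hρdef
  have hρ : Monotone ρ := cellIdx_mono D A
  have hle : ∀ p, ρ p < (k * (d + 1)) ^ 2 * (D + 1) + 1 := by
    intro p
    have := cellIdx_le D A p
    simp only [Fintype.card_prod, Fintype.card_fin] at this
    exact Nat.lt_succ_of_le this
  set M := (k * (d + 1)) ^ 2 * (D + 1) + 1 with hM
  let T : Finset (Fin k) → Finset (Fin M) := fun S => {j | ∃ p ∈ B S, ρ p = j.val}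
  have hmemT : ∀ S j, j ∈ T S ↔ ∃ p ∈ B S, ρ p = j.val := fun S j => by simp [T]
  have hTne : ∀ S, (T S).Nonempty := by
    intro S
    obtain ⟨p, hp⟩ := hBne S
    exact ⟨⟨ρ p, hle p⟩, (hmemT S _).2 ⟨p, hp, rfl⟩⟩
  choose f hfT hf using fun S => exists_sample (n := D + 1) (by omega) (T S) (hTne S)
  -- Sets of vertices meeting the same few cells have the same neighbours.
  have hsub : ∀ S S', T S = T S' → (T S).card ≤ D → S ⊆ S' := by
    intro S S' hTT hcard i hi
    obtain ⟨c, hc⟩ : ∃ c, ∀ q ∈ A (i, c), ∀ p ∈ B S, ρ q ≠ ρ p := by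
      by_contra hcon
      push Not at hcon
      choose q hq p hp hqp using hcon
      obtain ⟨c, -, c', -, hne, heq⟩ := Finset.exists_ne_map_eq_of_card_lt_of_maps_to
        (s := (Finset.univ : Finset (Fin (d + 1)))) (t := T S)
        (f := fun c => (⟨ρ (q c), hle _⟩ : Fin M)) (by simp; omega)
        (fun c _ => (hmemT S _).2 ⟨p c, hp c, (hqp c).symm⟩)
      have hxx : (i, c) ≠ (i, c') := fun h => hne (Prod.mk.inj h).2
      exact cellIdx_ne (hAA _ _ hxx).1 (hAA _ _ hxx).2 (hq c) (hq c') (hAm _ _ (hq c))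
        (hAm _ _ (hq c')) (Fin.mk.inj heq)
    have hYY' : ∀ p ∈ B S, ∃ p' ∈ B S', ρ p' = ρ p := by
      intro p hp
      have : (⟨ρ p, hle p⟩ : Fin M) ∈ T S' := hTT ▸ (hmemT S _).2 ⟨p, hp, rfl⟩
      exact (hmemT S' _).1 this
    rw [← hABiff i c S']
    have hrep := altBelow_replace hρ hYY' hc (D + 2)
    rcases (hABiff i c S).2 hi with h | h
    · exact Or.inl (hrep.1 m m h fun q hq _ => hAm _ q hq)
    · exact Or.inr (hrep.2 m m h fun _ _ p' hp' _ _ => hBm _ p' hp')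
  have hinj : Function.Injective f := by
    intro S S' hff
    by_contra hne
    by_cases hi : Function.Injective (f S)
    · refine (hBB S S' hne).2 (cross_of_common hρ (hBB S S' hne).1 D
        (Finset.univ.image fun i => (f S i).val) m ?_ ?_ ?_ ?_)
      · rw [Finset.card_image_of_injective _ (fun a b h => hi (Fin.val_injective h))]
        simp
      · intro j hj
        obtain ⟨i, -, rfl⟩ := Finset.mem_image.1 hj
        exact (hmemT S _).1 (hfT S i)
      · intro j hj
        obtain ⟨i, -, rfl⟩ := Finset.mem_image.1 hj
        rw [hff]
        exact (hmemT S' _).1 (hfT S' i)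
      · rintro p (hp | hp) -
        · exact hBm _ _ hp
        · exact hBm _ _ hp
    · have himg : ∀ S, ¬ Function.Injective (f S) → T S = Finset.univ.image (f S) := by
        intro S hi
        ext j
        simp only [Finset.mem_image, Finset.mem_univ, true_and]
        exact ⟨fun hj => (hf S).resolve_left hi j hj, fun ⟨i, hij⟩ => hij ▸ hfT S i⟩
      have h1 := himg S hi
      have h2 := himg S' (hff ▸ hi)
      have hTT : T S = T S' := by rw [h1, h2, hff]
      have hcard : (T S).card ≤ D := by
        have h3 : (T S).card ≤ D + 1 := by
          rw [h1]
          simpa using Finset.card_image_le (s := (Finset.univ : Finset (Fin (D + 1)))) (f := f S)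
        have h4 : (T S).card ≠ D + 1 := by
          intro h5
          rw [h1] at h5
          have := Finset.injOn_of_card_image_eq (s := (Finset.univ : Finset (Fin (D + 1))))
            (f := f S) (by simpa using h5)
          exact hi (by simpa using this)
        omega
      exact hne (Finset.Subset.antisymm (hsub S S' hTT hcard)
        (hsub S' S hTT.symm (hTT ▸ hcard)))
  have := Fintype.card_le_of_injective f hinj
  simpa using this

lemma exists_large (d : ℕ) : ∃ k : ℕ, ∀ D ≤ d,
    ((k * (d + 1)) ^ 2 * (D + 1) + 1) ^ (D + 1) < 2 ^ k := by
  -- For `k ≥ 1` the left side is at most `c * k ^ e` with the following `c` and `e`.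
  set c : ℕ := ((d + 1) ^ 3 + 1) ^ (d + 1) with hc
  set e : ℕ := 2 * (d + 1) with he
  have hlim := tendsto_pow_const_div_const_pow_of_one_lt e (r := (2 : ℝ)) (by norm_num)
  have hcpos : (0 : ℝ) < c := by rw [hc]; positivity
  have hev := (hlim.eventually (gt_mem_nhds (inv_pos.2 hcpos))).and
    (Filter.eventually_ge_atTop 1)
  obtain ⟨k, hk, hk1⟩ := hev.exists
  refine ⟨k, fun D hD => ?_⟩
  have hlt : c * k ^ e < 2 ^ k := by
    rw [div_lt_iff₀ (by positivity), inv_mul_eq_div, lt_div_iff₀ hcpos] at hk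
    rw [mul_comm]
    exact_mod_cast hk
  refine lt_of_le_of_lt ?_ hlt
  calc ((k * (d + 1)) ^ 2 * (D + 1) + 1) ^ (D + 1)
      ≤ ((k * (d + 1)) ^ 2 * (d + 1) + 1) ^ (D + 1) := by gcongr
    _ ≤ ((k * (d + 1)) ^ 2 * (d + 1) + 1) ^ (d + 1) := by
        apply Nat.pow_le_pow_right <;> omega
    _ ≤ (((d + 1) ^ 3 + 1) * k ^ 2) ^ (d + 1) := by
        apply Nat.pow_le_pow_left
        have : 1 ≤ k ^ 2 := Nat.one_le_pow _ _ hk1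
        nlinarith
    _ = c * k ^ e := by rw [hc, he, mul_pow, pow_mul]

/-! ### The graph -/

/-- The bipartite graph between `d+1` copies of a `k`-set and its power set, given by
membership. -/
def memGraph (d k : ℕ) : SimpleGraph ((Fin k × Fin (d + 1)) ⊕ Finset (Fin k)) where
  Adj
    | .inl x, .inr S => x.1 ∈ S
    | .inr S, .inl x => x.1 ∈ S
    | _, _ => False
  symm := ⟨by rintro (x | S) (x' | S') h <;> exact h⟩
  loopless := ⟨by rintro (x | S) h <;> exact h⟩

lemma not_weaklyTverberg {d D k n : ℕ} (hD1 : 1 ≤ D) (hD : D ≤ d)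
    (hk : ((k * (d + 1)) ^ 2 * (D + 1) + 1) ^ (D + 1) < 2 ^ k)
    (φ : Fin n ≃ (Fin k × Fin (d + 1)) ⊕ Finset (Fin k)) :
    ¬ WeaklyTverberg D (graphComplex ((memGraph d k).comap φ)) := by
  rintro ⟨m, hm⟩
  obtain ⟨Q, hQP, hQdisj, hQ⟩ := hm ((Finset.range m).image (mom D)) (genPos_mom D m)
    (by rw [Finset.card_image_of_injective _ (mom_injective hD1), Finset.card_range])
  let A : (Fin k × Fin (d + 1)) ⊕ Finset (Fin k) → Set ℕ :=
    fun v => {t | t < m ∧ mom D t ∈ Q (φ.symm v)}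
  have hAm : ∀ v, ∀ t ∈ A v, t < m := fun v t ht => ht.1
  have hfin : ∀ v, (A v).Finite := fun v => (Set.finite_lt_nat m).subset fun t ht => ht.1
  have himg : ∀ v, mom D '' A v = (Q (φ.symm v) : Set (Pt D)) := by
    intro v
    ext x
    constructor
    · rintro ⟨t, ht, rfl⟩
      exact ht.2
    · intro hx
      obtain ⟨t, ht, rfl⟩ := Finset.mem_image.1 (hQP _ hx)
      exact ⟨t, ⟨Finset.mem_range.1 ht, hx⟩, rfl⟩
  have hdisj : ∀ u v, u ≠ v → Disjoint (A u) (A v) := by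
    intro u v huv
    rw [Set.disjoint_left]
    intro t hu hv
    exact Finset.disjoint_left.1 (hQdisj _ _ (φ.symm.injective.ne huv)) hu.2 hv.2
  have hcross : ∀ u v, u ≠ v → (Crosses D m (A u) (A v) ↔ (memGraph d k).Adj u v) := by
    intro u v huv
    have huv' : φ.symm u ≠ φ.symm v := φ.symm.injective.ne huv
    have h1 := hQ {φ.symm u, φ.symm v}
    have h2 : (⋂ i ∈ ({φ.symm u, φ.symm v} : Finset (Fin n)),
        convexHull ℝ ((Q i : Set (Pt D)))) =
        convexHull ℝ (mom D '' A u) ∩ convexHull ℝ (mom D '' A v) := by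
      rw [himg, himg]
      simp
    rw [h2] at h1
    have h3 : ({φ.symm u, φ.symm v} : Finset (Fin n)) ∈ graphComplex ((memGraph d k).comap φ) ↔
        (memGraph d k).Adj u v := by
      simp only [graphComplex, Set.mem_ofPred_eq, SimpleGraph.comap_adj]
      constructor
      · rintro ⟨-, h⟩
        simpa using h (φ.symm u) (by simp) (φ.symm v) (by simp) huv'
      · intro h
        refine ⟨Finset.card_le_two, fun a ha b hb hab => ?_⟩
        simp only [Finset.mem_insert, Finset.mem_singleton] at ha hb
        rcases ha with rfl | rfl <;> rcases hb with rfl | rfl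
        · exact (hab rfl).elim
        · simpa using h
        · simpa using h.symm
        · exact (hab rfl).elim
    rw [h3] at h1
    rw [← h1]
    exact ⟨inter_of_crosses (hfin u) (hfin v), crosses_of_inter (hdisj u v huv) (hAm u) (hAm v)⟩
  have hne : ∀ v, (A v).Nonempty := by
    intro v
    have h1 := (hQ {φ.symm v}).2 (by simp [graphComplex])
    simp only [Finset.mem_singleton, Set.iInter_iInter_eq_left, convexHull_nonempty_iff] at h1
    rw [← himg] at h1
    exact h1.of_image
  refine absurd (two_pow_le_of_pattern hD (fun x => A (.inl x)) (fun S => A (.inr S))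
    (fun x => hAm _) (fun S => hAm _) (fun S => hne _) ?_ ?_ ?_) (not_le.2 hk)
  · intro x x' h
    have h' : (Sum.inl x : (Fin k × Fin (d + 1)) ⊕ Finset (Fin k)) ≠ Sum.inl x' :=
      fun e => h (Sum.inl.inj e)
    exact ⟨hdisj _ _ h', fun hc => (hcross _ _ h').1 hc⟩
  · intro S S' h
    have h' : (Sum.inr S : (Fin k × Fin (d + 1)) ⊕ Finset (Fin k)) ≠ Sum.inr S' :=
      fun e => h (Sum.inr.inj e)
    exact ⟨hdisj _ _ h', fun hc => (hcross _ _ h').1 hc⟩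
  · intro i c S
    exact hcross (Sum.inl (i, c)) (Sum.inr S) (by simp)

theorem statement0 (d : ℕ) (hd : 1 ≤ d) :
    ∃ (n : ℕ) (G : SimpleGraph (Fin n)),
      ∀ d' : ℕ, 1 ≤ d' → d' ≤ d →
        ¬ WeaklyTverberg d' (graphComplex G) ∧ ¬ IsTverberg d' (graphComplex G) := by
  obtain ⟨k, hk⟩ := exists_large d
  refine ⟨Fintype.card ((Fin k × Fin (d + 1)) ⊕ Finset (Fin k)),
    (memGraph d k).comap (Fintype.equivFin _).symm, fun D h1 hD => ?_⟩
  have hweak := not_weaklyTverberg h1 hD (hk D hD) (Fintype.equivFin _).symm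
  refine ⟨hweak, fun ⟨C, hC⟩ => hweak ⟨C, fun P hP hcard => ?_⟩⟩
  obtain ⟨Q, hQ, -, hind⟩ := hC P hP hcard
  exact ⟨Q, hQ, hind⟩
end

section
/- For every integer d ≥ 1 and every simplicial complex Δ on vertex set [n]: Δ is weakly d-Tverberg if and only if Δ is d-colorfully representable. -/
/-!
Call a sequence of points `p 0, p 1, …` in `ℝ^d` stretched (`Stretched`) if there are `d + 1` affine
functionals `f 0, …, f d`, positive on the points, such that each ratio `f (k + 1) / f k` grows by a
huge factor `K` from one point to the next. Two facts carry the proof.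

* Every large set in general position contains long stretched sequences, for every `K`
  (`exists_stretched`). By Ramsey's theorem all orientations of increasing `(d + 1)`-tuples agree
  and, for each `k < d`, a cross-ratio inequality `2 [12][34] ≤ [13][24]` between determinants in
  which all but two rows are fixed either holds always or fails always. The second case contradicts
  the three-term Plücker relations for five points (`all_good`). The functionals are determinants
  with fixed rows taken from both ends of the sequence; the inequality says that their ratios double
  at each step, and one passes to a sparse subsequence.

* If a stretched sequence is colored by the letters of a word `W`, the color classes of `σ` have
  intersecting convex hulls if and only if `W` contains a `d`-colorful subword on `σ`
  (`stretched_inter_iff`). A greedy reading of `W` either finds such a subword or cuts `W` into at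
  most `d + 1` intervals each missing a letter of `σ` (`blockWord_or_cut`).
  Given a cut, a common point is impossible because the dominant term of `f k` would have to lie
  beyond the interval number `k` for all `k ≤ d` (`cut_false`). Given a colorful word, the linear
  equations for a common point have one unknown more than equations, and a nontrivial solution has
  all coefficients of one sign, because lacunarity makes the rescaled coefficients nearly equal along
  each block, and consecutive blocks share a letter (`kernel_sign`).

If `W` represents `Δ`, coloring a stretched sequence in a given set by `W` gives sets inducing `Δ`.
Conversely, since there are arbitrarily large sets in general position (`exists_genPos`), there is a
stretched sequence of `C` points, where `C` is the constant of the weak Tverberg property; the sets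
inducing `Δ` in it are color classes, and the word of their colors represents `Δ`.
-/

open Finset

/-! ### Words: a colorful subword or a cut -/

/-- `W` consists of `k` blocks of `|σ|` letters, consecutive blocks sharing one letter, and each
block contains every letter of `σ` exactly once. For `|σ| ≥ 1` this is `IsColorfulWord d σ W` with
`k = d + 1`; a free `k`, with a single letter for `k = 0`, is what the induction needs. -/
def BlockWord {α : Type*} [DecidableEq α] (k : ℕ) (σ : Finset α) (W : List α) : Prop :=
  W.length = k * (σ.card - 1) + 1 ∧
    ∀ i < k, ∀ a ∈ σ, ((W.drop (i * (σ.card - 1))).take σ.card).count a = 1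

/-- The shortest initial segment `U ++ [y]` of `V` containing all letters of `τ`: its last letter
`y` lies in `τ` and does not occur earlier. -/
theorem exists_minimal_initial {α : Type*} [DecidableEq α] (V : List α) :
    ∀ τ : Finset α, τ.Nonempty → (∀ a ∈ τ, a ∈ V) →
      ∃ U y V', V = U ++ y :: V' ∧ y ∈ τ ∧ y ∉ U ∧ ∀ a ∈ τ, a ∈ U ∨ a = y := by
  induction V with
  | nil =>
    rintro τ ⟨a, ha⟩ h
    exact absurd (h a ha) (by simp)
  | cons v V1 ih =>
    intro τ hτ h
    by_cases he : (τ.erase v).Nonempty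
    · obtain ⟨U, y, V', hV, hy, hyU, hall⟩ := ih (τ.erase v) he (fun a ha => by
        rw [Finset.mem_erase] at ha
        exact (List.mem_cons.1 (h a ha.2)).resolve_left ha.1)
      rw [Finset.mem_erase] at hy
      refine ⟨v :: U, y, V', by simp [hV], hy.2, by simp [hy.1, hyU], fun a ha => ?_⟩
      by_cases hav : a = v
      · exact Or.inl (by simp [hav])
      · rcases hall a (Finset.mem_erase.2 ⟨hav, ha⟩) with h1 | h1
        · exact Or.inl (by simp [h1])
        · exact Or.inr h1
    · have h1 : ∀ a ∈ τ, a = v := by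
        intro a ha
        by_contra hav
        exact he ⟨a, Finset.mem_erase.2 ⟨hav, ha⟩⟩
      obtain ⟨a, ha⟩ := hτ
      exact ⟨[], v, V1, rfl, h1 a ha ▸ ha, by simp, fun b hb => Or.inr (h1 b hb)⟩

/-- If all letters of `τ` occur in `U`, some subword of `U` contains each of them once and nothing
else. -/
theorem exists_sublist_of_subset {α : Type*} [DecidableEq α] (U : List α) (τ : Finset α)
    (h : ∀ a ∈ τ, a ∈ U) : ∃ Z : List α, Z.Sublist U ∧ Z.Nodup ∧ ∀ a, a ∈ Z ↔ a ∈ τ := by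
  refine ⟨(U.filter (· ∈ τ)).dedup, (List.dedup_sublist _).trans List.filter_sublist,
    List.nodup_dedup _, fun a => ?_⟩
  simp only [List.mem_dedup, List.mem_filter, decide_eq_true_eq]
  exact ⟨fun h => h.2, fun ha => ⟨h a ha, ha⟩⟩

/-- Prepending one block that ends in the letter `y`, where the given word starts. -/
theorem blockWord_cons {α : Type*} [DecidableEq α] {k : ℕ} {σ : Finset α} {x y : α}
    {Z W' : List α} (hx : x ∈ σ) (hy : y ∈ σ) (hxy : x ≠ y) (hZ : Z.Nodup)
    (hZm : ∀ a, a ∈ Z ↔ a ∈ (σ.erase x).erase y) (hW : BlockWord k σ (y :: W')) :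
    BlockWord (k + 1) σ (x :: (Z ++ y :: W')) := by
  have hcard : Z.length + 2 = σ.card := by
    have h1 : Z.toFinset = (σ.erase x).erase y := by
      ext a; simp only [List.mem_toFinset, hZm]
    have h2 := List.toFinset_card_of_nodup hZ
    rw [h1, Finset.card_erase_of_mem (Finset.mem_erase.2 ⟨hxy.symm, hy⟩),
      Finset.card_erase_of_mem hx] at h2
    have : 1 < σ.card := Finset.one_lt_card.2 ⟨x, hx, y, hy, hxy⟩
    omega
  have hlen : (x :: Z).length = σ.card - 1 := by simp; omega
  refine ⟨?_, ?_⟩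
  · have := hW.1
    simp only [List.length_cons, List.length_append] at this ⊢
    rw [add_mul]
    omega
  · intro i hi a ha
    rcases i with _ | i
    · have h3 : ((x :: (Z ++ y :: W')).drop (0 * (σ.card - 1))).take σ.card
          = (x :: Z) ++ [y] := by
        rw [zero_mul, List.drop_zero, ← List.cons_append, ← hcard, List.take_append]
        simp
      have hnd : ((x :: Z) ++ [y]).Nodup := by
        have hxZ : x ∉ Z := fun h => by simp [hZm] at h
        have hyZ : y ∉ Z := fun h => by simp [hZm] at h
        rw [List.nodup_append]
        refine ⟨List.nodup_cons.2 ⟨hxZ, hZ⟩, by simp, ?_⟩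
        intro b hb c hc
        simp only [List.mem_singleton] at hc
        subst hc
        rintro rfl
        rcases List.mem_cons.1 hb with h | h
        · exact hxy h.symm
        · exact hyZ h
      rw [h3]
      apply List.count_eq_one_of_mem hnd
      by_cases hax : a = x
      · simp [hax]
      · by_cases hay : a = y
        · simp [hay]
        · have : a ∈ Z := (hZm a).2 (by simp [hax, hay, ha])
          simp [this]
    · have h4 : (x :: (Z ++ y :: W')).drop ((i + 1) * (σ.card - 1))
          = (y :: W').drop (i * (σ.card - 1)) := by
        rw [← List.cons_append, add_mul, one_mul, add_comm, ← List.drop_drop, ← hlen,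
          List.drop_left]
      rw [h4]
      exact hW.2 i (by omega) a ha

/-- Greedy reading of `x :: V`: a block ends as soon as all letters of `σ` have been seen since
the end of the previous block, and the next block starts at that same letter. Either `k` blocks get
completed, or the word is cut into at most `k` intervals (`h j` is the interval containing the
position `j`), the `i`-th of which misses the letter `a i`. -/
theorem blockWord_or_cut_aux {α : Type*} [DecidableEq α] {σ : Finset α} (hσ : 2 ≤ σ.card) (k : ℕ) :
    ∀ (x : α) (V : List α), x ∈ σ → (∃ W', W'.Sublist V ∧ BlockWord k σ (x :: W')) ∨
      ∃ (h : ℕ → ℕ) (a : ℕ → α), Monotone h ∧ (∀ j, a j ∈ σ) ∧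
        ∀ j b, (x :: V)[j]? = some b → h j < k ∧ b ≠ a (h j) := by
  induction k with
  | zero =>
    intro x V hx
    exact Or.inl ⟨[], by simp, by simp [BlockWord]⟩
  | succ k ih =>
    intro x V hx
    by_cases hall : ∀ a ∈ σ.erase x, a ∈ V
    · have hne : (σ.erase x).Nonempty := by
        rw [← Finset.card_pos, Finset.card_erase_of_mem hx]; omega
      obtain ⟨U, y, V', hV, hy, hyU, hUa⟩ := exists_minimal_initial V (σ.erase x) hne hall
      rw [Finset.mem_erase] at hy
      rcases ih y V' hy.2 with ⟨W', hW', hB⟩ | ⟨h, a, hh, ha, hcut⟩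
      · left
        obtain ⟨Z, hZU, hZn, hZm⟩ := exists_sublist_of_subset U ((σ.erase x).erase y) (by
          intro a ha
          rw [Finset.mem_erase] at ha
          exact (hUa a ha.2).resolve_right ha.1)
        refine ⟨Z ++ y :: W', ?_, blockWord_cons hx hy.2 hy.1.symm hZn hZm hB⟩
        rw [hV]
        exact hZU.append (List.cons_sublist_cons.2 hW')
      · right
        refine ⟨fun j => if j < U.length + 1 then 0 else h (j - (U.length + 1)) + 1,
          fun j => if j = 0 then y else a (j - 1), ?_, ?_, ?_⟩
        · intro i j hij
          dsimp only
          split_ifs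
          · exact le_rfl
          · omega
          · omega
          · have := hh (show i - (U.length + 1) ≤ j - (U.length + 1) by omega)
            omega
        · intro j
          dsimp only
          split_ifs
          · exact hy.2
          · exact ha _
        · intro j b hj
          rw [hV, ← List.cons_append, List.getElem?_append] at hj
          simp only [List.length_cons] at hj
          dsimp only
          split_ifs with h1 h2 h2
          · rw [if_pos h1] at hj
            refine ⟨by omega, ?_⟩
            rintro rfl
            have := List.mem_of_getElem? hj
            rcases List.mem_cons.1 this with h | h
            · exact hy.1 h
            · exact hyU h
          · exact absurd rfl h2
          · exact h2.elim
          · rw [if_neg h1] at hj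
            have := hcut _ _ hj
            exact ⟨Nat.succ_lt_succ this.1, this.2⟩
    · right
      push Not at hall
      obtain ⟨a, ha, haV⟩ := hall
      rw [Finset.mem_erase] at ha
      refine ⟨fun _ => 0, fun _ => a, monotone_const, fun _ => ha.2, fun j b hj => ⟨Nat.succ_pos k, ?_⟩⟩
      rintro rfl
      rcases List.mem_cons.1 (List.mem_of_getElem? hj) with h | h
      · exact ha.1 h
      · exact haV h

/-- Either `W` contains a subword with `k` blocks, or `W` can be cut into at most `k` intervals
(the level sets of `h`), the `i`-th of which misses the letter `a i`. -/
theorem blockWord_or_cut {α : Type*} [DecidableEq α] {σ : Finset α} (hσ : 2 ≤ σ.card) (k : ℕ)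
    (hk : 0 < k) (W : List α) : (∃ W', W'.Sublist W ∧ BlockWord k σ W') ∨
      ∃ (h : ℕ → ℕ) (a : ℕ → α), Monotone h ∧ (∀ j, a j ∈ σ) ∧
        ∀ j b, W[j]? = some b → h j < k ∧ b ≠ a (h j) := by
  induction W with
  | nil =>
    right
    obtain ⟨a, ha⟩ : σ.Nonempty := by rw [← Finset.card_pos]; omega
    exact ⟨fun _ => 0, fun _ => a, monotone_const, fun _ => ha, by simp⟩
  | cons x V ih =>
    by_cases hx : x ∈ σ
    · rcases blockWord_or_cut_aux hσ k x V hx with ⟨W', h1, h2⟩ | h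
      · exact Or.inl ⟨x :: W', List.cons_sublist_cons.2 h1, h2⟩
      · exact Or.inr h
    · rcases ih with ⟨W', h1, h2⟩ | ⟨h, a, hh, ha, hcut⟩
      · exact Or.inl ⟨W', h1.trans (List.sublist_cons_self _ _), h2⟩
      · right
        refine ⟨fun j => if j = 0 then 0 else h (j - 1), ?_⟩
        refine ⟨a, ?_, ha, ?_⟩
        · intro i j hij
          dsimp only
          split_ifs
          · exact le_rfl
          · omega
          · omega
          · exact hh (by omega)
        · intro j b hj
          dsimp only
          split_ifs with h1
          · subst h1
            simp only [List.getElem?_cons_zero, Option.some.injEq] at hj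
            subst hj
            exact ⟨hk, fun h => hx (h ▸ ha _)⟩
          · obtain ⟨j, rfl⟩ := Nat.exists_eq_succ_of_ne_zero h1
            exact hcut j b (by simpa using hj)

/-! ### Ramsey's theorem for tuples -/

/-- A list of pairs (element, color) such that every `(q + 1)`-tuple of elements (in list order) has,
under the coloring `χ`, the color attached to its first element. -/
inductive PreHom {α : Type*} (q : ℕ) (χ : List ℕ → α) : List (ℕ × α) → Prop
  | nil : PreHom q χ []
  | cons (x : ℕ) (c : α) (T : List (ℕ × α)) :
      (∀ s : List ℕ, s.Sublist (T.map Prod.fst) → s.length = q → χ (x :: s) = c) →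
      PreHom q χ T → PreHom q χ ((x, c) :: T)

/-- Keeping only the elements to which one color `c` is attached yields a list homogeneous for
`(q + 1)`-tuples. -/
theorem PreHom.filter {α : Type*} [DecidableEq α] {q : ℕ} {χ : List ℕ → α} {L : List (ℕ × α)}
    (h : PreHom q χ L) (c : α) :
    ∀ s : List ℕ, s.Sublist ((L.filter (fun x => x.2 = c)).map Prod.fst) → s.length = q + 1 →
      χ s = c := by
  induction h with
  | nil =>
    intro s hs hl
    simp at hs
    simp [hs] at hl
  | cons x c' T hT _ ih =>
    intro s hs hl
    by_cases hc : c' = c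
    · subst hc
      rw [List.filter_cons_of_pos (by simp), List.map_cons] at hs
      rcases List.sublist_cons_iff.1 hs with h | ⟨r, rfl, h⟩
      · exact ih s h hl
      · exact hT r (h.trans (List.filter_sublist.map _)) (by simpa using hl)
    · rw [List.filter_cons_of_neg (by simpa using hc)] at hs
      exact ih s hs hl

/-- The greedy step of Ramsey's theorem: repeatedly take the first element `x` of the list and, by
the statement `IH` for `q`-tuples, shrink the rest until the color of `x :: s` no longer depends
on `s`. -/
theorem exists_preHom {α : Type*} (q : ℕ)
    (IH : ∀ m : ℕ, ∃ N : ℕ, ∀ (χ : List ℕ → α) (L : List ℕ), N ≤ L.length →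
      ∃ L' : List ℕ, L'.Sublist L ∧ L'.length = m ∧
        ∃ c, ∀ s : List ℕ, s.Sublist L' → s.length = q → χ s = c) (m : ℕ) :
    ∃ N : ℕ, ∀ (χ : List ℕ → α) (L : List ℕ), N ≤ L.length →
      ∃ L' : List (ℕ × α), (L'.map Prod.fst).Sublist L ∧ L'.length = m ∧ PreHom q χ L' := by
  induction m with
  | zero => exact ⟨0, fun χ L _ => ⟨[], by simp, rfl, PreHom.nil⟩⟩
  | succ m ih =>
    obtain ⟨N1, h1⟩ := ih
    obtain ⟨N2, h2⟩ := IH N1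
    refine ⟨N2 + 1, fun χ L hL => ?_⟩
    rcases L with _ | ⟨x, L⟩
    · simp at hL
    · obtain ⟨L1, hL1, hlen, c, hc⟩ := h2 (fun s => χ (x :: s)) L (by simpa using hL)
      obtain ⟨L2, hL2, hlen2, hp⟩ := h1 χ L1 hlen.ge
      refine ⟨(x, c) :: L2, ?_, by simp [hlen2], PreHom.cons _ _ _ ?_ hp⟩
      · exact List.cons_sublist_cons.2 (hL2.trans hL1)
      · intro s hs hl
        exact hc s (hs.trans hL2) hl

/-- Pigeonhole principle. -/
theorem exists_large_filter {α : Type*} [Fintype α] [DecidableEq α] (m : ℕ) (L : List (ℕ × α))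
    (h : Fintype.card α * m + 1 ≤ L.length) :
    ∃ c, m ≤ (L.filter (fun x => x.2 = c)).length := by
  by_contra! hcon
  have h1 : L.length = ∑ c : α, (L.filter (fun x => x.2 = c)).length := by
    clear h hcon
    induction L with
    | nil => simp
    | cons x L ih =>
      have : ∀ c : α, ((x :: L).filter (fun x => x.2 = c)).length
          = (if x.2 = c then 1 else 0) + (L.filter (fun x => x.2 = c)).length := by
        intro c
        rw [List.filter_cons]
        by_cases h1 : x.2 = c
        · simp [h1, add_comm]
        · simp [h1]
      simp only [this, Finset.sum_add_distrib, ← ih]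
      simp
      omega
  have h2 : ∑ c : α, (L.filter (fun x => x.2 = c)).length ≤ ∑ c : α, m :=
    Finset.sum_le_sum (fun c _ => (hcon c).le)
  rw [Finset.sum_const, Finset.card_univ, smul_eq_mul] at h2
  omega

/-- Ramsey's theorem for `q`-tuples, in terms of sublists. -/
theorem ramsey_list {α : Type*} [Fintype α] (q : ℕ) :
    ∀ m : ℕ, ∃ N : ℕ, ∀ (χ : List ℕ → α) (L : List ℕ), N ≤ L.length →
      ∃ L' : List ℕ, L'.Sublist L ∧ L'.length = m ∧
        ∃ c, ∀ s : List ℕ, s.Sublist L' → s.length = q → χ s = c := by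
  classical
  induction q with
  | zero =>
    intro m
    refine ⟨m, fun χ L hL => ⟨L.take m, List.take_sublist _ _, by simpa using hL, χ [], ?_⟩⟩
    intro s _ hs
    rw [List.length_eq_zero_iff.1 hs]
  | succ q ih =>
    intro m
    obtain ⟨N, hN⟩ := exists_preHom q ih (Fintype.card α * m + 1)
    refine ⟨N, fun χ L hL => ?_⟩
    obtain ⟨L1, hL1, hlen, hp⟩ := hN χ L hL
    obtain ⟨c, hc⟩ := exists_large_filter m L1 hlen.ge
    refine ⟨((L1.filter (fun x => x.2 = c)).map Prod.fst).take m, ?_, ?_, c, ?_⟩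
    · exact (List.take_sublist _ _).trans ((List.filter_sublist.map _).trans hL1)
    · rw [List.length_take, List.length_map]; omega
    · intro s hs hl
      exact hp.filter c s (hs.trans (List.take_sublist _ _)) hl

/-- Ramsey's theorem for increasing `q`-tuples of natural numbers, with the homogeneous set
enumerated by `g` (only `g 0, …, g (m - 1)` are relevant). -/
theorem ramsey {α : Type*} [Fintype α] (q m : ℕ) : ∃ N : ℕ, ∀ χ : (Fin q → ℕ) → α,
    ∃ g : ℕ → ℕ, StrictMono g ∧ (∀ j < m, g j < N) ∧
      ∃ c, ∀ s : ℕ → ℕ, StrictMono s → (∀ k < q, s k < m) → χ (fun k => g (s k)) = c := by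
  obtain ⟨N, hN⟩ := ramsey_list (α := α) q m
  refine ⟨N, fun χ => ?_⟩
  obtain ⟨L, hL, hlen, c, hc⟩ := hN (fun l => χ (fun k => l.getD k 0)) (List.range N) (by simp)
  have hmem : ∀ x ∈ L, x < N := fun x hx => List.mem_range.1 (hL.subset hx)
  have hsort : L.Pairwise (· < ·) := List.Pairwise.sublist hL List.pairwise_lt_range
  have hg : ∀ i (hi : i < L.length), L.getD i 0 = L[i] := fun i hi => by simp [hi]
  refine ⟨fun j => if j < m then L.getD j 0 else N + j, ?_, ?_, c, ?_⟩
  · intro i j hij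
    dsimp only
    split_ifs with h1 h2 h2
    · rw [hg i (by omega), hg j (by omega)]
      exact List.pairwise_iff_getElem.1 hsort i j _ _ hij
    · rw [hg i (by omega)]
      have := hmem _ (List.getElem_mem (show i < L.length by omega))
      omega
    · omega
    · omega
  · intro j hj
    dsimp only
    rw [if_pos hj, hg j (by omega)]
    exact hmem _ (List.getElem_mem _)
  · intro s hs hsm
    have hsub : (List.ofFn (fun k : Fin q => L.getD (s k) 0)).Sublist L := by
      rw [List.sublist_iff_exists_fin_orderEmbedding_get_eq]
      have hb : ∀ ix : Fin (List.ofFn (fun k : Fin q => L.getD (s k) 0)).length,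
          s ix < L.length := by
        intro ix
        have := ix.2
        simp only [List.length_ofFn] at this
        rw [hlen]
        exact hsm _ this
      refine ⟨OrderEmbedding.ofStrictMono (fun ix => ⟨s ix, hb ix⟩) ?_, ?_⟩
      · intro a b hab
        exact hs hab
      · intro ix
        simp only [List.get_eq_getElem, List.getElem_ofFn, hg _ (hb ix)]
        rfl
    have := hc _ hsub (by simp)
    rw [← this]
    dsimp only
    congr 1
    funext k
    rw [if_pos (hsm k k.2)]
    simp

/-! ### Numerical consequences of lacunarity -/

/-- A word that is cut into `d + 1` intervals, the `k`-th one missing the letter `a k`, does not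
give intersecting convex hulls. Here `y j k` is the value of the `k`-th functional at the `j`-th
point, and `l i` are the coefficients of a hypothetical common point as a convex combination of the
points of color `i`, so that `z k` is the value of the `k`-th functional at that point.

For every `k`, some point of color `a k` carries a `1 / m` fraction of `z k`. By induction on `k`
this dominant point lies in an interval with number `> k`: it is not in interval `k + 1`, which has
no point of color `a (k + 1)`, and if it came before the dominant point of step `k`, lacunarity
would make `K` at most `m ^ 2`. For `k = d` there is no interval left. -/
theorem cut_false {α : Type*} {d m : ℕ} {σ : Finset α} {K : ℝ} (hK : (m : ℝ) ^ 2 < K)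
    (y : ℕ → ℕ → ℝ) (hy : ∀ k ≤ d, ∀ j < m, 0 < y j k)
    (hlac : ∀ k < d, ∀ i j, i < j → j < m →
      K * (y i (k + 1) * y j k) ≤ y j (k + 1) * y i k)
    (W : ℕ → α) (l : α → ℕ → ℝ) (hl0 : ∀ i ∈ σ, ∀ j < m, 0 ≤ l i j)
    (hlW : ∀ i ∈ σ, ∀ j < m, 0 < l i j → W j = i) (hlpos : ∀ i ∈ σ, ∃ j < m, 0 < l i j)
    (z : ℕ → ℝ) (hz : ∀ i ∈ σ, ∀ k ≤ d, ∑ j ∈ range m, l i j * y j k = z k)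
    (h : ℕ → ℕ) (a : ℕ → α) (hmono : Monotone h) (ha : ∀ k, a k ∈ σ)
    (hcut : ∀ j < m, h j ≤ d ∧ W j ≠ a (h j)) : False := by
  have hm : (0 : ℝ) < m := by
    obtain ⟨j, hj, _⟩ := hlpos _ (ha 0)
    exact_mod_cast (by omega : 0 < m)
  have hKpos : 0 < K := lt_of_le_of_lt (sq_nonneg _) hK
  have hnn : ∀ i ∈ σ, ∀ k ≤ d, ∀ j ∈ range m, 0 ≤ l i j * y j k := fun i hi k hk j hj =>
    mul_nonneg (hl0 i hi j (mem_range.1 hj)) (hy k hk j (mem_range.1 hj)).le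
  have hle : ∀ i ∈ σ, ∀ k ≤ d, ∀ j < m, l i j * y j k ≤ z k := by
    intro i hi k hk j hj
    rw [← hz i hi k hk]
    exact Finset.single_le_sum (hnn i hi k hk) (mem_range.2 hj)
  have hzpos : ∀ k ≤ d, 0 < z k := by
    intro k hk
    obtain ⟨j, hj, hlj⟩ := hlpos _ (ha 0)
    exact lt_of_lt_of_le (mul_pos hlj (hy k hk j hj)) (hle _ (ha 0) k hk j hj)
  -- a term of each color that is at least the average
  have hdom : ∀ i ∈ σ, ∀ k ≤ d, ∃ j < m, z k ≤ m * (l i j * y j k) := by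
    intro i hi k hk
    by_contra! hcon
    have h1 : ∑ j ∈ range m, (m : ℝ) * (l i j * y j k) < ∑ j ∈ range m, z k := by
      apply Finset.sum_lt_sum_of_nonempty
      · exact nonempty_range_iff.2 (by rintro rfl; simp at hm)
      · exact fun j hj => hcon j (mem_range.1 hj)
    rw [← Finset.mul_sum, hz i hi k hk] at h1
    simp at h1
  have key : ∀ k ≤ d, ∃ j < m, z k ≤ m * (l (a k) j * y j k) ∧ k < h j := by
    intro k
    induction k with
    | zero =>
      intro _
      obtain ⟨j, hj, hjz⟩ := hdom _ (ha 0) 0 (Nat.zero_le d)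
      refine ⟨j, hj, hjz, Nat.pos_of_ne_zero fun h0 => ?_⟩
      have hlj : 0 < l (a 0) j := by
        refine (hl0 _ (ha 0) j hj).lt_of_ne fun hl => ?_
        rw [← hl] at hjz
        have := hzpos 0 (Nat.zero_le d)
        simp at hjz
        linarith
      apply (hcut j hj).2
      rw [hlW _ (ha 0) j hj hlj, h0]
    | succ k ih =>
      intro hk
      obtain ⟨j, hj, hjz, hhj⟩ := ih (by omega)
      obtain ⟨j', hj', hjz'⟩ := hdom _ (ha (k + 1)) (k + 1) hk
      refine ⟨j', hj', hjz', ?_⟩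
      have hlj : 0 < l (a (k + 1)) j' := by
        refine (hl0 _ (ha _) j' hj').lt_of_ne fun hl => ?_
        rw [← hl] at hjz'
        have := hzpos (k + 1) hk
        simp at hjz'
        linarith
      have hne : h j' ≠ k + 1 := by
        intro h0
        apply (hcut j' hj').2
        rw [hlW _ (ha _) j' hj' hlj, h0]
      -- otherwise `h j' ≤ k < h j`, so `j'` comes before `j` and lacunarity applies to this pair
      by_contra hcon
      have hjj : j' < j := by
        by_contra hge
        have := hmono (not_lt.1 hge)
        omega
      have h1 := hlac k (by omega) j' j hjj hj
      have h2 := hle _ (ha k) (k + 1) hk j hj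
      have h3 := hle _ (ha (k + 1)) k (by omega) j' hj'
      have hz1 := hzpos k (by omega)
      have hz2 := hzpos (k + 1) hk
      set A := l (a k) j
      set B := l (a (k + 1)) j'
      have hA : 0 ≤ A := hl0 _ (ha k) j hj
      have h4 : K * ((B * y j' (k + 1)) * (A * y j k)) ≤ z (k + 1) * z k := by
        calc K * ((B * y j' (k + 1)) * (A * y j k))
            = (A * B) * (K * (y j' (k + 1) * y j k)) := by ring
          _ ≤ (A * B) * (y j (k + 1) * y j' k) :=
              mul_le_mul_of_nonneg_left h1 (mul_nonneg hA hlj.le)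
          _ = (A * y j (k + 1)) * (B * y j' k) := by ring
          _ ≤ z (k + 1) * z k :=
              mul_le_mul h2 h3 (mul_nonneg hlj.le (hy k (by omega) j' hj').le) hz2.le
      have h5 : z (k + 1) * z k ≤ (m * (B * y j' (k + 1))) * (m * (A * y j k)) :=
        mul_le_mul hjz' hjz hz1.le (hz2.le.trans hjz')
      have h6 : K * (z (k + 1) * z k) ≤ (m : ℝ) ^ 2 * (z (k + 1) * z k) := by
        calc K * (z (k + 1) * z k)
            ≤ K * ((m * (B * y j' (k + 1))) * (m * (A * y j k))) :=
              mul_le_mul_of_nonneg_left h5 hKpos.le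
          _ = (m : ℝ) ^ 2 * (K * ((B * y j' (k + 1)) * (A * y j k))) := by ring
          _ ≤ _ := mul_le_mul_of_nonneg_left h4 (sq_nonneg _)
      exact absurd (le_of_mul_le_mul_right h6 (mul_pos hz2 hz1)) (not_le.2 hK)
  obtain ⟨j, hj, _, hhj⟩ := key d le_rfl
  exact absurd (hcut j hj).1 (not_le.2 hhj)

/-- Every position of a word with `d + 1` overlapping blocks lies in one of them. -/
theorem exists_block {d R : ℕ} (hR : 0 < R) (t : ℕ) :
    ∃ κ ≤ d, t < (d + 1) * R + 1 → κ * R ≤ t ∧ t ≤ (κ + 1) * R := by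
  by_cases h : t / R ≤ d
  · refine ⟨t / R, h, fun _ => ⟨Nat.div_mul_le_self t R, ?_⟩⟩
    have := Nat.lt_div_mul_add (a := t) hR
    rw [add_mul]; omega
  · refine ⟨d, le_rfl, fun ht => ⟨?_, by omega⟩⟩
    have h1 : (d + 1) * R ≤ t := (Nat.le_div_iff_mul_le hR).1 (by omega)
    exact le_trans (Nat.mul_le_mul_right R (by omega)) h1

/-- Rescaling the functionals by `τ k` so that functionals `k` and `k + 1` agree at the
common letter of the blocks `k` and `k + 1`, lacunarity makes the array block diagonal up to a
factor `1 / K`: at each position `t`, the rescaled values for blocks containing `t` are all equal to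
`G t`, and those for blocks not containing `t` are at most `G t / K`. -/
theorem exists_normalisation {d R : ℕ} {K : ℝ} (hK : 1 ≤ K) (hR : 0 < R)
    (y : ℕ → ℕ → ℝ) (hy : ∀ k ≤ d, ∀ j < (d + 1) * R + 1, 0 < y j k)
    (hlac : ∀ k < d, ∀ i j, i < j → j < (d + 1) * R + 1 →
      K * (y i (k + 1) * y j k) ≤ y j (k + 1) * y i k) :
    ∃ τ G : ℕ → ℝ, (∀ t < (d + 1) * R + 1, 0 < G t) ∧ (∀ k ≤ d, 0 < τ k) ∧
      ∀ t < (d + 1) * R + 1, ∀ k ≤ d,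
      (k * R ≤ t → t ≤ (k + 1) * R → y t k * τ k = G t) ∧
      (t < k * R ∨ (k + 1) * R < t → K * (y t k * τ k) ≤ G t) := by
  set τ : ℕ → ℝ := fun k => Nat.rec 1
    (fun k x => x * (y ((k + 1) * R) k / y ((k + 1) * R) (k + 1))) k with hτ
  have hτs : ∀ k, τ (k + 1) = τ k * (y ((k + 1) * R) k / y ((k + 1) * R) (k + 1)) := fun k => rfl
  have hb : ∀ k ≤ d, (k + 1) * R < (d + 1) * R + 1 := fun k hk =>
    Nat.lt_succ_of_le (Nat.mul_le_mul_right R (by omega))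
  have hτpos : ∀ k ≤ d, 0 < τ k := by
    intro k
    induction k with
    | zero => intro _; exact one_pos
    | succ k ih =>
      intro hk
      rw [hτs]
      exact mul_pos (ih (by omega)) (div_pos (hy k (by omega) _ (hb k (by omega)))
        (hy (k + 1) hk _ (hb k (by omega))))
  have hgpos : ∀ t < (d + 1) * R + 1, ∀ k ≤ d, 0 < y t k * τ k := fun t ht k hk =>
    mul_pos (hy k hk t ht) (hτpos k hk)
  -- in the variable `k`, the rescaled entries decrease as long as `t` is below the breakpoint
  -- `(k + 1) * R` and increase as long as it is above; at the breakpoint they agree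
  have hdec : ∀ t k, k < d → t < (k + 1) * R →
      K * (y t (k + 1) * τ (k + 1)) ≤ y t k * τ k := by
    intro t k hk ht
    have h1 := hlac k hk t _ ht (hb k hk.le)
    have h2 := hy (k + 1) hk _ (hb k hk.le)
    have h3 := hτpos k hk.le
    rw [hτs]
    have : K * (y t (k + 1) * (τ k * (y ((k + 1) * R) k / y ((k + 1) * R) (k + 1))))
      = τ k * (K * (y t (k + 1) * y ((k + 1) * R) k) / y ((k + 1) * R) (k + 1)) := by ring
    rw [this, mul_comm (y t k)]
    refine mul_le_mul_of_nonneg_left ?_ h3.le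
    rw [div_le_iff₀ h2]
    linarith
  have hinc : ∀ t k, k < d → (k + 1) * R < t → t < (d + 1) * R + 1 →
      K * (y t k * τ k) ≤ y t (k + 1) * τ (k + 1) := by
    intro t k hk ht ht'
    have h1 := hlac k hk _ t ht ht'
    have h2 := hy (k + 1) hk _ (hb k hk.le)
    have h3 := hτpos k hk.le
    rw [hτs]
    have : y t (k + 1) * (τ k * (y ((k + 1) * R) k / y ((k + 1) * R) (k + 1)))
      = τ k * ((y t (k + 1) * y ((k + 1) * R) k) / y ((k + 1) * R) (k + 1)) := by ring
    rw [this, mul_comm (y t k), mul_left_comm]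
    refine mul_le_mul_of_nonneg_left ?_ h3.le
    rw [le_div_iff₀ h2]
    linarith
  have heq : ∀ k, k < d →
      y ((k + 1) * R) (k + 1) * τ (k + 1) = y ((k + 1) * R) k * τ k := by
    intro k hk
    have h2 := hy (k + 1) hk _ (hb k hk.le)
    rw [hτs]
    field_simp
  have hdec' : ∀ t < (d + 1) * R + 1, ∀ k k', k ≤ k' → k' ≤ d → t ≤ (k + 1) * R →
      y t k' * τ k' ≤ y t k * τ k := by
    intro t ht k k' hkk
    induction k', hkk using Nat.le_induction with
    | base => intro _ _; exact le_rfl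
    | succ k' hkk ih =>
      intro hd htk
      refine le_trans ?_ (ih (by omega) htk)
      have : (k + 1) * R ≤ (k' + 1) * R := Nat.mul_le_mul_right R (by omega)
      rcases (htk.trans this).lt_or_eq with h | h
      · refine le_trans ?_ (hdec t k' (by omega) h)
        exact le_mul_of_one_le_left (hgpos t ht _ hd).le hK
      · rw [h]; exact (heq k' (by omega)).le
  have hinc' : ∀ t < (d + 1) * R + 1, ∀ k k', k ≤ k' → k' ≤ d → k' * R ≤ t →
      y t k * τ k ≤ y t k' * τ k' := by
    intro t ht k k' hkk
    induction k', hkk using Nat.le_induction with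
    | base => intro _ _; exact le_rfl
    | succ k' hkk ih =>
      intro hd htk
      have : k' * R ≤ (k' + 1) * R := Nat.mul_le_mul_right R (by omega)
      refine le_trans (ih (by omega) (this.trans htk)) ?_
      rcases htk.lt_or_eq with h | h
      · refine le_trans ?_ (hinc t k' (by omega) h ht)
        exact le_mul_of_one_le_left (hgpos t ht _ (by omega)).le hK
      · rw [← h]; exact (heq k' (by omega)).ge
  choose κ hκd hκb using fun t => exists_block (d := d) hR t
  refine ⟨τ, fun t => y t (κ t) * τ (κ t), fun t ht => hgpos t ht _ (hκd t), hτpos, ?_⟩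
  intro t ht k hk
  obtain ⟨h1, h2⟩ := hκb t ht
  dsimp only
  refine ⟨fun h3 h4 => ?_, ?_⟩
  · rcases le_total k (κ t) with h | h
    · exact le_antisymm (hinc' t ht _ _ h (hκd t) h1) (hdec' t ht _ _ h (hκd t) h4)
    · exact le_antisymm (hdec' t ht _ _ h hk h2) (hinc' t ht _ _ h hk h3)
  · rintro (h3 | h3)
    · have hlt : κ t < k := by
        by_contra hge
        have := Nat.mul_le_mul_right R (not_lt.1 hge)
        omega
      obtain ⟨k, rfl⟩ := Nat.exists_eq_succ_of_ne_zero (show k ≠ 0 by omega)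
      exact (hdec t k (by omega) h3).trans (hdec' t ht _ _ (by omega) (by omega) h2)
    · have hlt : k < κ t := by
        by_contra hge
        have := Nat.mul_le_mul_right R (show κ t + 1 ≤ k + 1 by omega)
        omega
      refine (hinc t k (by have := hκd t; omega) h3 ht).trans (hinc' t ht _ _ hlt (hκd t) h1)


/-- The coefficients `l t` of an affine dependence that equates, for all letters `a`, the weighted
sums of the points of color `a`, all have the same sign when the word is block-colorful.

After normalisation, with `μ t = l t * G t`, the equation for color `w t` and functional `k` says
that `μ t` equals the rescaled `z k` for every `t` in block `k`, up to a small multiple of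
`max |μ|`. Neighboring blocks share a letter, so all `μ t` are close to one number, hence close
to the entry of largest absolute value. -/
theorem kernel_sign {α : Type*} [DecidableEq α] {d R : ℕ} {σ : Finset α} {K : ℝ} (hR : 0 < R)
    (hK : (4 * d + 2) * (((d + 1) * R + 1 : ℕ) : ℝ) < K)
    (y : ℕ → ℕ → ℝ) (hy : ∀ k ≤ d, ∀ j < (d + 1) * R + 1, 0 < y j k)
    (hlac : ∀ k < d, ∀ i j, i < j → j < (d + 1) * R + 1 →
      K * (y i (k + 1) * y j k) ≤ y j (k + 1) * y i k)
    (w : ℕ → α) (hw : ∀ t < (d + 1) * R + 1, w t ∈ σ)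
    (hblock : ∀ k ≤ d, ∀ s t, k * R ≤ s → s ≤ (k + 1) * R → k * R ≤ t → t ≤ (k + 1) * R →
      w s = w t → s = t)
    (l : ℕ → ℝ) (z : ℕ → ℝ)
    (hz : ∀ a ∈ σ, ∀ k ≤ d,
      ∑ t ∈ (range ((d + 1) * R + 1)).filter (fun t => w t = a), l t * y t k = z k)
    (hl : ∃ t < (d + 1) * R + 1, l t ≠ 0) :
    ∃ e : ℝ, ∀ t < (d + 1) * R + 1, 0 < e * l t := by
  have hT1 : (1 : ℝ) ≤ (((d + 1) * R + 1 : ℕ) : ℝ) := by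
    exact_mod_cast Nat.succ_le_succ (Nat.zero_le _)
  have hd0 : (0 : ℝ) ≤ d := Nat.cast_nonneg d
  have hK1 : 1 ≤ K := by nlinarith
  obtain ⟨τ, G, hG, hτ, hn⟩ := exists_normalisation hK1 hR y hy hlac
  have hb : ∀ k ≤ d, (k + 1) * R < (d + 1) * R + 1 := fun k hk =>
    Nat.lt_succ_of_le (Nat.mul_le_mul_right R (by omega))
  generalize hT : (d + 1) * R + 1 = T at *
  have hKpos : 0 < K := by linarith
  set μ : ℕ → ℝ := fun t => l t * G t with hμ
  obtain ⟨t₀, ht₀, hl₀⟩ := hl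
  obtain ⟨ts, hts, hmax⟩ := Finset.exists_max_image (range T) (fun t => |μ t|) ⟨t₀, mem_range.2 ht₀⟩
  rw [mem_range] at hts
  have hMpos : 0 < |μ ts| :=
    lt_of_lt_of_le (abs_pos.2 (mul_ne_zero hl₀ (hG t₀ ht₀).ne')) (hmax t₀ (mem_range.2 ht₀))
  set M := |μ ts| with hM
  set δ := T * (M / K) with hδ
  have hδ0 : 0 ≤ δ := by positivity
  -- `δ` bounds the total contribution to a block of the points outside it
  have claim1 : ∀ k ≤ d, ∀ t < T, k * R ≤ t → t ≤ (k + 1) * R → |μ t - z k * τ k| ≤ δ := by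
    intro k hk t ht h1 h2
    have hsum := hz (w t) (hw t ht) k hk
    rw [← Finset.add_sum_erase _ _ (show t ∈ (range T).filter (fun s => w s = w t) by simp [ht])]
      at hsum
    have hμt : μ t = l t * y t k * τ k := by
      rw [hμ]; dsimp only; rw [← (hn t ht k hk).1 h1 h2]; ring
    have hdiff : μ t - z k * τ k =
        -∑ s ∈ ((range T).filter (fun s => w s = w t)).erase t, l s * y s k * τ k := by
      rw [hμt, ← hsum, ← Finset.sum_mul]; ring
    rw [hdiff, abs_neg]
    refine (Finset.abs_sum_le_sum_abs _ _).trans ?_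
    have hterm : ∀ s ∈ ((range T).filter (fun s => w s = w t)).erase t,
        |l s * y s k * τ k| ≤ M / K := by
      intro s hs
      simp only [mem_erase, mem_filter, mem_range] at hs
      obtain ⟨hst, hsT, hws⟩ := hs
      have hout : s < k * R ∨ (k + 1) * R < s := by
        by_contra hcon
        push Not at hcon
        exact hst (hblock k hk s t hcon.1 hcon.2 h1 h2 hws)
      have h3 := (hn s hsT k hk).2 hout
      have h4 := hmax s (mem_range.2 hsT)
      rw [le_div_iff₀ hKpos, mul_assoc, abs_mul, abs_of_pos (mul_pos (hy k hk s hsT) (hτ k hk))]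
      calc |l s| * (y s k * τ k) * K = |l s| * (K * (y s k * τ k)) := by ring
        _ ≤ |l s| * G s := mul_le_mul_of_nonneg_left h3 (abs_nonneg _)
        _ = |μ s| := by rw [hμ]; dsimp only; rw [abs_mul, abs_of_pos (hG s hsT)]
        _ ≤ M := h4
    refine (Finset.sum_le_card_nsmul _ _ _ hterm).trans ?_
    rw [nsmul_eq_mul, hδ]
    refine mul_le_mul_of_nonneg_right ?_ (by positivity)
    have : (((range T).filter (fun s => w s = w t)).erase t).card ≤ T :=
      (Finset.card_le_card ((Finset.erase_subset _ _).trans (Finset.filter_subset _ _))).trans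
        (by simp)
    exact_mod_cast this
  -- compare neighboring blocks at their common letter `(k + 1) * R`
  have claim2 : ∀ k ≤ d, |z k * τ k - z 0 * τ 0| ≤ 2 * k * δ := by
    intro k
    induction k with
    | zero => intro _; simp
    | succ k ih =>
      intro hk
      have h1 := ih (by omega)
      have h2 := claim1 k (by omega) ((k + 1) * R) (hb k (by omega))
        (Nat.mul_le_mul_right R (by omega)) le_rfl
      have h3 := claim1 (k + 1) hk ((k + 1) * R) (hb k (by omega)) le_rfl
        (Nat.mul_le_mul_right R (by omega))
      rw [abs_le] at *
      push_cast
      constructor <;> nlinarith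
  have claim3 : ∀ t < T, |μ t - z 0 * τ 0| ≤ (2 * d + 1) * δ := by
    intro t ht
    obtain ⟨k, hk, hkb⟩ := exists_block (d := d) hR t
    obtain ⟨h1, h2⟩ := hkb (hT ▸ ht)
    have h3 := claim1 k hk t ht h1 h2
    have h4 := claim2 k hk
    have h5 : (k : ℝ) ≤ d := by exact_mod_cast hk
    have h6 : (k : ℝ) * δ ≤ d * δ := mul_le_mul_of_nonneg_right h5 hδ0
    rw [abs_le] at *
    constructor <;> nlinarith
  refine ⟨μ ts, fun t ht => ?_⟩
  have h1 := claim3 t ht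
  have h2 := claim3 ts hts
  have h3 : (4 * d + 2) * δ < M := by
    have : (4 * d + 2) * δ = ((4 * d + 2) * T) * M / K := by rw [hδ]; ring
    rw [this, div_lt_iff₀ hKpos, mul_comm M]
    exact mul_lt_mul_of_pos_right hK hMpos
  have h4 : |μ t - μ ts| < |μ ts| := by
    rw [← hM]
    refine lt_of_le_of_lt ?_ h3
    rw [abs_le] at *
    constructor <;> linarith
  have h5 : 0 < μ ts * μ t := by
    rcases lt_trichotomy (μ ts) 0 with h | h | h
    · rw [abs_of_neg h, abs_lt] at h4
      exact mul_pos_of_neg_of_neg h (by linarith)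
    · rw [hM, h, abs_zero] at hMpos
      exact absurd hMpos (lt_irrefl _)
    · rw [abs_of_pos h, abs_lt] at h4
      exact mul_pos h (by linarith)
  have h6 : μ ts * μ t = μ ts * l t * G t := by rw [hμ]; ring
  rw [h6] at h5
  exact (mul_pos_iff_of_pos_right (hG t ht)).1 h5

/-! ### Colorings of stretched sequences -/

/-- Homogeneous coordinates `(1, x)` of a point. -/
def hom {d : ℕ} (x : Pt d) : Fin (d + 1) → ℝ := Fin.cons 1 x

/-- The points `p 0, …, p (m - 1)` are `K`-stretched: there are `d + 1` linear functionals on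
homogeneous coordinates, positive at all the points, such that the ratio of the values of the
functional `k + 1` and the functional `k` grows at least by the factor `K` from each point to every
later one. The condition is written without division. -/
def Stretched {d : ℕ} (K : ℝ) (m : ℕ) (p : ℕ → Pt d) : Prop :=
  ∃ f : ℕ → ((Fin (d + 1) → ℝ) →ₗ[ℝ] ℝ), (∀ k ≤ d, ∀ j < m, 0 < f k (hom (p j))) ∧
    ∀ k < d, ∀ i j, i < j → j < m →
      K * (f (k + 1) (hom (p i)) * f k (hom (p j))) ≤ f (k + 1) (hom (p j)) * f k (hom (p i))

theorem Stretched.comp {d : ℕ} {K : ℝ} {m T : ℕ} {p : ℕ → Pt d} (h : Stretched K m p)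
    {g : ℕ → ℕ} (hg : ∀ i j, i < j → j < T → g i < g j) (hgm : ∀ j < T, g j < m) :
    Stretched K T (fun j => p (g j)) := by
  obtain ⟨f, h1, h2⟩ := h
  exact ⟨f, fun k hk j hj => h1 k hk _ (hgm j hj),
    fun k hk i j hij hj => h2 k hk _ _ (hg i j hij hj) (hgm j hj)⟩

/-- The points of `p 0, …, p (|W| - 1)` with color `i`, the `j`-th point having as color the `j`-th
letter of `W`. -/
noncomputable def colorClass {d : ℕ} {α : Type*} [DecidableEq α] (p : ℕ → Pt d) (W : List α)
    (i : α) : Finset (Pt d) := by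
  classical
  exact ((range W.length).filter (fun j => W[j]? = some i)).image p

/-- A word of length at most `|σ|` in which each letter of `σ` occurs exactly once has no
repetition and no further letters. -/
theorem block_nodup {α : Type*} [DecidableEq α] {σ : Finset α} {B : List α}
    (hlen : B.length ≤ σ.card) (h : ∀ a ∈ σ, B.count a = 1) : B.Nodup ∧ ∀ x ∈ B, x ∈ σ := by
  have hle : σ.val ≤ (B : Multiset α) := by
    rw [Multiset.le_iff_count]
    intro a
    by_cases ha : a ∈ σ
    · rw [Multiset.coe_count, h a ha]
      exact Multiset.nodup_iff_count_le_one.1 σ.nodup a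
    · rw [Multiset.count_eq_zero_of_notMem ha]
      exact Nat.zero_le _
  have heq := Multiset.eq_of_le_of_card_le hle (by simpa using hlen)
  refine ⟨?_, fun x hx => ?_⟩
  · rw [← Multiset.coe_nodup, ← heq]; exact σ.nodup
  · rw [← Finset.mem_val, heq]; exact hx

/-- Requiring the weighted sums of the colors `a ∈ σ` to agree is a system of `(|σ| - 1)(d + 1)`
linear equations in `T` unknowns, hence has a nontrivial solution if `T` is larger. -/
theorem exists_kernel {α : Type*} [DecidableEq α] {d T : ℕ} {σ : Finset α} {a₀ : α}
    (ha₀ : a₀ ∈ σ) (hT : (σ.card - 1) * (d + 1) < T) (w : ℕ → α) (v : ℕ → Fin (d + 1) → ℝ) :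
    ∃ (l : ℕ → ℝ) (Z : Fin (d + 1) → ℝ), (∃ t < T, l t ≠ 0) ∧
      ∀ a ∈ σ, ∑ t ∈ (range T).filter (fun t => w t = a), l t • v t = Z := by
  let A : Matrix ({a // a ∈ σ.erase a₀} × Fin (d + 1)) (Fin T) ℝ := fun ac t =>
    (if w t = ac.1 then v t ac.2 else 0) - (if w t = a₀ then v t ac.2 else 0)
  have hker : LinearMap.ker A.mulVecLin ≠ ⊥ := by
    apply LinearMap.ker_ne_bot_of_finrank_lt
    simp only [Module.finrank_fintype_fun_eq_card, Fintype.card_prod, Fintype.card_coe,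
      Fintype.card_fin, Finset.card_erase_of_mem ha₀]
    exact hT
  obtain ⟨u, hu, hu0⟩ := Submodule.exists_mem_ne_zero_of_ne_bot hker
  rw [LinearMap.mem_ker, Matrix.mulVecLin_apply] at hu
  have hsum : ∀ (g : ℕ → ℝ),
      ∑ t : Fin T, g t = ∑ t ∈ range T, g t := fun g => Fin.sum_univ_eq_sum_range g T
  refine ⟨fun t => if h : t < T then u ⟨t, h⟩ else 0,
    ∑ t ∈ (range T).filter (fun t => w t = a₀), (if h : t < T then u ⟨t, h⟩ else 0) • v t,
    ?_, ?_⟩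
  · by_contra! hcon
    apply hu0
    funext t
    simpa using hcon t t.2
  · intro a ha
    by_cases haa : a = a₀
    · rw [haa]
    · funext c
      have h1 := congrFun hu (⟨a, Finset.mem_erase.2 ⟨haa, ha⟩⟩, c)
      simp only [Matrix.mulVec, dotProduct, A, Pi.zero_apply] at h1
      have h2 := hsum (fun t => ((if w t = a then v t c else 0) - (if w t = a₀ then v t c else 0)) *
        (if h : t < T then u ⟨t, h⟩ else 0))
      simp only [Fin.is_lt, dif_pos, Fin.eta] at h2
      rw [h2] at h1
      simp only [Finset.sum_apply, Pi.smul_apply, smul_eq_mul, Finset.sum_filter]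
      refine sub_eq_zero.1 (Eq.trans ?_ h1)
      rw [← Finset.sum_sub_distrib]
      refine Finset.sum_congr rfl fun t _ => ?_
      split_ifs <;> ring

/-- The convex hulls of the color classes of a sufficiently stretched sequence colored by a word
with `d + 1` blocks have a common point: the number of points exceeds by one the number of equations
in `exists_kernel`, and by `kernel_sign` the solution is a positive one up to sign. -/
theorem blockWord_inter {α : Type*} [DecidableEq α] {d : ℕ} {σ : Finset α} (hσ : 2 ≤ σ.card)
    {K : ℝ} {p : ℕ → Pt d} {W : List α} (hW : BlockWord (d + 1) σ W)
    (hp : Stretched K W.length p) (hK : (4 * d + 2) * (W.length : ℝ) < K) :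
    (⋂ i ∈ σ, convexHull ℝ (colorClass p W i : Set (Pt d))).Nonempty := by
  obtain ⟨f, hf1, hf2⟩ := hp
  obtain ⟨hlen, hcount⟩ := hW
  obtain ⟨a₀, ha₀⟩ : σ.Nonempty := by rw [← Finset.card_pos]; omega
  set R := σ.card - 1 with hR
  rw [hlen] at hf1 hf2 hK
  set w : ℕ → α := fun j => W.getD j a₀ with hw
  have hwget : ∀ j (hj : j < W.length), w j = W[j] := fun j hj => by simp [hw, hj]
  have hbl : ∀ k ≤ d, ∀ t, k * R ≤ t → t ≤ (k + 1) * R →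
      ∃ h : t - k * R < ((W.drop (k * R)).take σ.card).length,
        ((W.drop (k * R)).take σ.card)[t - k * R] = w t := by
    intro k hk t h1 h2
    have h3 : (k + 1) * R ≤ (d + 1) * R := Nat.mul_le_mul_right R (by omega)
    have h4 : (k + 1) * R = k * R + R := by ring
    have h5 : t - k * R < ((W.drop (k * R)).take σ.card).length := by
      rw [List.length_take, List.length_drop, hlen]; omega
    refine ⟨h5, ?_⟩
    rw [hwget t (by omega), List.getElem_take, List.getElem_drop]
    congr 1
    omega
  have hnd : ∀ k ≤ d, ((W.drop (k * R)).take σ.card).Nodup ∧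
      ∀ x ∈ (W.drop (k * R)).take σ.card, x ∈ σ := fun k hk =>
    block_nodup (by rw [List.length_take]; omega) (hcount k (by omega))
  obtain ⟨l, Z, hl, hZ⟩ := exists_kernel (d := d) (T := (d + 1) * R + 1) ha₀
    (by rw [mul_comm, ← hR]; exact Nat.lt_succ_self _) w (fun t => hom (p t))
  have hA : ∀ t < (d + 1) * R + 1, w t ∈ σ := by
    intro t ht
    obtain ⟨k, hk, hkb⟩ := exists_block (d := d) (show 0 < R by omega) t
    obtain ⟨h1, h2⟩ := hkb ht
    obtain ⟨h3, h4⟩ := hbl k hk t h1 h2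
    rw [← h4]
    exact (hnd k hk).2 _ (List.getElem_mem h3)
  have hB : ∀ k ≤ d, ∀ s t, k * R ≤ s → s ≤ (k + 1) * R → k * R ≤ t → t ≤ (k + 1) * R →
      w s = w t → s = t := by
    intro k hk s t hs1 hs2 ht1 ht2 hst
    obtain ⟨h3, h4⟩ := hbl k hk s hs1 hs2
    obtain ⟨h5, h6⟩ := hbl k hk t ht1 ht2
    rw [← h4, ← h6] at hst
    have := ((hnd k hk).1.getElem_inj_iff).1 hst
    omega
  have hC : ∀ a ∈ σ, ∀ k ≤ d, ∑ t ∈ (range ((d + 1) * R + 1)).filter (fun t => w t = a),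
      l t * f k (hom (p t)) = f k Z := by
    intro a ha k hk
    rw [← hZ a ha, map_sum]
    exact Finset.sum_congr rfl fun t _ => by rw [map_smul, smul_eq_mul]
  obtain ⟨e, he⟩ := kernel_sign (σ := σ) (R := R) (d := d) (by omega) hK
    (fun t k => f k (hom (p t))) hf1 hf2 w hA hB l (fun k => f k Z) hC hl
  have hZ0 : ∀ a ∈ σ, ∑ t ∈ (range ((d + 1) * R + 1)).filter (fun t => w t = a), l t = Z 0 := by
    intro a ha
    rw [← hZ a ha, Finset.sum_apply]
    exact Finset.sum_congr rfl fun t _ => by simp [hom]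
  have hZc : ∀ a ∈ σ, ∑ t ∈ (range ((d + 1) * R + 1)).filter (fun t => w t = a), l t • p t
      = Fin.tail Z := by
    intro a ha
    rw [← hZ a ha]
    funext c
    simp [Finset.sum_apply, hom, Fin.tail]
  -- the total weight of each color, used to normalize the dependence
  have hS : 0 < e * Z 0 := by
    have h1 : (0 : ℕ) < (d + 1) * R + 1 := Nat.succ_pos _
    have hw0 : w 0 ∈ σ := by
      obtain ⟨h3, h4⟩ := hbl 0 (Nat.zero_le d) 0 (by simp) (Nat.zero_le _)
      rw [← h4]
      exact (hnd 0 (Nat.zero_le d)).2 _ (List.getElem_mem h3)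
    rw [← hZ0 (w 0) hw0, Finset.mul_sum]
    refine Finset.sum_pos (fun t ht => he t (mem_range.1 (mem_filter.1 ht).1)) ⟨0, ?_⟩
    simp
  refine ⟨(e * Z 0)⁻¹ • (e • Fin.tail Z), ?_⟩
  simp only [Set.mem_iInter]
  intro a ha
  have hx : (e * Z 0)⁻¹ • (e • Fin.tail Z) =
      ∑ t ∈ (range ((d + 1) * R + 1)).filter (fun t => w t = a),
        ((e * Z 0)⁻¹ * (e * l t)) • p t := by
    rw [← hZc a ha, Finset.smul_sum, Finset.smul_sum]
    exact Finset.sum_congr rfl fun t _ => by rw [smul_smul, smul_smul, mul_assoc]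
  rw [hx]
  refine (convex_convexHull ℝ _).sum_mem ?_ ?_ ?_
  · intro t ht
    exact (mul_pos (inv_pos.2 hS) (he t (mem_range.1 (mem_filter.1 ht).1))).le
  · rw [← Finset.mul_sum, ← Finset.mul_sum, hZ0 a ha, inv_mul_cancel₀ hS.ne']
  · intro t ht
    rw [mem_filter, mem_range] at ht
    apply subset_convexHull
    simp only [colorClass, coe_image, Set.mem_image, coe_filter, mem_range, Set.mem_ofPred_eq]
    have h1 : t < W.length := by omega
    exact ⟨t, ⟨h1, by rw [List.getElem?_eq_getElem h1, ← hwget t h1, ht.2]⟩, rfl⟩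

/-- The geometric form of `cut_false`. -/
theorem inter_not_cut {α : Type*} [DecidableEq α] {d : ℕ} {σ : Finset α}
    {K : ℝ} {p : ℕ → Pt d} {W : List α} (hp : Stretched K W.length p)
    (hinj : ∀ i < W.length, ∀ j < W.length, p i = p j → i = j)
    (hK : (W.length : ℝ) ^ 2 < K)
    (hne : (⋂ i ∈ σ, convexHull ℝ (colorClass p W i : Set (Pt d))).Nonempty)
    (h : ℕ → ℕ) (a : ℕ → α) (hmono : Monotone h) (ha : ∀ k, a k ∈ σ)
    (hcut : ∀ j b, W[j]? = some b → h j < d + 1 ∧ b ≠ a (h j)) : False := by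
  obtain ⟨f, hf1, hf2⟩ := hp
  obtain ⟨x, hx⟩ := hne
  simp only [Set.mem_iInter] at hx
  have hrep : ∀ i, ∃ u : ℕ → ℝ, i ∈ σ → (∀ j < W.length, 0 ≤ u j) ∧
      (∀ j < W.length, 0 < u j → W[j]? = some i) ∧ (∃ j < W.length, 0 < u j) ∧
      ∑ j ∈ range W.length, u j • hom (p j) = hom x := by
    intro i
    by_cases hi : i ∈ σ
    swap
    · exact ⟨0, fun h => absurd h hi⟩
    have hxi := hx i hi
    rw [Finset.mem_convexHull'] at hxi
    obtain ⟨u, hu0, hu1, hux⟩ := hxi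
    simp only [colorClass] at hu0 hu1 hux
    have hinj' : Set.InjOn p ((range W.length).filter (fun j => W[j]? = some i) : Finset ℕ) := by
      intro s hs t ht hst
      simp only [coe_filter, mem_range, Set.mem_ofPred_eq] at hs ht
      exact hinj s hs.1 t ht.1 hst
    rw [Finset.sum_image hinj'] at hu1 hux
    have hpos : ∃ j < W.length, 0 < if W[j]? = some i then u (p j) else 0 := by
      by_contra! hcon
      have : ∑ j ∈ (range W.length).filter (fun j => W[j]? = some i), u (p j) ≤ 0 := by
        apply Finset.sum_nonpos
        intro j hj
        rw [mem_filter, mem_range] at hj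
        simpa [hj.2] using hcon j hj.1
      linarith
    refine ⟨fun j => if W[j]? = some i then u (p j) else 0, fun _ => ⟨?_, ?_, hpos, ?_⟩⟩
    · intro j hj
      dsimp only
      split_ifs with h1
      · exact hu0 _ (mem_image_of_mem p (mem_filter.2 ⟨mem_range.2 hj, h1⟩))
      · exact le_rfl
    · intro j hj hpos
      by_contra h1
      dsimp only at hpos
      rw [if_neg h1] at hpos
      exact lt_irrefl _ hpos
    · simp only [ite_smul, zero_smul, ← Finset.sum_filter]
      funext c
      refine Fin.cases ?_ (fun c => ?_) c
      · simpa [Finset.sum_apply, hom] using hu1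
      · have := congrFun hux c
        simpa [Finset.sum_apply, hom] using this
  choose u hu using hrep
  refine cut_false (α := α) (d := d) (m := W.length) (σ := σ) hK
    (fun t k => f k (hom (p t))) hf1 hf2
    (fun j => W.getD j (a 0)) u (fun i hi => (hu i hi).1) ?_ (fun i hi => (hu i hi).2.2.1)
    (fun k => f k (hom x)) ?_ h a hmono ha ?_
  · intro i hi j hj hpos
    simp [(hu i hi).2.1 j hj hpos]
  · intro i hi k hk
    rw [← (hu i hi).2.2.2, map_sum]
    exact Finset.sum_congr rfl fun t _ => by rw [map_smul, smul_eq_mul]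
  · intro j hj
    have := hcut j _ (List.getElem?_eq_getElem hj)
    refine ⟨by omega, ?_⟩
    simpa [hj] using this.2

theorem isColorfulWord_iff {α : Type*} [DecidableEq α] {d : ℕ} {σ : Finset α}
    (hσ : 1 ≤ σ.card) (W : List α) : IsColorfulWord d σ W ↔ BlockWord (d + 1) σ W := by
  unfold IsColorfulWord BlockWord
  rw [min_eq_right hσ]
  simp only [Nat.lt_succ_iff]

/-- For a sufficiently stretched sequence colored by a word `W`, the color classes of `σ` have
intersecting convex hulls if and only if `W` contains a colorful subword on `σ`. -/
theorem stretched_inter_iff {α : Type*} [DecidableEq α] {d : ℕ} {σ : Finset α}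
    {K : ℝ} {p : ℕ → Pt d} {W : List α} (hp : Stretched K W.length p)
    (hinj : ∀ i < W.length, ∀ j < W.length, p i = p j → i = j)
    (hK : (W.length : ℝ) ^ 2 < K) (hK' : (4 * d + 2) * (W.length : ℝ) < K) :
    (⋂ i ∈ σ, convexHull ℝ (colorClass p W i : Set (Pt d))).Nonempty ↔ ContainsColorful d σ W := by
  rcases Nat.lt_or_ge σ.card 2 with hσ | hσ
  · rcases Nat.eq_zero_or_pos σ.card with h0 | h1
    · rw [Finset.card_eq_zero] at h0
      subst h0
      simp [ContainsColorful, IsColorfulWord]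
    · obtain ⟨a, rfl⟩ := Finset.card_eq_one.1 (show σ.card = 1 by omega)
      have h1 : (⋂ i ∈ ({a} : Finset α), convexHull ℝ (colorClass p W i : Set (Pt d))).Nonempty ↔
          a ∈ W := by
        simp only [Finset.mem_singleton, Set.iInter_iInter_eq_left, convexHull_nonempty_iff,
          Finset.coe_nonempty, colorClass, Finset.image_nonempty]
        constructor
        · rintro ⟨j, hj⟩
          rw [mem_filter] at hj
          exact List.mem_of_getElem? hj.2
        · intro h
          obtain ⟨j, hj, hja⟩ := List.getElem_of_mem h
          exact ⟨j, by simp [hj, hja]⟩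
      rw [h1]
      constructor
      · intro h
        refine ⟨[a], List.singleton_sublist.2 h, ?_⟩
        simp [IsColorfulWord]
      · rintro ⟨W', hW', h2, h3⟩
        have := h3 0 (Nat.zero_le _) a (by simp)
        simp only [card_singleton, Nat.sub_self, mul_zero, List.drop_zero] at this
        have h4 : a ∈ W'.take 1 := by
          rw [← List.count_pos_iff, this]; exact one_pos
        exact hW'.subset (List.mem_of_mem_take h4)
  · constructor
    · intro hne
      rcases blockWord_or_cut hσ (d + 1) (Nat.succ_pos d) W with ⟨W', h1, h2⟩ | ⟨h, a, h1, h2, h3⟩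
      · exact ⟨W', h1, (isColorfulWord_iff (by omega) _).2 h2⟩
      · exact (inter_not_cut hp hinj hK hne h a h1 h2 h3).elim
    · rintro ⟨W', hsub, hW'⟩
      rw [isColorfulWord_iff (by omega)] at hW'
      obtain ⟨g, hg⟩ := List.sublist_iff_exists_orderEmbedding_getElem?_eq.1 hsub
      have hgm : ∀ j < W'.length, g j < W.length := by
        intro j hj
        by_contra hcon
        have := hg j
        rw [List.getElem?_eq_getElem hj, List.getElem?_eq_none (not_lt.1 hcon)] at this
        simp at this
      have hlen : (W'.length : ℝ) ≤ W.length := by exact_mod_cast hsub.length_le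
      have hne := blockWord_inter hσ hW'
        (hp.comp (g := g) (fun i j hij _ => g.strictMono hij) hgm)
        (lt_of_le_of_lt (mul_le_mul_of_nonneg_left hlen (by positivity)) hK')
      refine hne.mono (Set.iInter₂_mono fun i _ => convexHull_mono ?_)
      intro x hx
      simp only [colorClass, coe_image, Set.mem_image, coe_filter, mem_range,
        Set.mem_ofPred_eq] at hx ⊢
      obtain ⟨j, ⟨hj, hji⟩, rfl⟩ := hx
      exact ⟨g j, ⟨hgm j hj, by rw [← hg j, hji]⟩, rfl⟩

/-! ### Determinants and the three-term Plücker relation -/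

/-- The determinant of the matrix with rows `X 0, …, X d`; the other terms of the sequence are
irrelevant. -/
noncomputable def dt {d : ℕ} (X : ℕ → Fin (d + 1) → ℝ) : ℝ :=
  Matrix.det (Matrix.of fun p : Fin (d + 1) => X p)

theorem dt_congr {d : ℕ} {X Y : ℕ → Fin (d + 1) → ℝ} (h : ∀ p ≤ d, X p = Y p) : dt X = dt Y := by
  unfold dt
  congr 2
  funext p
  exact h p (Nat.lt_succ_iff.1 p.2)

/-- The bracket `[x y]`: the determinant of the rows `E 0, …, E d` with the rows `k` and `k + 1`
replaced by `x` and `y`. -/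
noncomputable def br {d : ℕ} (k : ℕ) (E : ℕ → Fin (d + 1) → ℝ) (x y : Fin (d + 1) → ℝ) : ℝ :=
  dt (fun p => if p = k then x else if p = k + 1 then y else E p)

/-- Cramer's rule: the expansion of `x` in terms of the rows of `A`, cleared of denominators. -/
theorem cramer_rows {n : ℕ} (A : Matrix (Fin n) (Fin n) ℝ) (x : Fin n → ℝ) :
    A.det • x = ∑ p, (A.updateRow p x).det • A p := by
  have h := Matrix.mulVec_cramer A.transpose x
  rw [Matrix.det_transpose] at h
  rw [← h]
  funext c
  simp only [Matrix.mulVec, dotProduct, Matrix.transpose_apply, Finset.sum_apply, Pi.smul_apply,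
    smul_eq_mul, Matrix.cramer_transpose_apply]
  exact Finset.sum_congr rfl fun p _ => mul_comm _ _

theorem br_eq_updateRow {d : ℕ} (k : ℕ) (hk : k < d) (E : ℕ → Fin (d + 1) → ℝ)
    (x y : Fin (d + 1) → ℝ) :
    br k E x y = (((Matrix.of fun p : Fin (d + 1) => E p).updateRow ⟨k, by omega⟩ x).updateRow
      ⟨k + 1, by omega⟩ y).det := by
  unfold br dt
  congr 1
  funext p c
  simp only [Matrix.updateRow_apply, Matrix.of_apply, Fin.ext_iff]
  split_ifs <;> first | rfl | omega

/-- The three-term Plücker relation `[aj][ib] = [ai][jb] + [ab][ij]`. The linear functional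
`[· b]` vanishes at the fixed rows, so applying it to the expansion of `i` in the rows of the matrix
with determinant `[aj]` leaves two terms. -/
theorem pluecker {d : ℕ} (k : ℕ) (hk : k < d) (E : ℕ → Fin (d + 1) → ℝ)
    (a i j b : Fin (d + 1) → ℝ) :
    br k E a j * br k E i b = br k E a i * br k E j b + br k E a b * br k E i j := by
  simp only [br_eq_updateRow k hk]
  set A : Matrix (Fin (d + 1)) (Fin (d + 1)) ℝ := Matrix.of fun p : Fin (d + 1) => E p
  set u : Fin (d + 1) := ⟨k, by omega⟩
  set v : Fin (d + 1) := ⟨k + 1, by omega⟩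
  have huv : u ≠ v := by simp [u, v, Fin.ext_iff]
  set L : (Fin (d + 1) → ℝ) →ₗ[ℝ] ℝ :=
    (Matrix.detRowAlternating (n := Fin (d + 1)) (R := ℝ)).toMultilinearMap.toLinearMap
      (A.updateRow v b) u with hL
  have hLx : ∀ x, L x = ((A.updateRow u x).updateRow v b).det := by
    intro x
    rw [Matrix.updateRow_comm _ huv]
    rfl
  have h := congrArg L (cramer_rows ((A.updateRow u a).updateRow v j) i)
  rw [map_smul, map_sum, smul_eq_mul, hLx] at h
  rw [h, ← Finset.add_sum_erase _ _ (mem_univ u), ← Finset.add_sum_erase _ _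
    (mem_erase.2 ⟨huv.symm, mem_univ v⟩), Finset.sum_eq_zero, add_zero]
  · rw [map_smul, map_smul, smul_eq_mul, smul_eq_mul, Matrix.updateRow_ne huv,
      Matrix.updateRow_self, Matrix.updateRow_self, hLx, hLx, Matrix.updateRow_idem,
      Matrix.updateRow_comm _ huv.symm, Matrix.updateRow_idem]
    ring
  · intro p hp
    rw [mem_erase, mem_erase] at hp
    rw [map_smul, Matrix.updateRow_ne hp.1, Matrix.updateRow_ne hp.2.1, hLx]
    rw [Matrix.det_zero_of_row_eq (M := (A.updateRow u (A p)).updateRow v b) hp.2.1.symm, smul_zero]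
    rw [Matrix.updateRow_ne huv, Matrix.updateRow_self, Matrix.updateRow_ne hp.1,
      Matrix.updateRow_ne hp.2.1]

/-- The contradiction behind `all_good` for five points, with `pij` standing for the bracket
`[ij]`. The hypotheses `e1`, `e2`, `e3` are Plücker relations. -/
theorem good_arith {p12 p13 p14 p15 p23 p24 p25 p34 p35 p45 : ℝ}
    (h14 : 0 < p14) (h15 : 0 < p15) (h23 : 0 < p23)
    (h24 : 0 < p24) (h25 : 0 < p25) (h34 : 0 < p34)
    (e1 : p13 * p24 = p12 * p34 + p14 * p23) (e2 : p24 * p35 = p23 * p45 + p25 * p34)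
    (e3 : p14 * p25 = p12 * p45 + p15 * p24)
    (g1 : p13 * p24 < 2 * (p12 * p34)) (g2 : p24 * p35 < 2 * (p23 * p45)) : False := by
  have a1 : p14 * p23 < p12 * p34 := by linarith
  have a2 : p25 * p34 < p23 * p45 := by linarith
  have a3 : (p14 * p23) * (p25 * p34) < (p12 * p34) * (p23 * p45) :=
    mul_lt_mul'' a1 a2 (by positivity) (by positivity)
  have a4 : (p12 * p45) * (p23 * p34) < (p14 * p25) * (p23 * p34) := by
    apply mul_lt_mul_of_pos_right _ (by positivity)
    rw [e3]
    have := mul_pos h15 h24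
    linarith
  linarith

/-- The cross-ratio condition `2 [x₀ x₁][x₂ x₃] ≤ [x₀ x₂][x₁ x₃]` for the four points
`X k, …, X (k + 3)`, the remaining points of `X 0, …, X (d + 2)` serving as the fixed rows. -/
def Good {d : ℕ} (k : ℕ) (X : ℕ → Fin (d + 1) → ℝ) : Prop :=
  2 * (br k (fun p => if p < k then X p else X (p + 2)) (X k) (X (k + 1)) *
      br k (fun p => if p < k then X p else X (p + 2)) (X (k + 2)) (X (k + 3))) ≤
    br k (fun p => if p < k then X p else X (p + 2)) (X k) (X (k + 2)) *
      br k (fun p => if p < k then X p else X (p + 2)) (X (k + 1)) (X (k + 3))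

theorem Good.congr {d : ℕ} {k : ℕ} (hk : k < d) {X Y : ℕ → Fin (d + 1) → ℝ}
    (h : ∀ p ≤ d + 2, X p = Y p) (hX : Good k X) : Good k Y := by
  have hb : ∀ x y, br k (fun p => if p < k then X p else X (p + 2)) x y =
      br k (fun p => if p < k then Y p else Y (p + 2)) x y := by
    intro x y
    apply dt_congr
    intro p hp
    dsimp only
    rw [h p (by omega), h (p + 2) (by omega)]
  unfold Good at hX ⊢
  simp only [hb] at hX
  rw [← h k (by omega), ← h (k + 1) (by omega), ← h (k + 2) (by omega), ← h (k + 3) (by omega)]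
  exact hX

/-- If all determinants of increasing tuples have the same sign, the condition `Good k` cannot fail
for all increasing tuples: it would fail for the two 4-tuples of consecutive points among
`Y k, …, Y (k + 4)`, with the same fixed rows. -/
theorem all_good {d M : ℕ} (hM : d + 4 ≤ M) (Y : ℕ → Fin (d + 1) → ℝ) (ε : ℝ)
    (hpos : ∀ s : ℕ → ℕ, (∀ p < d, s p < s (p + 1)) → s d < M → 0 < ε * dt (fun p => Y (s p)))
    {k : ℕ} (hk : k < d)
    (hbad : ∀ s : ℕ → ℕ, StrictMono s → s (d + 2) < M → ¬ Good k (fun p => Y (s p))) : False := by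
  have hε : 0 < ε * ε := by
    rcases eq_or_ne ε 0 with h | h
    · have := hpos id (fun p _ => Nat.lt_succ_self p) (by simp only [id]; omega)
      simp [h] at this
    · exact mul_self_pos.2 h
  have h1 := hbad (fun p => if p < k + 4 then p else p + 1)
    (strictMono_nat_of_lt_succ fun p => by split_ifs <;> omega) (by split_ifs <;> omega)
  have h2 := hbad (fun p => if p < k then p else p + 1)
    (strictMono_nat_of_lt_succ fun p => by split_ifs <;> omega) (by split_ifs <;> omega)
  -- the fixed rows in both cases
  set E : ℕ → Fin (d + 1) → ℝ := fun p => if p < k then Y p else Y (p + 3) with hE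
  have hE1 : (fun p => if p < k then Y (if p < k + 4 then p else p + 1) else
      Y (if p + 2 < k + 4 then p + 2 else p + 2 + 1)) = fun p => 
      if p = k ∨ p = k + 1 then Y (p + 2) else E p := by
    funext p
    simp only [hE]
    split_ifs <;> first | rfl | omega
  have hE2 : (fun p => if p < k then Y (if p < k then p else p + 1) else
      Y (if p + 2 < k then p + 2 else p + 2 + 1)) = E := by
    funext p
    simp only [hE]
    split_ifs <;> first | rfl | omega
  have hbr : ∀ x y, br k (fun p => if p = k ∨ p = k + 1 then Y (p + 2) else E p) x y
      = br k E x y := by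
    intro x y
    apply dt_congr
    intro p _
    by_cases h1 : p = k
    · simp [h1]
    · by_cases h2 : p = k + 1
      · simp [h2]
      · simp [h1, h2]
  have hp : ∀ i j, i < j → j < 5 → 0 < ε * br k E (Y (k + i)) (Y (k + j)) := by
    intro i j hij hj
    have := hpos (fun p => if p = k then k + i else if p = k + 1 then k + j else
      if p < k then p else p + 3) (fun p hp => by split_ifs <;> omega)
      (by split_ifs <;> omega)
    convert this using 2
    apply dt_congr
    intro p _
    simp only [hE]
    split_ifs <;> rfl
  unfold Good at h1 h2
  simp only [hE1, hE2, hbr, not_le] at h1 h2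
  simp only [show k < k + 4 by omega, show k + 1 < k + 4 by omega, show k + 2 < k + 4 by omega,
    show k + 3 < k + 4 by omega, if_true] at h1
  simp only [show ¬ k < k by omega, show ¬ k + 1 < k by omega, show ¬ k + 2 < k by omega,
    show ¬ k + 3 < k by omega, if_false] at h2
  have q := fun a i j b => pluecker k hk E (Y (k + a)) (Y (k + i)) (Y (k + j)) (Y (k + b))
  have q' : ∀ a i j b, (ε * br k E (Y (k + a)) (Y (k + j))) * (ε * br k E (Y (k + i)) (Y (k + b)))
      = (ε * br k E (Y (k + a)) (Y (k + i))) * (ε * br k E (Y (k + j)) (Y (k + b))) +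
      (ε * br k E (Y (k + a)) (Y (k + b))) * (ε * br k E (Y (k + i)) (Y (k + j))) := by
    intro a i j b
    linear_combination (ε * ε) * q a i j b
  refine good_arith (hp 0 3 (by omega) (by omega))
    (hp 0 4 (by omega) (by omega)) (hp 1 2 (by omega) (by omega)) (hp 1 3 (by omega) (by omega))
    (hp 1 4 (by omega) (by omega)) (hp 2 3 (by omega) (by omega))
    (q' 0 1 2 3) (q' 1 2 3 4) (q' 0 1 3 4) ?_ ?_
  · have := mul_lt_mul_of_pos_left h1 hε
    simp only [add_zero]
    linarith
  · have := mul_lt_mul_of_pos_left h2 hε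
    linarith

/-- The functional number `k` has as value at `x` the determinant with rows `Y 0, …, Y (k - 1)`,
`x`, `Y (M' + k + 1), …, Y (M' + d)`, up to the common sign `ε`. For points between these two groups
of rows, `Good k` becomes the growth by the factor `2` of the ratio of functionals `k + 1`
and `k`. -/
theorem exists_functionals {d M M' : ℕ} (hM : M = M' + d + 1) (Y : ℕ → Fin (d + 1) → ℝ) (ε : ℝ)
    (hpos : ∀ s : ℕ → ℕ, (∀ p < d, s p < s (p + 1)) → s d < M → 0 < ε * dt (fun p => Y (s p)))
    (hgood : ∀ k < d, ∀ s : ℕ → ℕ, (∀ p < d + 2, s p < s (p + 1)) → s (d + 2) < M →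
      Good k (fun p => Y (s p))) :
    ∃ f : ℕ → ((Fin (d + 1) → ℝ) →ₗ[ℝ] ℝ), (∀ k ≤ d, ∀ i, d ≤ i → i ≤ M' → 0 < f k (Y i)) ∧
      ∀ k < d, ∀ i j, d ≤ i → i < j → j ≤ M' →
        2 * (f (k + 1) (Y i) * f k (Y j)) ≤ f (k + 1) (Y j) * f k (Y i) := by
  let E : ℕ → ℕ → Fin (d + 1) → ℝ := fun k p => Y (if p < k then p else M' + p)
  let f : ℕ → ((Fin (d + 1) → ℝ) →ₗ[ℝ] ℝ) := fun k => if h : k < d + 1 then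
    ε • (Matrix.detRowAlternating (n := Fin (d + 1)) (R := ℝ)).toMultilinearMap.toLinearMap
      (fun p => E k p) ⟨k, h⟩ else 0
  have hf : ∀ k ≤ d, ∀ x, f k x = ε * dt (fun p => if p = k then x else E k p) := by
    intro k hk x
    simp only [f, dif_pos (Nat.lt_succ_of_le hk), LinearMap.smul_apply, smul_eq_mul]
    congr 1
    unfold dt
    change Matrix.det (Function.update _ _ _) = _
    congr 1
    funext p c
    by_cases h : (p : ℕ) = k
    · have : p = ⟨k, Nat.lt_succ_of_le hk⟩ := Fin.ext h
      subst this
      simp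
    · have : p ≠ ⟨k, Nat.lt_succ_of_le hk⟩ := fun h' => h (by rw [h'])
      simp [h, this]
  refine ⟨f, ?_, ?_⟩
  · intro k hk i h1 h2
    rw [hf k hk]
    have := hpos (fun p => if p = k then i else if p < k then p else M' + p)
      (fun p hp => by split_ifs <;> omega)
      (by split_ifs <;> omega)
    convert this using 2
    apply dt_congr
    intro p _
    simp only [E]
    split_ifs <;> rfl
  · intro k hk i j hi hij hj
    have hε : 0 ≤ ε * ε := mul_self_nonneg ε
    -- the four points `k`, `i`, `j`, `M' + k + 1` among the two outer groups of rows
    have := hgood k hk (fun p => if p ≤ k then p else if p = k + 1 then i else if p = k + 2 then j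
      else M' + (p - 2)) (fun p hp => by split_ifs <;> omega)
      (by split_ifs <;> omega)
    unfold Good at this
    have hb : ∀ x y, br k (fun p => if p < k then Y (if p ≤ k then p else if p = k + 1 then i
        else if p = k + 2 then j else M' + (p - 2)) else Y (if p + 2 ≤ k then p + 2 else
        if p + 2 = k + 1 then i else if p + 2 = k + 2 then j else M' + (p + 2 - 2))) x y =
        dt (fun p => if p = k then x else if p = k + 1 then y else E k p) := by
      intro x y
      apply dt_congr
      intro p _
      simp only [E]
      split_ifs <;> first | rfl | omega
    simp only [hb] at this
    simp only [le_refl, if_true, show ¬ k + 1 ≤ k by omega, show ¬ k + 2 ≤ k by omega,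
      show ¬ k + 3 ≤ k by omega, show ¬ k + 3 = k + 1 by omega, show ¬ k + 3 = k + 2 by omega,
      show ¬ k + 2 = k + 1 by omega, show k + 3 - 2 = k + 1 by omega, if_false] at this
    have hA : ∀ z, dt (fun p => if p = k then Y k else if p = k + 1 then z else E k p) =
        dt (fun p => if p = k + 1 then z else E (k + 1) p) := by
      intro z
      apply dt_congr
      intro p _
      simp only [E]
      split_ifs <;> first | rfl | omega | (subst_vars; rfl)
    have hB : ∀ z, dt (fun p => if p = k then z else if p = k + 1 then Y (M' + (k + 1)) else E k p)
        = dt (fun p => if p = k then z else E k p) := by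
      intro z
      apply dt_congr
      intro p _
      simp only [E]
      split_ifs <;> first | rfl | omega | (subst_vars; rfl)
    simp only [hA, hB] at this
    rw [hf k hk.le, hf k hk.le, hf (k + 1) hk, hf (k + 1) hk]
    have h3 := mul_le_mul_of_nonneg_left this hε
    linarith

/-! ### Stretched subsequences and points on the moment curve -/

/-- `d + 1` points of a set in general position have nonzero determinant. -/
theorem dt_hom_ne_zero {d : ℕ} {P : Finset (Pt d)} (hP : GenPos P) (x : ℕ → Pt d)
    (hx : ∀ p ≤ d, x p ∈ P) (hinj : ∀ p ≤ d, ∀ q ≤ d, x p = x q → p = q) :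
    dt (fun p => hom (x p)) ≠ 0 := by
  intro h0
  obtain ⟨v, hv0, hv⟩ := Matrix.exists_vecMul_eq_zero_iff.2 h0
  apply hv0
  set y : Fin (d + 1) → Pt d := fun p => x p with hy
  have hyinj : Function.Injective y := fun p q hpq =>
    Fin.ext (hinj p (Nat.lt_succ_iff.1 p.2) q (Nat.lt_succ_iff.1 q.2) hpq)
  classical
  have hS := hP (univ.image y) (by
    intro z hz
    obtain ⟨p, -, rfl⟩ := mem_image.1 hz
    exact hx p (Nat.lt_succ_iff.1 p.2)) (card_image_le.trans (by simp))
  have hai : AffineIndependent ℝ y :=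
    hS.comp_embedding (⟨fun p => ⟨y p, by simp⟩, fun p q hpq =>
      hyinj (congrArg Subtype.val hpq)⟩ : Fin (d + 1) ↪ ((univ.image y : Finset (Pt d)) : Set (Pt d)))
  rw [affineIndependent_iff] at hai
  funext p
  refine hai univ v ?_ ?_ p (mem_univ p)
  · have := congrFun hv 0
    simpa [Matrix.vecMul, dotProduct, hom] using this
  · funext c
    have := congrFun hv c.succ
    simpa [Matrix.vecMul, dotProduct, hom, hy, Finset.sum_apply] using this

/-- A finite increasing sequence extends to all of `ℕ` by steps of one. -/
theorem exists_extend {n : ℕ} (s : ℕ → ℕ) (hs : ∀ p < n, s p < s (p + 1)) :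
    ∃ s' : ℕ → ℕ, StrictMono s' ∧ (∀ p ≤ n, s' p = s p) ∧ ∀ i, s' (n + i) = s n + i := by
  refine ⟨fun p => if p ≤ n then s p else s n + (p - n), strictMono_nat_of_lt_succ fun p => ?_,
    fun p hp => if_pos hp, fun i => ?_⟩
  · rcases lt_trichotomy p n with h | h | h
    · rw [if_pos h.le, if_pos (Nat.succ_le_of_lt h)]; exact hs p h
    · subst h; simp
    · rw [if_neg (by omega), if_neg (by omega)]; omega
  · rcases Nat.eq_zero_or_pos i with h | h
    · subst h; simp
    · dsimp only; rw [if_neg (by omega)]; omega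

/-- Every large set in general position contains a `K`-stretched sequence of length `m`. Ramsey's
theorem makes the sign of determinants and the truth of `Good k` constant, and `Good k` must be true
by `all_good`. The ratios then grow by the factor `2` at each step, so taking every `Q`-th point,
with `2 ^ Q > K`, gives growth by the factor `K`. -/
theorem exists_stretched (d m : ℕ) (K : ℝ) : ∃ N, ∀ P : Finset (Pt d), GenPos P → N ≤ P.card →
    ∃ p : ℕ → Pt d, (∀ j < m, p j ∈ P) ∧ (∀ i < m, ∀ j < m, p i = p j → i = j) ∧
      Stretched K m p := by
  classical
  obtain ⟨n₀, hn₀⟩ := pow_unbounded_of_one_lt K (one_lt_two (α := ℝ))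
  set Q := n₀ + 1 with hQ
  set M' := d + m * Q + 4 with hM'
  set M := M' + d + 1 with hM
  obtain ⟨N, hN⟩ := ramsey (α := Prop × (Fin d → Prop)) (d + 3) (M + 2)
  refine ⟨N, fun P hP hcard => ?_⟩
  set u : ℕ → Pt d := fun j => if h : j < P.card then (P.equivFin.symm ⟨j, h⟩ : Pt d) else 0 with hu
  have huP : ∀ j < N, u j ∈ P := by
    intro j hj
    simp only [hu, dif_pos (lt_of_lt_of_le hj hcard)]
    exact Subtype.prop _
  have huinj : ∀ i < N, ∀ j < N, u i = u j → i = j := by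
    intro i hi j hj h
    simp only [hu, dif_pos (lt_of_lt_of_le hi hcard), dif_pos (lt_of_lt_of_le hj hcard)] at h
    have := P.equivFin.symm.injective (Subtype.ext h)
    exact congrArg Fin.val this
  obtain ⟨g, hg, hgN, c, hc⟩ := hN fun v =>
    (0 < dt (fun n => hom (u (if h : n < d + 3 then v ⟨n, h⟩ else 0))),
      fun k => Good k (fun n => hom (u (if h : n < d + 3 then v ⟨n, h⟩ else 0))))
  set Y : ℕ → Fin (d + 1) → ℝ := fun p => hom (u (g p)) with hY
  have key : ∀ s : ℕ → ℕ, StrictMono s → s (d + 2) < M + 2 →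
      ((0 < dt (fun p => Y (s p))) ↔ c.1) ∧ ∀ k : Fin d, Good k (fun p => Y (s p)) ↔ c.2 k := by
    intro s hs hsM
    have h := hc s hs (fun k hk => lt_of_le_of_lt (hs.monotone (by omega)) hsM)
    have heq : ∀ p ≤ d + 2, Y (s p) =
        hom (u (if h : p < d + 3 then g (s (⟨p, h⟩ : Fin (d + 3))) else 0)) := by
      intro p hp
      rw [dif_pos (Nat.lt_succ_of_le hp)]
    rw [← h]
    refine ⟨?_, fun k => ⟨Good.congr k.2 heq, Good.congr k.2 fun p hp => (heq p hp).symm⟩⟩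
    rw [dt_congr fun p hp => heq p (by omega)]
  -- the common sign of all determinants of increasing tuples
  set ε : ℝ := if c.1 then 1 else -1 with hε
  have hpos : ∀ s : ℕ → ℕ, (∀ p < d, s p < s (p + 1)) → s d < M →
      0 < ε * dt (fun p => Y (s p)) := by
    intro s hs hsM
    obtain ⟨s', hs', he, hi⟩ := exists_extend s hs
    have hk := (key s' hs' (by rw [hi]; omega)).1
    have hlt : ∀ p ≤ d, s' p < M + 2 := fun p hp => by
      have := hs'.monotone hp
      rw [he d le_rfl] at this
      omega
    rw [dt_congr (Y := fun p => Y (s' p)) fun p hp => by rw [he p hp]]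
    have hne : dt (fun p => Y (s' p)) ≠ 0 := by
      apply dt_hom_ne_zero hP (fun p => u (g (s' p))) (fun p hp => huP _ (hgN _ (hlt p hp)))
      intro p hp q hq h
      exact hs'.injective (hg.injective (huinj _ (hgN _ (hlt p hp)) _ (hgN _ (hlt q hq)) h))
    by_cases hc1 : c.1
    · rw [hε, if_pos hc1, one_mul]; exact hk.2 hc1
    · rw [hε, if_neg hc1]
      have : dt (fun p => Y (s' p)) < 0 := lt_of_le_of_ne (not_lt.1 fun h => hc1 (hk.1 h)) hne
      linarith
  have hgood : ∀ k < d, ∀ s : ℕ → ℕ, (∀ p < d + 2, s p < s (p + 1)) → s (d + 2) < M →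
      Good k (fun p => Y (s p)) := by
    intro k hk
    have hck : c.2 ⟨k, hk⟩ := by
      by_contra hcon
      exact all_good (M := M) (by omega) Y ε hpos hk fun s hs hsM hG =>
        hcon (((key s hs (by omega)).2 ⟨k, hk⟩).1 hG)
    intro s hs hsM
    obtain ⟨s', hs', he, hi⟩ := exists_extend s hs
    refine Good.congr hk (fun p hp => by rw [he p hp]) (((key s' hs' ?_).2 ⟨k, hk⟩).2 hck)
    rw [he _ le_rfl]; omega
  obtain ⟨f, hf1, hf2⟩ := exists_functionals hM Y ε hpos hgood
  have hpow : ∀ k < d, ∀ n i, d ≤ i → i + n ≤ M' →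
      2 ^ n * (f (k + 1) (Y i) * f k (Y (i + n))) ≤ f (k + 1) (Y (i + n)) * f k (Y i) := by
    intro k hk n
    induction n with
    | zero => intro i _ _; simp
    | succ n ih =>
      intro i hi hin
      have h1 := ih i hi (by omega)
      have h2 := hf2 k hk (i + n) (i + (n + 1)) (by omega) (by omega) hin
      have p1 := hf1 k hk.le (i + n) (by omega) (by omega)
      have p2 := hf1 k hk.le i (by omega) (by omega)
      have p3 := hf1 k hk.le (i + (n + 1)) (by omega) (by omega)
      have h3 := mul_le_mul_of_nonneg_right h1 (by positivity : 0 ≤ 2 * f k (Y (i + (n + 1))))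
      have h4 := mul_le_mul_of_nonneg_right h2 p2.le
      refine le_of_mul_le_mul_right ?_ p1
      rw [pow_succ]
      linarith
  have hidx : ∀ j < m, d + j * Q ≤ d + m * Q := fun j hj =>
    Nat.add_le_add_left (Nat.mul_le_mul_right Q hj.le) d
  have hlt : ∀ j < m, g (d + j * Q) < N := fun j hj => hgN _ (by have := hidx j hj; omega)
  refine ⟨fun j => u (g (d + j * Q)), fun j hj => huP _ (hlt j hj), ?_, f, ?_, ?_⟩
  · intro i hi j hj h
    have h1 := hg.injective (huinj _ (hlt i hi) _ (hlt j hj) h)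
    exact Nat.eq_of_mul_eq_mul_right (Nat.succ_pos n₀) (Nat.add_left_cancel h1)
  · intro k hk j hj
    exact hf1 k hk _ (by omega) (by have := hidx j hj; omega)
  · intro k hk i j hij hj
    have h1 := hidx j hj
    have h2 : i * Q + Q ≤ j * Q := by
      have := Nat.mul_le_mul_right Q (Nat.succ_le_of_lt hij)
      rwa [Nat.succ_mul] at this
    have h3 := hpow k hk (j * Q - i * Q) (d + i * Q) (by omega) (by omega)
    rw [show d + i * Q + (j * Q - i * Q) = d + j * Q by omega] at h3
    refine le_trans (mul_le_mul_of_nonneg_right ?_ ?_) h3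
    · exact hn₀.le.trans (pow_le_pow_right₀ one_le_two (by omega))
    · exact (mul_pos (hf1 (k + 1) hk _ (by omega) (by omega))
        (hf1 k hk.le _ (by omega) (by omega))).le

/-- Points on the moment curve are in general position: in an affine dependence of at most `d + 1`
points, the coefficient of one point is isolated by the polynomial of degree at most `d` that
vanishes at the parameters of all the others. -/
theorem exists_genPos {d : ℕ} (hd : 1 ≤ d) (N : ℕ) : ∃ P : Finset (Pt d), GenPos P ∧ N ≤ P.card := by
  classical
  let γ : ℕ → Pt d := fun t i => (t : ℝ) ^ ((i : ℕ) + 1)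
  let z : Fin d := ⟨0, hd⟩
  have hγz : ∀ t, γ t z = t := fun t => by simp [γ, z]
  have hγ : Function.Injective γ := fun s t h => by
    have := congrFun h z
    rw [hγz, hγz] at this
    exact_mod_cast this
  refine ⟨(range N).image γ, ?_, by rw [card_image_of_injective _ hγ, card_range]⟩
  intro S hS hcard
  have hmom : ∀ e ∈ S, ∀ i, e i = (e z) ^ ((i : ℕ) + 1) := by
    intro e he i
    obtain ⟨t, -, rfl⟩ := mem_image.1 (hS he)
    rw [hγz]
  have hext : ∀ e ∈ S, ∀ e' ∈ S, e z = e' z → e = e' := by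
    intro e he e' he' h
    funext i
    rw [hmom e he, hmom e' he', h]
  rw [affineIndependent_iff]
  intro s w hw0 hw1 e he
  -- by `hmom` the parameter of a point is its first coordinate, which exists as `1 ≤ d`
  let q : Polynomial ℝ := ∏ e' ∈ s.erase e, (Polynomial.X - Polynomial.C ((e' : Pt d) z))
  have hdeg : q.natDegree < d + 1 := by
    rw [Polynomial.natDegree_finsetProd_X_sub_C_eq_card]
    have h1 : s.card ≤ S.card := by
      simpa using Finset.card_le_univ s
    rw [card_erase_of_mem he]
    have := card_pos.2 ⟨e, he⟩
    omega
  have hsum : ∑ e' ∈ s, w e' * q.eval ((e' : Pt d) z) = 0 := by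
    simp only [Polynomial.eval_eq_sum_range' hdeg, Finset.mul_sum]
    rw [Finset.sum_comm]
    refine Finset.sum_eq_zero fun i hi => ?_
    have : ∑ e' ∈ s, w e' * ((e' : Pt d) z) ^ i = 0 := by
      rcases i with _ | i
      · simpa using hw0
      · have hid : i < d := by simpa using hi
        have := congrFun hw1 ⟨i, hid⟩
        simp only [Finset.sum_apply, Pi.smul_apply, smul_eq_mul, Pi.zero_apply] at this
        rw [← this]
        exact Finset.sum_congr rfl fun e' _ => by rw [hmom e' e'.2 ⟨i, hid⟩]
    rw [← mul_zero (q.coeff i), ← this, Finset.mul_sum]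
    exact Finset.sum_congr rfl fun e' _ => by ring
  rw [Finset.sum_eq_single_of_mem e he] at hsum
  · refine (mul_eq_zero.1 hsum).resolve_right ?_
    rw [Polynomial.eval_prod]
    refine Finset.prod_ne_zero_iff.2 ?_
    intro e' he' h
    rw [Polynomial.eval_sub, Polynomial.eval_X, Polynomial.eval_C, sub_eq_zero] at h
    exact (mem_erase.1 he').1 (Subtype.ext (hext e e.2 e' e'.2 h)).symm
  · intro e' he' hne
    rw [Polynomial.eval_prod, Finset.prod_eq_zero (mem_erase.2 ⟨hne, he'⟩), mul_zero]
    simp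

/-! ### The equivalence -/

/-- A word representing `Δ` is used to color a stretched sequence found in the given point set. -/
theorem weaklyTverberg_of_colorfullyRep {d n : ℕ} {Δ : Set (Finset (Fin n))}
    (h : ColorfullyRep d Δ) : WeaklyTverberg d Δ := by
  obtain ⟨W, hW⟩ := h
  obtain ⟨N, hN⟩ := exists_stretched d W.length
    (max ((W.length : ℝ) ^ 2) ((4 * d + 2) * (W.length : ℝ)) + 1)
  refine ⟨N, fun P hP hcard => ?_⟩
  obtain ⟨p, hpP, hinj, hp⟩ := hN P hP hcard
  refine ⟨colorClass p W, ?_, ?_, ?_⟩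
  · intro i x hx
    simp only [colorClass, mem_image, mem_filter, mem_range] at hx
    obtain ⟨j, ⟨hj, -⟩, rfl⟩ := hx
    exact hpP j hj
  · intro i j hij
    rw [Finset.disjoint_left]
    intro x hx hx'
    simp only [colorClass, mem_image, mem_filter, mem_range] at hx hx'
    obtain ⟨s, ⟨hs, hsi⟩, rfl⟩ := hx
    obtain ⟨t, ⟨ht, htj⟩, hst⟩ := hx'
    rw [hinj t ht s hs hst, hsi] at htj
    exact hij (Option.some_injective _ htj)
  · intro σ
    rw [hW σ]
    exact stretched_inter_iff hp hinj (lt_of_le_of_lt (le_max_left _ _) (lt_add_one _))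
      (lt_of_le_of_lt (le_max_right _ _) (lt_add_one _))

/-- The sets inducing `Δ` inside a stretched sequence of length `C` are the color classes of the
subsequence of points they contain, so the word of colors along this subsequence represents `Δ`. -/
theorem colorfullyRep_of_weaklyTverberg {d n : ℕ} (hd : 1 ≤ d) {Δ : Set (Finset (Fin n))}
    (h : WeaklyTverberg d Δ) : ColorfullyRep d Δ := by
  classical
  obtain ⟨C, hC⟩ := h
  set K : ℝ := max ((C : ℝ) ^ 2) ((4 * d + 2) * (C : ℝ)) + 1 with hK
  obtain ⟨N, hN⟩ := exists_stretched d C K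
  obtain ⟨P₀, hP₀, hcard⟩ := exists_genPos hd N
  obtain ⟨p, hpP, hinj, hp⟩ := hN P₀ hP₀ hcard
  have hPsub : (range C).image p ⊆ P₀ := by
    intro x hx
    obtain ⟨j, hj, rfl⟩ := mem_image.1 hx
    exact hpP j (mem_range.1 hj)
  obtain ⟨Q, hQP, hQd, hQ⟩ := hC ((range C).image p) (fun S hS => hP₀ S (hS.trans hPsub)) (by
    rw [card_image_of_injOn, card_range]
    intro i hi j hj hij
    exact hinj i (by simpa using hi) j (by simpa using hj) hij)
  set S := (range C).filter (fun j => ∃ i, p j ∈ Q i) with hS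
  have hSC : ∀ t : Fin S.card, S.orderEmbOfFin rfl t ∈ S := fun t => S.orderEmbOfFin_mem rfl t
  have hex : ∀ t : Fin S.card, ∃ i, p (S.orderEmbOfFin rfl t) ∈ Q i := fun t =>
    (mem_filter.1 (hSC t)).2
  choose col hcol using hex
  set g : ℕ → ℕ := fun t => if h : t < S.card then S.orderEmbOfFin rfl ⟨t, h⟩ else 0 with hg
  have hgt : ∀ t (ht : t < S.card), g t = S.orderEmbOfFin rfl ⟨t, ht⟩ := fun t ht => dif_pos ht
  have hgC : ∀ t < S.card, g t < C := fun t ht => by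
    rw [hgt t ht]; exact mem_range.1 (mem_filter.1 (hSC _)).1
  have hlen : (List.ofFn col).length = S.card := List.length_ofFn
  have hlenC : ((List.ofFn col).length : ℝ) ≤ C := by
    rw [hlen]
    exact_mod_cast (card_filter_le _ _).trans (card_range C).le
  have hp' : Stretched K (List.ofFn col).length (fun t => p (g t)) := by
    rw [hlen]
    refine hp.comp (fun i j hij hj => ?_) hgC
    rw [hgt i (hij.trans hj), hgt j hj]
    exact (S.orderEmbOfFin rfl).strictMono hij
  have hinj' : ∀ i < (List.ofFn col).length, ∀ j < (List.ofFn col).length,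
      p (g i) = p (g j) → i = j := by
    rw [hlen]
    intro i hi j hj hij
    have := hinj _ (hgC i hi) _ (hgC j hj) hij
    rw [hgt i hi, hgt j hj] at this
    exact congrArg Fin.val ((S.orderEmbOfFin rfl).injective this)
  have hclass : ∀ i, colorClass (fun t => p (g t)) (List.ofFn col) i = Q i := by
    intro i
    ext x
    simp only [colorClass, mem_image, mem_filter, mem_range, hlen]
    constructor
    · rintro ⟨t, ⟨ht, hti⟩, rfl⟩
      have h1 := hcol ⟨t, ht⟩
      rw [List.getElem?_ofFn, dif_pos ht, Option.some_inj] at hti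
      rw [hgt t ht, ← hti]
      exact h1
    · intro hx
      obtain ⟨j, hj, rfl⟩ := mem_image.1 (hQP i hx)
      have hjS : j ∈ S := mem_filter.2 ⟨hj, i, hx⟩
      obtain ⟨t, rfl⟩ : j ∈ Set.range (S.orderEmbOfFin rfl) := by
        rw [S.range_orderEmbOfFin]; exact hjS
      refine ⟨t, ⟨t.2, ?_⟩, by rw [hgt t t.2]⟩
      rw [List.getElem?_ofFn, dif_pos t.2, Option.some_inj]
      by_contra hne
      exact Finset.disjoint_left.1 (hQd _ _ hne) (hcol t) hx
  refine ⟨List.ofFn col, fun σ => ?_⟩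
  rw [← hQ σ, ← stretched_inter_iff hp' hinj' ?_ ?_]
  · simp only [hclass]
  · have : ((List.ofFn col).length : ℝ) ^ 2 ≤ (C : ℝ) ^ 2 :=
      pow_le_pow_left₀ (Nat.cast_nonneg _) hlenC 2
    exact lt_of_le_of_lt (this.trans (le_max_left _ _)) (lt_add_one _)
  · have : (4 * d + 2) * ((List.ofFn col).length : ℝ) ≤ (4 * d + 2) * (C : ℝ) :=
      mul_le_mul_of_nonneg_left hlenC (by positivity)
    exact lt_of_le_of_lt (this.trans (le_max_right _ _)) (lt_add_one _)

theorem statement1 (d n : ℕ) (hd : 1 ≤ d) (Δ : Set (Finset (Fin n)))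
    (hΔ : ∀ σ ∈ Δ, ∀ τ ⊆ σ, τ ∈ Δ) :
    WeaklyTverberg d Δ ↔ ColorfullyRep d Δ :=
  ⟨colorfullyRep_of_weaklyTverberg hd, weaklyTverberg_of_colorfullyRep⟩
end

section
/- Every simplicial complex Δ on vertex set [n] with exactly m facets (m ≥ 1) is weakly (m+1)-Tverberg. -/
/-!
Let `d = m + 1`. A large point set in general position contains, for each facet
`σ_k`, a large block `A k` such that no point of `ℝ^d` lies in all the `m` hulls
`conv (⋃_{k ≠ j} A k)`. Inside each block a weak form of Tverberg's theorem (`weak_tverberg`: Helly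
gives a centerpoint, and Carathéodory lets one peel off simplices around it) provides disjoint sets
`A' k 1, …, A' k n` with a common point in their hulls. Put `Q i = ⋃_{k : i ∈ σ_k} A' k i`. If
`σ ⊆ σ_k`, the hulls of the `Q i`, `i ∈ σ`, share the Tverberg point of block `k`. If `σ` is not a
face, then for every `j` some `i ∈ σ` is missing from `σ_j`, so `Q i ⊆ ⋃_{k ≠ j} A k`, and a common
point of the hulls of the `Q i` would lie in all the forbidden hulls.

The blocks come from Ramsey's theorem, applied to the homogeneous coordinates `(1, x) ∈ ℝ^D`,
`D = d + 1`. One may assume that all `D × D` minors, in increasing order, are positive. Fixing all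
but two consecutive columns, the minor becomes a bracket `[u, w]` obeying the three-term Plücker
relation, and among any five points in order one of the two consecutive cross-ratios
`[0,2][1,3] / [0,1][2,3]`, `[1,3][2,4] / [1,2][3,4]` is at least `2` (`exists_crossRatio`). So a
second use of Ramsey makes every such cross-ratio at least `2` (`exists_homogeneous`).

For `l < D` let `F_l` be the linear form `u ↦ det (x_0, …, x_{l-1}, u, x_{Y+l+1}, …, x_{Y+D-1})`
(`gapForm`). It is positive on the middle points of the sequence, and the cross-ratio bound says
that `F_{l+1} / F_l` at least doubles at each step along the sequence. Hence, after scaling the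
`F_l` by suitable `τ_l > 0`, the forms take turns being dominant: on the `k`-th of `m` blocks every
`f_j = τ_j F_j` with `j ≠ k` is less than `1 / m` times `∑_l f_l` (`exists_scaling`). The forms
`ℓ_j = ∑_l f_l - m f_j` sum to zero, while `ℓ_j > 0` on `A k` for all `k ≠ j`; a point in all
hulls `conv (⋃_{k ≠ j} A k)` would make all the `ℓ_j` positive.
-/

open Finset

/-! ### Ramsey's theorem -/

/-- Ramsey's theorem for two-colorings of the `r`-element subsets of a finite set of naturals. -/
theorem ramsey_set (r : ℕ) : ∀ n : ℕ, ∃ N : ℕ, ∀ (χ : Finset ℕ → Prop) (S : Finset ℕ),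
    N ≤ S.card → ∃ T ⊆ S, T.card = n ∧
      ((∀ U ⊆ T, U.card = r → χ U) ∨ (∀ U ⊆ T, U.card = r → ¬ χ U)) := by
  classical
  induction r with
  | zero =>
    intro n
    refine ⟨n, fun χ S hS => ?_⟩
    obtain ⟨T, hT, hc⟩ := exists_subset_card_eq hS
    refine ⟨T, hT, hc, ?_⟩
    by_cases h : χ ∅
    · left; intro U _ hU; rw [card_eq_zero] at hU; rwa [hU]
    · right; intro U _ hU; rw [card_eq_zero] at hU; rwa [hU]
  | succ r ih =>
    -- Erdős–Rado: pass to a set where the color of an `(r+1)`-set depends only on its minimum.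
    have key : ∀ l : ℕ, ∃ N : ℕ, ∀ (χ : Finset ℕ → Prop) (S : Finset ℕ), N ≤ S.card →
        ∃ T ⊆ S, T.card = l ∧ ∃ β : ℕ → Prop, ∀ a ∈ T, ∀ U ⊆ T, U.card = r →
          (∀ u ∈ U, a < u) → (χ (insert a U) ↔ β a) := by
      intro l
      induction l with
      | zero =>
        exact ⟨0, fun χ S _ => ⟨∅, by simp, rfl, fun _ => True, by simp⟩⟩
      | succ l ihl =>
        obtain ⟨N₁, h₁⟩ := ihl
        obtain ⟨N₂, h₂⟩ := ih N₁
        refine ⟨N₂ + 1, fun χ S hS => ?_⟩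
        have hne : S.Nonempty := card_pos.1 (by omega)
        set a := S.min' hne with ha
        have haS : a ∈ S := S.min'_mem hne
        obtain ⟨T₂, hT₂, hc₂, hmono⟩ := h₂ (fun U => χ (insert a U)) (S.erase a)
          (by rw [card_erase_of_mem haS]; omega)
        have hlt : ∀ u ∈ T₂, a < u := fun u hu => by
          have h := hT₂ hu
          rw [mem_erase] at h
          exact lt_of_le_of_ne (S.min'_le u h.2) (Ne.symm h.1)
        obtain ⟨T₁, hT₁, hc₁, β, hβ⟩ := h₁ χ T₂ hc₂.ge
        have haT : a ∉ T₁ := fun h => lt_irrefl _ (hlt a (hT₁ h))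
        obtain ⟨b, hb⟩ : ∃ b : Prop, ∀ U ⊆ T₂, U.card = r → (χ (insert a U) ↔ b) := by
          rcases hmono with h | h
          · exact ⟨True, fun U h1 h2 => by simpa using h U h1 h2⟩
          · exact ⟨False, fun U h1 h2 => by simpa using h U h1 h2⟩
        refine ⟨insert a T₁, ?_, by rw [card_insert_of_notMem haT, hc₁],
          fun x => if x = a then b else β x, ?_⟩
        · intro x hx
          rcases mem_insert.1 hx with rfl | hx
          · exact haS
          · exact mem_of_mem_erase (hT₂ (hT₁ hx))
        · intro x hx U hU hUc hxU
          have hU₁ : U ⊆ T₁ := by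
            intro u hu
            rcases mem_insert.1 (hU hu) with rfl | h
            · exfalso
              have := hxU _ hu
              rcases mem_insert.1 hx with h | h
              · omega
              · have := hlt x (hT₁ h); omega
            · exact h
          by_cases hxa : x = a
          · simp only [hxa, if_true]
            exact hb U (hU₁.trans hT₁) hUc
          · simp only [hxa, if_false]
            exact hβ x ((mem_insert.1 hx).resolve_left hxa) U hU₁ hUc hxU
    intro n
    obtain ⟨N, hN⟩ := key (2 * n)
    refine ⟨N, fun χ S hS => ?_⟩
    obtain ⟨T, hTS, hTc, β, hβ⟩ := hN χ S hS
    have hsplit := card_filter_add_card_filter_not (s := T) β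
    have fin : ∀ T' ⊆ T, ∀ U ⊆ T', U.card = r + 1 → ∃ a ∈ T', (χ U ↔ β a) := by
      intro T' hT' U hU hUc
      have hne : U.Nonempty := card_pos.1 (by omega)
      have hm := U.min'_mem hne
      refine ⟨U.min' hne, hU hm, ?_⟩
      rw [← hβ _ (hT' (hU hm)) (U.erase (U.min' hne))
        ((erase_subset _ _).trans (hU.trans hT')) (by rw [card_erase_of_mem hm]; omega),
        insert_erase hm]
      intro u hu
      rw [mem_erase] at hu
      exact lt_of_le_of_ne (U.min'_le u hu.2) (Ne.symm hu.1)
    rcases le_or_gt n (T.filter β).card with h | h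
    · obtain ⟨T', hT', hc⟩ := exists_subset_card_eq h
      refine ⟨T', (hT'.trans (filter_subset _ _)).trans hTS, hc, Or.inl fun U hU hUc => ?_⟩
      obtain ⟨a, haT, h⟩ := fin T' (hT'.trans (filter_subset _ _)) U hU hUc
      exact h.2 (mem_filter.1 (hT' haT)).2
    · obtain ⟨T', hT', hc⟩ := exists_subset_card_eq
        (show n ≤ (T.filter fun a => ¬ β a).card by omega)
      refine ⟨T', (hT'.trans (filter_subset _ _)).trans hTS, hc, Or.inr fun U hU hUc => ?_⟩
      obtain ⟨a, haT, h⟩ := fin T' (hT'.trans (filter_subset _ _)) U hU hUc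
      exact fun hχ => (mem_filter.1 (hT' haT)).2 (h.1 hχ)

/-- Ramsey's theorem for properties of increasing `r`-tuples: a sequence of length `N` has a
subsequence `g` of length `n` all of whose `r`-subsequences have the property, or none has. -/
theorem ramsey_seq (r n : ℕ) : ∃ N : ℕ, ∀ φ : (Fin r → ℕ) → Prop,
    ∃ g : ℕ → ℕ, (∀ i < n, g i < N) ∧ (∀ i j, i < j → j < n → g i < g j) ∧
      ((∀ e : Fin r → ℕ, StrictMono e → (∀ i, e i < n) → φ (g ∘ e)) ∨
        ∀ e : Fin r → ℕ, StrictMono e → (∀ i, e i < n) → ¬ φ (g ∘ e)) := by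
  classical
  obtain ⟨N, hN⟩ := ramsey_set r n
  refine ⟨N, fun φ => ?_⟩
  obtain ⟨T, hT, hTc, hmono⟩ := hN (fun U => ∃ h : U.card = r, φ (U.orderEmbOfFin h)) (range N)
    (by simp)
  let g : ℕ → ℕ := fun i => if h : i < n then T.orderEmbOfFin hTc ⟨i, h⟩ else 0
  have hgT : ∀ i < n, g i ∈ T := fun i hi => by simp [g, hi]
  have hg : ∀ i j, i < j → j < n → g i < g j := fun i j hij hj => by
    simp [g, hj, hij.trans hj, hij]
  refine ⟨g, fun i hi => mem_range.1 (hT (hgT i hi)), hg, ?_⟩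
  have aux : ∀ e : Fin r → ℕ, StrictMono e → (∀ i, e i < n) →
      ∃ U ⊆ T, ∃ h : U.card = r, g ∘ e = U.orderEmbOfFin h := by
    intro e he hen
    have hmon : StrictMono (g ∘ e) := fun i j hij => hg _ _ (he hij) (hen j)
    have hc : (univ.image (g ∘ e)).card = r := by
      rw [card_image_of_injective _ hmon.injective, card_univ, Fintype.card_fin]
    refine ⟨univ.image (g ∘ e), ?_, hc, orderEmbOfFin_unique hc (by simp) hmon⟩
    intro x hx
    obtain ⟨i, -, rfl⟩ := mem_image.1 hx
    exact hgT _ (hen i)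
  refine hmono.imp (fun H e he hen => ?_) (fun H e he hen => ?_)
  · obtain ⟨U, hU, h, heq⟩ := aux e he hen
    rw [heq]
    exact (H U hU h).2
  · obtain ⟨U, hU, h, heq⟩ := aux e he hen
    rw [heq]
    exact fun hφ => H U hU h ⟨h, hφ⟩

/-- Ramsey's theorem for `k` properties of increasing `r`-tuples at once. -/
theorem ramsey_many (r k n : ℕ) : ∃ N : ℕ, ∀ φ : ℕ → (Fin r → ℕ) → Prop,
    ∃ g : ℕ → ℕ, (∀ i < n, g i < N) ∧ (∀ i j, i < j → j < n → g i < g j) ∧ ∀ a < k,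
      ((∀ e : Fin r → ℕ, StrictMono e → (∀ i, e i < n) → φ a (g ∘ e)) ∨
        ∀ e : Fin r → ℕ, StrictMono e → (∀ i, e i < n) → ¬ φ a (g ∘ e)) := by
  induction k with
  | zero => exact ⟨n, fun φ => ⟨id, by simp, by simp; omega, by simp⟩⟩
  | succ k ih =>
    obtain ⟨N₁, h₁⟩ := ih
    obtain ⟨N, hN⟩ := ramsey_seq r N₁
    refine ⟨N, fun φ => ?_⟩
    obtain ⟨g, hgN, hg, hk⟩ := hN (φ k)
    obtain ⟨g', hgN', hg', hk'⟩ := h₁ (fun a e => φ a (g ∘ e))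
    have comp : ∀ e : Fin r → ℕ, StrictMono e → (∀ i, e i < n) →
        StrictMono (g' ∘ e) ∧ ∀ i, (g' ∘ e) i < N₁ := fun e he hen =>
      ⟨fun i j hij => hg' _ _ (he hij) (hen j), fun i => hgN' _ (hen i)⟩
    refine ⟨g ∘ g', fun i hi => hgN _ (hgN' i hi),
      fun i j hij hj => hg _ _ (hg' i j hij hj) (hgN' j hj), fun a ha => ?_⟩
    rcases Nat.lt_succ_iff_lt_or_eq.1 ha with ha | rfl
    · exact hk' a ha
    · exact hk.imp (fun H e he hen => H _ (comp e he hen).1 (comp e he hen).2)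
        (fun H e he hen => H _ (comp e he hen).1 (comp e he hen).2)

/-! ### Centerpoints and weak Tverberg partitions -/

/-- Centerpoint theorem: some point stays in the hull of `P` after deleting any `q` points of `P`.
It is Helly's theorem for the sets `conv (P \ R)`, `|R| ≤ q`: any `d + 1` of them share a point
of `P`. -/
theorem exists_centerpoint {d : ℕ} (P : Finset (Pt d)) (q : ℕ) (hq : (d + 1) * q < P.card) :
    ∃ c : Pt d, ∀ R ⊆ P, R.card ≤ q → c ∈ convexHull ℝ ((P \ R : Finset (Pt d)) : Set (Pt d)) := by
  classical
  obtain ⟨c, hc⟩ := Convex.helly_theorem' (𝕜 := ℝ)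
    (F := fun R : Finset (Pt d) => convexHull ℝ ((P \ R : Finset (Pt d)) : Set (Pt d)))
    (s := P.powerset.filter fun R => R.card ≤ q)
    (fun R _ => convex_convexHull ℝ _) (by
      intro I hI hIc
      rw [Module.finrank_fin_fun] at hIc
      have hcard : (I.biUnion id).card < P.card := by
        calc (I.biUnion id).card ≤ I.card * q :=
              card_biUnion_le_card_mul _ _ _ fun R hR => (mem_filter.1 (hI hR)).2
          _ ≤ (d + 1) * q := Nat.mul_le_mul_right _ hIc
          _ < P.card := hq
      obtain ⟨x, hxP, hx⟩ := exists_mem_notMem_of_card_lt_card hcard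
      refine ⟨x, Set.mem_iInter₂.2 fun R hR => subset_convexHull ℝ _ ?_⟩
      rw [mem_coe, mem_sdiff]
      exact ⟨hxP, fun h => hx (mem_biUnion.2 ⟨R, hR, h⟩)⟩)
  refine ⟨c, fun R hR hRq => ?_⟩
  exact Set.mem_iInter₂.1 hc R (mem_filter.2 ⟨mem_powerset.2 hR, hRq⟩)

/-- Tverberg's theorem with a non-optimal bound: from a centerpoint `c`, repeatedly remove from `P`
at most `d + 1` points whose hull contains `c`. -/
theorem weak_tverberg {d : ℕ} (r : ℕ) (P : Finset (Pt d))
    (hP : (d + 1) * ((d + 1) * r) < P.card) :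
    ∃ (c : Pt d) (A : ℕ → Finset (Pt d)), (∀ i < r, A i ⊆ P) ∧
      (∀ i < r, ∀ j < r, i ≠ j → Disjoint (A i) (A j)) ∧
      ∀ i < r, c ∈ convexHull ℝ (A i : Set (Pt d)) := by
  classical
  obtain ⟨c, hc⟩ := exists_centerpoint P _ hP
  suffices h : ∀ s ≤ r, ∃ A : ℕ → Finset (Pt d), (∀ i < s, A i ⊆ P) ∧
      (∀ i < s, (A i).card ≤ d + 1) ∧ (∀ i < s, ∀ j < s, i ≠ j → Disjoint (A i) (A j)) ∧
      ∀ i < s, c ∈ convexHull ℝ (A i : Set (Pt d)) by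
    obtain ⟨A, h1, -, h2, h3⟩ := h r le_rfl
    exact ⟨c, A, h1, h2, h3⟩
  intro s
  induction s with
  | zero => exact fun _ => ⟨fun _ => ∅, by simp, by simp, by simp, by simp⟩
  | succ s ih =>
    intro hs
    obtain ⟨A, hAP, hAc, hAd, hA⟩ := ih (by omega)
    have hR : (range s).biUnion A ⊆ P :=
      biUnion_subset.2 fun i hi => hAP i (mem_range.1 hi)
    have hRc : ((range s).biUnion A).card ≤ (d + 1) * r := by
      calc ((range s).biUnion A).card ≤ (range s).card * (d + 1) :=
            card_biUnion_le_card_mul _ _ _ fun i hi => hAc i (mem_range.1 hi)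
        _ ≤ (d + 1) * r := by
            rw [card_range, mul_comm]; exact Nat.mul_le_mul_left _ (by omega)
    have hcR := hc _ hR hRc
    -- Carathéodory
    rw [convexHull_eq_union] at hcR
    simp only [Set.mem_iUnion, exists_prop] at hcR
    obtain ⟨t, htP, hti, hct⟩ := hcR
    have htc : t.card ≤ d + 1 := by
      have := hti.card_le_finrank_succ
      rw [Fintype.card_coe] at this
      refine this.trans (Nat.succ_le_succ ?_)
      refine (Submodule.finrank_le _).trans ?_
      rw [Module.finrank_fin_fun]
    have htP' : t ⊆ P \ (range s).biUnion A := by exact_mod_cast htP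
    have hdis : ∀ i < s, Disjoint (A i) t := fun i hi => by
      rw [disjoint_left]
      intro x hx hxt
      exact (mem_sdiff.1 (htP' hxt)).2 (mem_biUnion.2 ⟨i, mem_range.2 hi, hx⟩)
    refine ⟨fun i => if i < s then A i else t, ?_, ?_, ?_, ?_⟩
    · intro i _
      dsimp only
      split_ifs with h
      · exact hAP i h
      · exact htP'.trans sdiff_subset
    · intro i _
      dsimp only
      split_ifs with h
      · exact hAc i h
      · exact htc
    · intro i hi j hj hij
      dsimp only
      split_ifs with h h' h'
      · exact hAd i h j h' hij
      · exact hdis i h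
      · exact (hdis j h').symm
      · omega
    · intro i _
      dsimp only
      split_ifs with h
      · exact hA i h
      · exact hct

/-! ### Brackets and cross-ratios -/

section
variable {ι W : Type*} [DecidableEq ι] [AddCommGroup W] [Module ℝ W]

/-- The bracket `[u, w]`: the value of the alternating form `δ` on the tuple `b` with `u` put in
slot `a` and `w` in slot `a'`. The entries `b a` and `b a'` are irrelevant. -/
def pencil (δ : W [⋀^ι]→ₗ[ℝ] ℝ) (b : ι → W) (a a' : ι) (u w : W) : ℝ :=
  δ (Function.update (Function.update b a u) a' w)

theorem pencil_congr (δ : W [⋀^ι]→ₗ[ℝ] ℝ) {b b' : ι → W} {a a' : ι}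
    (h : ∀ j, j ≠ a → j ≠ a' → b j = b' j) (u w : W) :
    pencil δ b a a' u w = pencil δ b' a a' u w := by
  unfold pencil
  congr 1
  ext j
  by_cases h1 : j = a'
  · subst h1; simp
  · by_cases h2 : j = a
    · subst h2; simp [h1]
    · simp [h1, h2, h j h2 h1]

variable [Fintype ι] [FiniteDimensional ℝ W] (δ : W [⋀^ι]→ₗ[ℝ] ℝ) (b : ι → W) {a a' : ι}

/-- Three-term Plücker relation `[p,r][q,s] = [p,q][r,s] + [p,s][q,r]`, for `[p,q] ≠ 0`. -/
theorem plucker (h : a ≠ a') (hW : Module.finrank ℝ W = Fintype.card ι) (p q r s : W)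
    (hpq : pencil δ b a a' p q ≠ 0) :
    pencil δ b a a' p r * pencil δ b a a' q s =
      pencil δ b a a' p q * pencil δ b a a' r s + pencil δ b a a' p s * pencil δ b a a' q r := by
  set e := Function.update (Function.update b a p) a' q with he
  have hli : LinearIndependent ℝ e := by
    by_contra hc
    exact hpq (δ.map_linearDependent e hc)
  have : Nonempty ι := ⟨a⟩
  have hspan := hli.span_eq_top_of_card_eq_finrank' hW.symm
  obtain ⟨κ, hκ⟩ := (Submodule.mem_span_range_iff_exists_fun ℝ).1
    (show r ∈ Submodule.span ℝ (Set.range e) by rw [hspan]; trivial)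
  have hea' : e a' = q := by simp [he]
  have hea : e a = p := by simp [he, h]
  have hej : ∀ j, j ≠ a → j ≠ a' → e j = b j := fun j h1 h2 => by simp [he, h1, h2]
  have z1 : ∀ u w : W, u = w → pencil δ b a a' u w = 0 := by
    rintro u w rfl
    exact δ.map_eq_zero_of_eq _ (i := a) (j := a') (by simp [h]) h
  have z2 : ∀ (u : W) (j : ι), j ≠ a → j ≠ a' → pencil δ b a a' u (b j) = 0 := fun u j h1 h2 =>
    δ.map_eq_zero_of_eq _ (i := j) (j := a') (by simp [h1, h2]) h2
  have anti : ∀ u w : W, pencil δ b a a' u w = - pencil δ b a a' w u := by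
    intro u w
    have key := z1 (u + w) (u + w) rfl
    have add2 : ∀ x y z : W, pencil δ b a a' x (y + z) =
        pencil δ b a a' x y + pencil δ b a a' x z := fun x y z => by
      simp [pencil]
    have add1 : ∀ x y z : W, pencil δ b a a' (x + y) z =
        pencil δ b a a' x z + pencil δ b a a' y z := fun x y z => by
      simp only [pencil, Function.update_comm h]
      simp
    rw [add1, add2, add2, z1 u u rfl, z1 w w rfl] at key
    linarith
  -- Modulo the span of the other `b j`, the vector `r` is `κ a • p + κ a' • q`.
  have expand : ∀ u : W, pencil δ b a a' u r =
      κ a * pencil δ b a a' u p + κ a' * pencil δ b a a' u q := by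
    intro u
    rw [← hκ]
    unfold pencil
    rw [δ.map_update_sum]
    simp only [δ.map_update_smul, smul_eq_mul]
    rw [← sum_subset (subset_univ {a, a'})]
    · rw [sum_pair h, hea, hea']
    · intro j _ hj
      simp only [mem_insert, mem_singleton, not_or] at hj
      rw [hej j hj.1 hj.2]
      exact mul_eq_zero_of_right _ (z2 u j hj.1 hj.2)
  rw [anti r s, expand p, expand s, expand q, z1 p p rfl, z1 q q rfl, anti q p, anti s p, anti s q]
  ring

/-- Among five points with positive brackets, the first four or the last four have cross-ratio at
least `2`. -/
theorem exists_crossRatio (h : a ≠ a') (hW : Module.finrank ℝ W = Fintype.card ι) (w : Fin 5 → W)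
    (hpos : ∀ i j, i < j → 0 < pencil δ b a a' (w i) (w j)) :
    2 * (pencil δ b a a' (w 0) (w 1) * pencil δ b a a' (w 2) (w 3)) ≤
        pencil δ b a a' (w 0) (w 2) * pencil δ b a a' (w 1) (w 3) ∨
      2 * (pencil δ b a a' (w 1) (w 2) * pencil δ b a a' (w 3) (w 4)) ≤
        pencil δ b a a' (w 1) (w 3) * pencil δ b a a' (w 2) (w 4) := by
  by_contra! hc
  obtain ⟨h1, h2⟩ := hc
  have P1 := plucker δ b h hW (w 0) (w 1) (w 2) (w 3) (hpos 0 1 (by decide)).ne'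
  have P2 := plucker δ b h hW (w 1) (w 2) (w 3) (w 4) (hpos 1 2 (by decide)).ne'
  have P3 := plucker δ b h hW (w 0) (w 1) (w 3) (w 4) (hpos 0 1 (by decide)).ne'
  have p01 := hpos 0 1 (by decide)
  have p03 := hpos 0 3 (by decide)
  have p12 := hpos 1 2 (by decide)
  have p14 := hpos 1 4 (by decide)
  have p23 := hpos 2 3 (by decide)
  have p34 := hpos 3 4 (by decide)
  have p04 := hpos 0 4 (by decide)
  have p13 := hpos 1 3 (by decide)
  -- By Plücker, cross-ratios below `2` mean `e1` and `e2`; their product contradicts `P3`.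
  set B := pencil δ b a a'
  have e1 : B (w 0) (w 3) * B (w 1) (w 2) < B (w 0) (w 1) * B (w 2) (w 3) := by linarith
  have e2 : B (w 1) (w 4) * B (w 2) (w 3) < B (w 1) (w 2) * B (w 3) (w 4) := by linarith
  have e3 := mul_lt_mul'' e1 e2 (by positivity) (by positivity)
  have e4 : B (w 0) (w 3) * B (w 1) (w 4) < B (w 0) (w 1) * B (w 3) (w 4) := by
    have : 0 < B (w 1) (w 2) * B (w 2) (w 3) := by positivity
    nlinarith
  nlinarith [mul_pos p04 p13]
end

/-- The cross-ratio of `z a, z (a + 1), z (a + 2), z (a + 3)` is at least `2`, for the bracket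
given by `δ` with slots `a`, `a + 1` free and the remaining `D - 2` points of `z`, in order, in the
other slots. Denominators are cleared. -/
def CrossRatioGeTwo {D : ℕ} (δ : (Fin D → ℝ) [⋀^Fin D]→ₗ[ℝ] ℝ) (a : ℕ) (ha : a + 1 < D)
    (z : Fin (D + 2) → Fin D → ℝ) : Prop :=
  let B := pencil δ (fun j : Fin D => if j.1 < a then z ⟨j, by omega⟩ else z ⟨j + 2, by omega⟩)
    ⟨a, by omega⟩ ⟨a + 1, ha⟩
  2 * (B (z ⟨a, by omega⟩) (z ⟨a + 1, by omega⟩) *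
      B (z ⟨a + 2, by omega⟩) (z ⟨a + 3, by omega⟩)) ≤
    B (z ⟨a, by omega⟩) (z ⟨a + 2, by omega⟩) * B (z ⟨a + 1, by omega⟩) (z ⟨a + 3, by omega⟩)

theorem update_update_fun {ι W : Type*} [DecidableEq ι] (b : ι → W) (a a' : ι) (u w : W) :
    Function.update (Function.update b a u) a' w =
      fun j => if j = a' then w else if j = a then u else b j := by
  ext j; simp [Function.update_apply]

/-- Every long sequence in linearly general position has a long subsequence and a choice of
orientation `δ = ± det` for which all minors are positive and all cross-ratios are at least `2`. -/
theorem exists_homogeneous (D n : ℕ) (hn : D + 3 ≤ n) : ∃ N : ℕ, ∀ w : ℕ → Fin D → ℝ,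
    (∀ e : Fin D → ℕ, StrictMono e → (∀ i, e i < N) → LinearIndependent ℝ (w ∘ e)) →
    ∃ g : ℕ → ℕ, (∀ i < n, g i < N) ∧ (∀ i j, i < j → j < n → g i < g j) ∧
      ∃ δ : (Fin D → ℝ) [⋀^Fin D]→ₗ[ℝ] ℝ,
        (∀ e : Fin D → ℕ, StrictMono e → (∀ i, e i < n) → 0 < δ (w ∘ g ∘ e)) ∧
        ∀ a (ha : a + 1 < D) (e : Fin (D + 2) → ℕ), StrictMono e → (∀ i, e i < n) →
          CrossRatioGeTwo δ a ha (w ∘ g ∘ e) := by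
  obtain ⟨N₁, h₁⟩ := ramsey_many (D + 2) D n
  obtain ⟨N, h₂⟩ := ramsey_seq D N₁
  refine ⟨N, fun w hw => ?_⟩
  let δ₀ : (Fin D → ℝ) [⋀^Fin D]→ₗ[ℝ] ℝ := Matrix.detRowAlternating
  obtain ⟨g₁, hgN₁, hg₁, hsign⟩ := h₂ (fun e => 0 < δ₀ (w ∘ e))
  have hne : ∀ e : Fin D → ℕ, StrictMono e → (∀ i, e i < N₁) → δ₀ (w ∘ g₁ ∘ e) ≠ 0 := by
    intro e he hen
    have hli := hw (g₁ ∘ e) (fun i j hij => hg₁ _ _ (he hij) (hen j)) fun i => hgN₁ _ (hen i)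
    have hu := Matrix.linearIndependent_rows_iff_isUnit (A := Matrix.of (w ∘ g₁ ∘ e)).1 hli
    exact ((Matrix.isUnit_iff_isUnit_det _).1 hu).ne_zero
  obtain ⟨δ, hδ⟩ : ∃ δ : (Fin D → ℝ) [⋀^Fin D]→ₗ[ℝ] ℝ,
      ∀ e : Fin D → ℕ, StrictMono e → (∀ i, e i < N₁) → 0 < δ (w ∘ g₁ ∘ e) := by
    rcases hsign with h | h
    · exact ⟨δ₀, h⟩
    · refine ⟨-δ₀, fun e he hen => ?_⟩
      rw [AlternatingMap.neg_apply, neg_pos]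
      exact lt_of_le_of_ne (not_lt.1 (h e he hen)) (hne e he hen)
  obtain ⟨g₂, hgN₂, hg₂, hcr⟩ :=
    h₁ (fun a e => ∀ ha : a + 1 < D, CrossRatioGeTwo δ a ha (w ∘ g₁ ∘ e))
  have hpos : ∀ e : Fin D → ℕ, StrictMono e → (∀ i, e i < n) → 0 < δ (w ∘ (g₁ ∘ g₂) ∘ e) :=
    fun e he hen => hδ (g₂ ∘ e) (fun i j hij => hg₂ _ _ (he hij) (hen j)) fun i => hgN₂ _ (hen i)
  refine ⟨g₁ ∘ g₂, fun i hi => hgN₁ _ (hgN₂ i hi),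
    fun i j hij hj => hg₁ _ _ (hg₂ i j hij hj) (hgN₂ j hj), δ, hpos, fun a ha => ?_⟩
  rcases hcr a (by omega) with h | h
  · exact fun e he hen => h e he hen ha
  -- Otherwise all cross-ratios with slots `a`, `a + 1` are below `2`, which fails for the five
  -- points `x a, …, x (a + 4)` and a fixed frame around them.
  exfalso
  set x : ℕ → Fin D → ℝ := w ∘ g₁ ∘ g₂ with hx
  have key := exists_crossRatio δ
    (fun j : Fin D => if j.1 < a then x j else x (j + 3)) (a := ⟨a, by omega⟩) (a' := ⟨a + 1, ha⟩)
    (by simp) (by simp) (fun i => x (a + i)) (by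
      intro i j hij
      have hij' : i.1 < j.1 := hij
      have hj := j.2
      convert hpos (fun t => if t.1 < a then t else if t.1 = a then a + i else
        if t.1 = a + 1 then a + j else t + 3) ?_ ?_ using 1
      · unfold pencil
        rw [update_update_fun]
        congr 1
        ext t : 1
        simp only [Fin.ext_iff, Function.comp, hx]
        split_ifs <;> first | rfl | omega
      · intro s t hst
        have : s.1 < t.1 := hst
        dsimp only
        split_ifs <;> omega
      · intro t
        have := t.2
        split_ifs <;> omega)
  rcases key with key | key
  · refine h (fun t => if t.1 ≤ a + 3 then t else t + 1) ?_ ?_ fun ha' => ?_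
    · intro s t hst
      have : s.1 < t.1 := hst
      dsimp only
      split_ifs <;> omega
    · intro t
      have := t.2
      split_ifs <;> omega
    · unfold CrossRatioGeTwo
      have fr : ∀ u v, pencil δ (fun j : Fin D => if j.1 < a then x j else x (j + 3))
          ⟨a, by omega⟩ ⟨a + 1, ha⟩ u v = pencil δ (fun j : Fin D => if j.1 < a then
            (w ∘ g₁ ∘ g₂ ∘ fun t : Fin (D + 2) => if t.1 ≤ a + 3 then t.1 else t + 1) ⟨j, by omega⟩
            else (w ∘ g₁ ∘ g₂ ∘ fun t : Fin (D + 2) => if t.1 ≤ a + 3 then t.1 else t + 1)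
              ⟨j + 2, by omega⟩) ⟨a, by omega⟩ ⟨a + 1, ha⟩ u v := by
        refine pencil_congr δ fun j h1 h2 => ?_
        simp only [ne_eq, Fin.ext_iff] at h1 h2
        simp only [Function.comp, hx]
        split_ifs <;> first | rfl | omega
      simp only [fr] at key
      simpa [hx] using key
  · refine h (fun t => if t.1 < a then t else t + 1) ?_ ?_ fun ha' => ?_
    · intro s t hst
      have : s.1 < t.1 := hst
      dsimp only
      split_ifs <;> omega
    · intro t
      have := t.2
      split_ifs <;> omega
    · unfold CrossRatioGeTwo
      have fr : ∀ u v, pencil δ (fun j : Fin D => if j.1 < a then x j else x (j + 3))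
          ⟨a, by omega⟩ ⟨a + 1, ha⟩ u v = pencil δ (fun j : Fin D => if j.1 < a then
            (w ∘ g₁ ∘ g₂ ∘ fun t : Fin (D + 2) => if t.1 < a then t.1 else t + 1) ⟨j, by omega⟩
            else (w ∘ g₁ ∘ g₂ ∘ fun t : Fin (D + 2) => if t.1 < a then t.1 else t + 1)
              ⟨j + 2, by omega⟩) ⟨a, by omega⟩ ⟨a + 1, ha⟩ u v := by
        refine pencil_congr δ fun j h1 h2 => ?_
        simp only [ne_eq, Fin.ext_iff] at h1 h2
        simp only [Function.comp, hx]
        split_ifs <;> first | rfl | omega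
      simp only [fr] at key
      simpa [hx] using key

/-! ### Linear forms dominant on consecutive blocks -/

/-- If the ratio `G / F` at least doubles at each step, it gains a factor `2 ^ t` in `t` steps. -/
theorem pow_growth {Y : ℕ} {F G : ℕ → ℝ} (hF : ∀ i < Y, 0 < F i) (hG : ∀ i < Y, 0 < G i)
    (h : ∀ i i', i < i' → i' < Y → 2 * (G i * F i') ≤ G i' * F i) (i t : ℕ) (ht : i + t < Y) :
    2 ^ t * (G i * F (i + t)) ≤ G (i + t) * F i := by
  induction t with
  | zero => simp
  | succ t ih =>
    have h1 := ih (by omega)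
    have h2 := h (i + t) (i + (t + 1)) (by omega) ht
    have p1 := hF (i + t) (by omega)
    have p3 := hF (i + (t + 1)) ht
    have p4 := hG (i + (t + 1)) ht
    have p5 := hF i (by omega)
    refine le_of_mul_le_mul_right ?_ p1
    calc 2 ^ (t + 1) * (G i * F (i + (t + 1))) * F (i + t)
        = 2 * F (i + (t + 1)) * (2 ^ t * (G i * F (i + t))) := by ring
      _ ≤ 2 * F (i + (t + 1)) * (G (i + t) * F i) := by gcongr
      _ = 2 * (G (i + t) * F (i + (t + 1))) * F i := by ring
      _ ≤ G (i + (t + 1)) * F (i + t) * F i := by gcongr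
      _ = _ := by ring

/-- If the ratios `F (l + 1) / F l` at least double at each step, then the `F l` can be scaled so
that on the `k`-th of `m` index blocks every `τ j * F j`, `j ≠ k`, is less than `1 / m` times
the sum of all `τ l * F l`. Blocks have length `K` and are followed by gaps of length `2 * m`. -/
theorem exists_scaling (m K : ℕ) (F : ℕ → ℕ → ℝ)
    (hpos : ∀ l < m, ∀ i < m * (K + 2 * m), 0 < F l i)
    (hgrow : ∀ l, l + 1 < m → ∀ i i', i < i' → i' < m * (K + 2 * m) →
      2 * (F (l + 1) i * F l i') ≤ F (l + 1) i' * F l i) :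
    ∃ τ : ℕ → ℝ, ∀ k < m, ∀ t < K, ∀ j < m, j ≠ k →
      m * (τ j * F j (k * (K + 2 * m) + t)) <
        ∑ l ∈ range m, τ l * F l (k * (K + 2 * m) + t) := by
  set B := K + 2 * m with hB
  have idx : ∀ k < m, ∀ t < B, k * B + t < m * B := fun k hk t ht => by
    have : (k + 1) * B ≤ m * B := Nat.mul_le_mul_right _ hk
    rw [Nat.succ_mul] at this
    omega
  -- The scaled forms `j` and `j + 1` are made equal at `c j`, the middle of the gap after block `j`;
  -- at distance at least `m` from `c j` they differ by a factor of at least `2 ^ m > m`.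
  let c : ℕ → ℕ := fun j => j * B + (K + m)
  let τ : ℕ → ℝ := fun j => ∏ l ∈ range j, F l (c l) / F (l + 1) (c l)
  have hc : ∀ j < m, c j < m * B := fun j hj => idx j hj _ (by omega)
  have hτ : ∀ j < m, 0 < τ j := fun j hj => prod_pos fun l hl => by
    rw [mem_range] at hl
    exact div_pos (hpos _ (by omega) _ (hc _ (by omega))) (hpos _ (by omega) _ (hc _ (by omega)))
  have hbal : ∀ j, j + 1 < m → τ (j + 1) * F (j + 1) (c j) = τ j * F j (c j) := fun j hj => by
    have h1 := hpos (j + 1) hj (c j) (hc j (by omega))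
    simp only [τ, prod_range_succ]
    field_simp
  have hm2 : (m : ℝ) < 2 ^ m := by exact_mod_cast Nat.lt_two_pow_self
  have left : ∀ j, j + 1 < m → ∀ i, i + m ≤ c j →
      2 ^ m * (τ (j + 1) * F (j + 1) i) ≤ τ j * F j i := by
    intro j hj i hi
    have hcj := hc j (by omega)
    have g := pow_growth (hpos j (by omega)) (hpos (j + 1) hj) (hgrow j hj) i (c j - i)
      (by omega)
    rw [Nat.add_sub_cancel' (by omega)] at g
    have q1 := hpos j (by omega) (c j) hcj
    have q2 := hpos (j + 1) hj i (by omega)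
    have q3 := hτ j (by omega)
    have q4 := hτ (j + 1) hj
    refine le_of_mul_le_mul_right ?_ (mul_pos q3 q1)
    calc 2 ^ m * (τ (j + 1) * F (j + 1) i) * (τ j * F j (c j))
        ≤ 2 ^ (c j - i) * (τ (j + 1) * F (j + 1) i) * (τ j * F j (c j)) := by
          gcongr
          · norm_num
          · omega
      _ = τ (j + 1) * τ j * (2 ^ (c j - i) * (F (j + 1) i * F j (c j))) := by ring
      _ ≤ τ (j + 1) * τ j * (F (j + 1) (c j) * F j i) := by gcongr
      _ = τ j * F j i * (τ (j + 1) * F (j + 1) (c j)) := by ring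
      _ = _ := by rw [hbal j hj]
  have right : ∀ j, j + 1 < m → ∀ i, c j + m ≤ i → i < m * B →
      2 ^ m * (τ j * F j i) ≤ τ (j + 1) * F (j + 1) i := by
    intro j hj i hi hiY
    have hcj := hc j (by omega)
    have g := pow_growth (hpos j (by omega)) (hpos (j + 1) hj) (hgrow j hj) (c j) (i - c j)
      (by omega)
    rw [Nat.add_sub_cancel' (by omega)] at g
    have q1 := hpos j (by omega) (c j) hcj
    have q2 := hpos j (by omega) i hiY
    have q3 := hτ j (by omega)
    have q4 := hτ (j + 1) hj
    refine le_of_mul_le_mul_right ?_ (mul_pos q3 q1)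
    calc 2 ^ m * (τ j * F j i) * (τ j * F j (c j))
        ≤ 2 ^ (i - c j) * (τ j * F j i) * (τ j * F j (c j)) := by
          gcongr
          · norm_num
          · omega
      _ = 2 ^ (i - c j) * (τ j * F j i) * (τ (j + 1) * F (j + 1) (c j)) := by rw [hbal j hj]
      _ = τ (j + 1) * τ j * (2 ^ (i - c j) * (F (j + 1) (c j) * F j i)) := by ring
      _ ≤ τ (j + 1) * τ j * (F (j + 1) i * F j (c j)) := by gcongr
      _ = _ := by ring
  refine ⟨τ, fun k hk t ht j hj hjk => ?_⟩
  set i := k * B + t with hi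
  have hiY : i < m * B := idx k hk t (by omega)
  have fpos : ∀ l < m, 0 < τ l * F l i := fun l hl => mul_pos (hτ l hl) (hpos l hl i hiY)
  have bound : ∀ l < m, 2 ^ m * (τ j * F j i) ≤ τ l * F l i →
      m * (τ j * F j i) < ∑ l ∈ range m, τ l * F l i := fun l hl h =>
    calc m * (τ j * F j i) < 2 ^ m * (τ j * F j i) := mul_lt_mul_of_pos_right hm2 (fpos j hj)
      _ ≤ τ l * F l i := h
      _ ≤ _ := single_le_sum (f := fun l => τ l * F l i)
        (fun l hl => (fpos l (mem_range.1 hl)).le) (mem_range.2 hl)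
  rcases lt_or_gt_of_ne hjk with h | h
  · refine bound (j + 1) (by omega) (right j (by omega) i ?_ hiY)
    have : (j + 1) * B ≤ k * B := Nat.mul_le_mul_right _ h
    rw [Nat.succ_mul] at this
    simp only [c]
    omega
  · obtain ⟨j, rfl⟩ := Nat.exists_eq_succ_of_ne_zero (show j ≠ 0 by omega)
    refine bound j (by omega) (left j (by omega) i ?_)
    have : k * B ≤ j * B := Nat.mul_le_mul_right _ (by omega)
    simp only [c]
    omega

/-- The linear form `u ↦ δ (x 0, …, x (l - 1), u, x (Y + l + 1), …, x (Y + D - 1))`. -/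
def gapForm {D : ℕ} (δ : (Fin D → ℝ) [⋀^Fin D]→ₗ[ℝ] ℝ) (Y : ℕ) (x : ℕ → Fin D → ℝ) (l : Fin D) :
    (Fin D → ℝ) →ₗ[ℝ] ℝ :=
  δ.toMultilinearMap.toLinearMap (fun j => if j < l then x j else x (Y + j)) l

theorem gapForm_eq {D : ℕ} (δ : (Fin D → ℝ) [⋀^Fin D]→ₗ[ℝ] ℝ) (Y : ℕ) (x : ℕ → Fin D → ℝ)
    (l : Fin D) (i : ℕ) :
    gapForm δ Y x l (x i) =
      δ (x ∘ fun j : Fin D => if j < l then j.1 else if j = l then i else Y + j) := by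
  change δ (Function.update _ l (x i)) = _
  congr 1
  ext j : 1
  by_cases h : j = l
  · subst h; simp
  · simp only [Function.update_apply, h, if_false, Function.comp]
    split_ifs <;> rfl

theorem gapForm_pos {D Y : ℕ} (δ : (Fin D → ℝ) [⋀^Fin D]→ₗ[ℝ] ℝ) (x : ℕ → Fin D → ℝ)
    (hpos : ∀ e : Fin D → ℕ, StrictMono e → (∀ i, e i < Y + D) → 0 < δ (x ∘ e))
    (l : Fin D) {i : ℕ} (hi : D ≤ i) (hiY : i < Y) : 0 < gapForm δ Y x l (x i) := by
  rw [gapForm_eq]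
  apply hpos
  · intro s t hst
    simp only [Fin.lt_def, Fin.ext_iff] at *
    split_ifs <;> omega
  · intro t
    have := t.2
    split_ifs <;> omega

/-- Between indices `D` and `Y`, the ratio of consecutive forms `gapForm` at least doubles at each
step. The two forms are brackets with slots `l`, `l + 1` in a common frame, paired with
`x (Y + l + 1)` and with `x l`; the inequality is the cross-ratio bound for
`x l, x i, x i', x (Y + l + 1)`. -/
theorem gapForm_growth {D Y : ℕ} (δ : (Fin D → ℝ) [⋀^Fin D]→ₗ[ℝ] ℝ) (x : ℕ → Fin D → ℝ)
    (hcr : ∀ a (ha : a + 1 < D) (e : Fin (D + 2) → ℕ), StrictMono e → (∀ i, e i < Y + D) →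
      CrossRatioGeTwo δ a ha (x ∘ e))
    (l : ℕ) (hl : l + 1 < D) {i i' : ℕ} (hi : D ≤ i) (hii : i < i') (hiY : i' < Y) :
    2 * (gapForm δ Y x ⟨l + 1, hl⟩ (x i) * gapForm δ Y x ⟨l, by omega⟩ (x i')) ≤
      gapForm δ Y x ⟨l + 1, hl⟩ (x i') * gapForm δ Y x ⟨l, by omega⟩ (x i) := by
  let e : Fin (D + 2) → ℕ := fun s => if s.1 ≤ l then s else if s.1 = l + 1 then i else
    if s.1 = l + 2 then i' else Y + (s - 2)
  have h := hcr l hl e ?_ ?_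
  · unfold CrossRatioGeTwo at h
    set b : Fin D → Fin D → ℝ := fun j : Fin D =>
      if j.1 < l then (x ∘ e) ⟨j, by omega⟩ else (x ∘ e) ⟨j + 2, by omega⟩ with hb
    have e0 : (x ∘ e) ⟨l, by omega⟩ = x l := by simp [e]
    have e1 : (x ∘ e) ⟨l + 1, by omega⟩ = x i := by simp [e]
    have e2 : (x ∘ e) ⟨l + 2, by omega⟩ = x i' := by simp [e]
    have e3 : (x ∘ e) ⟨l + 3, by omega⟩ = x (Y + (l + 1)) := by simp [e]
    have f0 : ∀ u, gapForm δ Y x ⟨l, by omega⟩ u =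
        pencil δ b ⟨l, by omega⟩ ⟨l + 1, hl⟩ u (x (Y + (l + 1))) := by
      intro u
      change δ (Function.update _ _ u) = δ _
      rw [update_update_fun]
      congr 1
      ext j : 1
      have := j.2
      simp only [Function.update_apply, hb, Function.comp, e, Fin.ext_iff, Fin.lt_def]
      split_ifs <;> first | rfl | omega | (congr 1; omega)
    have f1 : ∀ u, gapForm δ Y x ⟨l + 1, by omega⟩ u =
        pencil δ b ⟨l, by omega⟩ ⟨l + 1, hl⟩ (x l) u := by
      intro u
      change δ (Function.update _ _ u) = δ _
      rw [update_update_fun]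
      congr 1
      ext j : 1
      have := j.2
      simp only [Function.update_apply, hb, Function.comp, e, Fin.ext_iff, Fin.lt_def]
      split_ifs <;> first | rfl | omega | congr 1
    simp only [e0, e1, e2, e3] at h
    rw [f0, f0, f1, f1]
    exact h
  · intro s t hst
    have : s.1 < t.1 := hst
    simp only [e]
    split_ifs <;> omega
  · intro t
    have := t.2
    simp only [e]
    split_ifs <;> omega

/-! ### Separated blocks -/

/-- In general position, the homogeneous coordinates `(1, x)` of `d + 1` distinct points are linearly
independent. -/
theorem GenPos.linearIndependent {d : ℕ} {P : Finset (Pt d)} (hP : GenPos P)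
    (q : Fin (d + 1) → Pt d) (hq : Function.Injective q) (hqP : ∀ i, q i ∈ P) :
    LinearIndependent ℝ (fun i => (Fin.cons 1 (q i) : Fin (d + 1) → ℝ)) := by
  have hS := hP (univ.image q) (by simpa [image_subset_iff] using hqP)
    (card_image_le.trans (by simp))
  let f : Fin (d + 1) ↪ ((univ.image q : Finset (Pt d)) : Set (Pt d)) :=
    ⟨fun i => ⟨q i, by simp⟩, fun i j h => hq (congrArg Subtype.val h)⟩
  have haff : AffineIndependent ℝ q := hS.comp_embedding f
  rw [affineIndependent_iff] at haff
  rw [Fintype.linearIndependent_iff]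
  intro g hg i
  refine haff univ g ?_ ?_ i (mem_univ i)
  · simpa using congrFun hg 0
  · ext c
    simpa using congrFun hg c.succ

/-- A large set in general position has `m ≤ d + 1` disjoint blocks `A k` of size `K`, together with
forms `ℓ j` of sum zero on homogeneous coordinates such that `ℓ j` is positive on all blocks
except possibly `A j`. -/
theorem exists_blocks (d m K : ℕ) (hm : m ≤ d + 1) : ∃ N : ℕ, ∀ P : Finset (Pt d),
    GenPos P → N ≤ P.card → ∃ (A : ℕ → Finset (Pt d)) (ℓ : ℕ → (Fin (d + 1) → ℝ) →ₗ[ℝ] ℝ),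
      (∀ k < m, A k ⊆ P) ∧ (∀ k < m, (A k).card = K) ∧
      (∀ k < m, ∀ k' < m, k ≠ k' → Disjoint (A k) (A k')) ∧
      ∑ j ∈ range m, ℓ j = 0 ∧
      ∀ j < m, ∀ k < m, k ≠ j → ∀ x ∈ A k, 0 < ℓ j (Fin.cons 1 x) := by
  set D := d + 1 with hD
  set B := K + 2 * m with hB
  -- The first `D` and the last `D` points serve as frames; the summand `3` only ensures
  -- `D + 3 ≤ Y + D`.
  set Y := D + m * B + 3 with hY
  obtain ⟨N, hN⟩ := exists_homogeneous D (Y + D) (by omega)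
  refine ⟨N, fun P hP hNP => ?_⟩
  let p : ℕ → Pt d := fun i => if h : i < P.card then P.equivFin.symm ⟨i, h⟩ else 0
  have hpP : ∀ i < N, p i ∈ P := fun i hi => by
    simp only [p, dif_pos (hi.trans_le hNP)]
    exact coe_mem _
  have hpinj : ∀ i < N, ∀ j < N, p i = p j → i = j := fun i hi j hj h => by
    simp only [p, dif_pos (hi.trans_le hNP), dif_pos (hj.trans_le hNP)] at h
    simpa using P.equivFin.symm.injective (Subtype.ext h)
  obtain ⟨g, hgN, hg, δ, hpos, hcr⟩ := hN (fun i => Fin.cons 1 (p i)) fun e he heN =>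
    hP.linearIndependent (p ∘ e) (fun i j h => he.injective (hpinj _ (heN i) _ (heN j) h))
      fun i => hpP _ (heN i)
  have hginj : ∀ i < Y + D, ∀ j < Y + D, g i = g j → i = j := fun i hi j hj h => by
    rcases lt_trichotomy i j with h1 | h1 | h1
    · exact absurd h (hg i j h1 hj).ne
    · exact h1
    · exact absurd h (hg j i h1 hi).ne'
  set x : ℕ → Fin D → ℝ := (fun i => (Fin.cons 1 (p i) : Fin D → ℝ)) ∘ g with hx
  let Φ : ℕ → (Fin D → ℝ) →ₗ[ℝ] ℝ := fun l => if h : l < D then gapForm δ Y x ⟨l, h⟩ else 0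
  obtain ⟨τ, hτ⟩ := exists_scaling m K (fun l i => Φ l (x (D + i)))
    (fun l hl i hi => by
      rw [← hB] at hi
      simp only [Φ, dif_pos (show l < D by omega)]
      exact gapForm_pos δ x hpos _ (by omega) (by omega))
    (fun l hl i i' hii hi' => by
      rw [← hB] at hi'
      simp only [Φ, dif_pos (show l < D by omega), dif_pos (show l + 1 < D by omega)]
      exact gapForm_growth δ x hcr l _ (by omega) (by omega) (by omega))
  have idx : ∀ k < m, ∀ t < K, k * B + t < m * B := fun k hk t ht => by
    have : (k + 1) * B ≤ m * B := Nat.mul_le_mul_right _ hk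
    rw [Nat.succ_mul] at this
    omega
  let q : ℕ → ℕ → Pt d := fun k t => p (g (D + (k * B + t)))
  have hq : ∀ k < m, ∀ t < K, ∀ k' < m, ∀ t' < K, q k t = q k' t' → k = k' ∧ t = t' := by
    intro k hk t ht k' hk' t' ht' h
    have i1 := idx k hk t ht
    have i2 := idx k' hk' t' ht'
    have h2 := hginj _ (by omega) _ (by omega)
      (hpinj _ (hgN _ (by omega)) _ (hgN _ (by omega)) h)
    have h3 : k * B + t = k' * B + t' := by omega
    have h4 : k = k' := by
      rcases lt_trichotomy k k' with h5 | h5 | h5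
      · have : (k + 1) * B ≤ k' * B := Nat.mul_le_mul_right _ h5
        rw [Nat.succ_mul] at this
        omega
      · exact h5
      · have : (k' + 1) * B ≤ k * B := Nat.mul_le_mul_right _ h5
        rw [Nat.succ_mul] at this
        omega
    subst h4
    exact ⟨rfl, by omega⟩
  refine ⟨fun k => (range K).image (q k),
    fun j => ∑ l ∈ range m, τ l • Φ l - (m : ℝ) • τ j • Φ j, ?_, ?_, ?_, ?_, ?_⟩
  · intro k hk y hy
    obtain ⟨t, ht, rfl⟩ := mem_image.1 hy
    have := idx k hk t (mem_range.1 ht)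
    exact hpP _ (hgN _ (by omega))
  · intro k hk
    rw [card_image_of_injOn, card_range]
    intro t ht t' ht' h
    exact (hq k hk t (by simpa using ht) k hk t' (by simpa using ht') h).2
  · intro k hk k' hk' hne
    rw [disjoint_left]
    intro y hy hy'
    obtain ⟨t, ht, rfl⟩ := mem_image.1 hy
    obtain ⟨t', ht', h⟩ := mem_image.1 hy'
    exact hne (hq k hk t (mem_range.1 ht) k' hk' t' (mem_range.1 ht') h.symm).1
  · rw [sum_sub_distrib, sum_const, card_range, ← smul_sum, Nat.cast_smul_eq_nsmul, sub_self]
  · intro j hj k hk hne y hy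
    obtain ⟨t, ht, rfl⟩ := mem_image.1 hy
    have h := hτ k hk t (mem_range.1 ht) j hj hne.symm
    simp only [LinearMap.sub_apply, LinearMap.sum_apply, LinearMap.smul_apply, smul_eq_mul, sub_pos]
    exact h

/-- The blocks can be chosen so that each point `y` is, for some `j`, outside the hull of all blocks
other than `A j`. -/
theorem exists_separated_blocks (d m K : ℕ) (hm₁ : 1 ≤ m) (hm : m ≤ d + 1) :
    ∃ N : ℕ, ∀ P : Finset (Pt d),
    GenPos P → N ≤ P.card → ∃ A : ℕ → Finset (Pt d),
      (∀ k < m, A k ⊆ P) ∧ (∀ k < m, (A k).card = K) ∧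
      (∀ k < m, ∀ k' < m, k ≠ k' → Disjoint (A k) (A k')) ∧
      ∀ y : Pt d, ∃ j < m, ∀ S : Set (Pt d),
        (∀ x ∈ S, ∃ k < m, k ≠ j ∧ x ∈ A k) → y ∉ convexHull ℝ S := by
  obtain ⟨N, hN⟩ := exists_blocks d m K hm
  refine ⟨N, fun P hP hNP => ?_⟩
  obtain ⟨A, ℓ, h1, h2, h3, hsum, hℓ⟩ := hN P hP hNP
  refine ⟨A, h1, h2, h3, fun y => ?_⟩
  by_contra! hc
  have hy : ∀ j ∈ range m, 0 < ℓ j (Fin.cons 1 y) := by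
    intro j hj
    rw [mem_range] at hj
    obtain ⟨S, hS, hyS⟩ := hc j hj
    have hconv : Convex ℝ {z : Pt d | 0 < ℓ j (Fin.cons 1 z)} := by
      intro u hu v hv a b ha hb hab
      have : (Fin.cons 1 (a • u + b • v) : Fin (d + 1) → ℝ) =
          a • (Fin.cons 1 u : Fin (d + 1) → ℝ) + b • (Fin.cons 1 v : Fin (d + 1) → ℝ) := by
        ext i
        refine Fin.cases ?_ (fun i => ?_) i
        · simp [hab]
        · simp
      have hu' : 0 < ℓ j (Fin.cons 1 u) := hu
      have hv' : 0 < ℓ j (Fin.cons 1 v) := hv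
      change 0 < ℓ j (Fin.cons 1 (a • u + b • v))
      rw [this, map_add, map_smul, map_smul, smul_eq_mul, smul_eq_mul]
      rcases ha.eq_or_lt with rfl | ha
      · have : b = 1 := by linarith
        subst this
        linarith
      · positivity
    refine convexHull_min (fun x hx => ?_) hconv hyS
    obtain ⟨k, hk, hne, hxk⟩ := hS x hx
    exact hℓ j hj k hk hne x hxk
  have := sum_pos hy ⟨0, mem_range.2 hm₁⟩
  rw [← LinearMap.sum_apply, hsum] at this
  exact lt_irrefl _ this

/-! ### Gluing Tverberg partitions of the blocks -/

theorem exists_facet_superset {n : ℕ} (Δ : Set (Finset (Fin n))) {σ : Finset (Fin n)}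
    (hσ : σ ∈ Δ) : ∃ τ, IsFacet Δ τ ∧ σ ⊆ τ := by
  obtain ⟨τ, hστ, hτ⟩ := (Set.toFinite Δ).exists_le_maximal hσ
  exact ⟨τ, ⟨hτ.prop, fun ρ hρ h => hτ.eq_of_le hρ h⟩, hστ⟩

theorem statement12 (n m : ℕ) (hm : 1 ≤ m) (Δ : Set (Finset (Fin n)))
    (hΔ : ∀ σ ∈ Δ, ∀ τ ⊆ σ, τ ∈ Δ)
    (hfac : {σ : Finset (Fin n) | IsFacet Δ σ}.ncard = m) :
    WeaklyTverberg (m + 1) Δ := by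
  classical
  obtain ⟨fc, hfc⟩ : ∃ fc : ℕ → Finset (Fin n), ∀ σ, IsFacet Δ σ ↔ ∃ k < m, fc k = σ := by
    let T := (Set.toFinite {σ : Finset (Fin n) | IsFacet Δ σ}).toFinset
    have hT : T.card = m := by rw [← hfac, Set.ncard_eq_toFinset_card _ (Set.toFinite _)]
    have e := T.equivFinOfCardEq hT
    refine ⟨fun k => if h : k < m then e.symm ⟨k, h⟩ else ∅, fun σ => ⟨fun h => ?_, ?_⟩⟩
    · have hσ : σ ∈ T := by simpa [T] using h
      refine ⟨e ⟨σ, hσ⟩, (e ⟨σ, hσ⟩).2, by simp⟩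
    · rintro ⟨k, hk, rfl⟩
      have := (e.symm ⟨k, hk⟩).2
      simpa [T, hk] using this
  set K := (m + 1 + 1) * ((m + 1 + 1) * n) + 1 with hK
  obtain ⟨N, hN⟩ := exists_separated_blocks (m + 1) m K hm (by omega)
  refine ⟨N, fun P hP hNP => ?_⟩
  obtain ⟨A, hAP, hAK, hAd, hsep⟩ := hN P hP hNP
  choose! c A' hA' hA'd hc using fun k (hk : k < m) =>
    weak_tverberg n (A k) (by rw [hAK k hk]; omega)
  let Q : Fin n → Finset (Pt (m + 1)) := fun i =>
    ((range m).filter fun k => i ∈ fc k).biUnion fun k => A' k i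
  have hQ : ∀ i x, x ∈ Q i ↔ ∃ k < m, i ∈ fc k ∧ x ∈ A' k i := fun i x => by
    simp [Q, and_assoc]
  refine ⟨Q, fun i x hx => ?_, fun i j hij => ?_, fun σ => ⟨?_, fun hσ => ?_⟩⟩
  · obtain ⟨k, hk, -, hx⟩ := (hQ i x).1 hx
    exact hAP k hk (hA' k hk i i.2 hx)
  · rw [disjoint_left]
    intro x hx hx'
    obtain ⟨k, hk, -, hx⟩ := (hQ i x).1 hx
    obtain ⟨k', hk', -, hx'⟩ := (hQ j x).1 hx'
    by_cases h : k = k'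
    · subst h
      exact disjoint_left.1 (hA'd k hk i i.2 j j.2 fun h => hij (Fin.ext h)) hx hx'
    · exact disjoint_left.1 (hAd k hk k' hk' h) (hA' k hk i i.2 hx) (hA' k' hk' j j.2 hx')
  · rintro ⟨y, hy⟩
    obtain ⟨j, hj, hyj⟩ := hsep y
    refine hΔ (fc j) ((hfc _).2 ⟨j, hj, rfl⟩).1 σ fun i hi => ?_
    by_contra hij
    refine hyj (Q i) (fun x hx => ?_) (by simpa using Set.mem_iInter₂.1 hy i hi)
    obtain ⟨k, hk, hik, hx⟩ := (hQ i x).1 hx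
    exact ⟨k, hk, fun h => hij (h ▸ hik), hA' k hk i i.2 hx⟩
  · obtain ⟨τ, hτ, hστ⟩ := exists_facet_superset Δ hσ
    obtain ⟨k, hk, rfl⟩ := (hfc τ).1 hτ
    refine ⟨c k, Set.mem_iInter₂.2 fun i hi => ?_⟩
    refine convexHull_mono (fun x hx => ?_) (hc k hk i i.2)
    exact (hQ i x).2 ⟨k, hk, hστ hi, hx⟩
end
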